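/- Let (u, π, v, θ) be a smooth solution of the stationary 3D tropical climate model. Suppose p ∈ (3/2, 3), q ∈ [1, 2), r ∈ [1, 2), α ∈ [0, 2/p − 1/3], β ∈ [0, 3/q − 1/2], γ ∈ [0, 3/r − 1/2], and the inequalities α + ((4p−6)q/((6−q)p))·β ≤ 1, α + ((4p−6)r/((6−r)p))·γ ≤ 1, and (2q/(6−q))·β + (2r/(6−r))·γ ≤ 1 hold. Assume that liminf_{R→+∞} ( X_{α,p,R} + Y_{β,q,R} + Z_{γ,r,R} ) < +∞. Then u = 0, v = 0 and θ = 0 identically on ℝ³. -/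

import Mathlib

open MeasureTheory Filter Metric

noncomputable section

abbrev R3 : Type := EuclideanSpace ℝ (Fin 3)

/-- Partial derivative of `f` in the `j`-th coordinate direction. -/
def pd (f : R3 → ℝ) (j : Fin 3) (x : R3) : ℝ :=
  fderiv ℝ f x (EuclideanSpace.single j 1)

/-- Laplacian of `f`. -/
def lap (f : R3 → ℝ) (x : R3) : ℝ := ∑ j, pd (pd f j) j x

/-- The stationary 3D tropical climate model:
`-Δu + (u·∇)u + ∇π + div(v⊗v) = 0`, `-Δv + (u·∇)v + ∇θ + (v·∇)u = 0`,
`-Δθ + u·∇θ + div v = 0`, `div u = 0`. -/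
def TCM (u v : R3 → R3) (pr θ : R3 → ℝ) : Prop :=
  (∀ i x, -lap (fun y => u y i) x + (∑ j, u x j * pd (fun y => u y i) j x)
      + pd pr i x + (∑ j, pd (fun y => v y j * v y i) j x) = 0) ∧
  (∀ i x, -lap (fun y => v y i) x + (∑ j, u x j * pd (fun y => v y i) j x)
      + pd θ i x + (∑ j, v x j * pd (fun y => u y i) j x) = 0) ∧
  (∀ x, -lap θ x + (∑ j, u x j * pd θ j x) + (∑ j, pd (fun y => v y j) j x) = 0) ∧
  (∀ x, (∑ j, pd (fun y => u y j) j x) = 0)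

/-- The annulus `B_{2R} \ B_R`. -/
def annulus (R : ℝ) : Set R3 := ball (0 : R3) (2 * R) \ ball 0 R

/-- `L^p` norm of a scalar function on a set `E`. -/
def lpS (g : R3 → ℝ) (p : ℝ) (E : Set R3) : ℝ := (∫ x in E, |g x| ^ p) ^ (1 / p)

/-- `X_{α,p,R} = R^{-α} ‖f‖_{L^p(B_{2R} \ B_R)}` for a vector field `f`. -/
def XnV (f : R3 → R3) (a p R : ℝ) : ℝ := R ^ (-a) * lpS (fun x => ‖f x‖) p (annulus R)

/-- `X_{α,p,R} = R^{-α} ‖f‖_{L^p(B_{2R} \ B_R)}` for a scalar function `f`. -/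
def XnS (f : R3 → ℝ) (a p R : ℝ) : ℝ := R ^ (-a) * lpS f p (annulus R)

/-!
Testing the local energy identity for `e = |u|² + |v|² + θ²` with a cutoff whose transition region
lies in the shell `ρ ≤ |x| < τ` of radii between `R` and `2R` gives a Caccioppoli inequality, in
which the pressure is the delicate term. Replace `π` by its mollification `π_δ` at a scale `δ`
comparable to `τ - ρ`. The equation writes `∇π` as a Laplacian minus the divergence of
`u ⊗ u + v ⊗ v`. Moving these derivatives to the kernel bounds the oscillation of `π_δ` on the
shell; for `π - π_δ`, two bounds on the derivative in the mollification scale, one using the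
dissipation and one not, interpolate to an integrable singularity at scale `0`. The error is thus
local, and no decay or integrability of the pressure at infinity is required.

Let `W(S)` be the dissipation over `S` plus `‖e‖_{L³(S)}`, the latter being controlled by Sobolev's
inequality for `|u|`, `|v|`, `θ` in `L⁶`. Interpolating the growth hypotheses against `L⁶` turns
the right-hand side of the Caccioppoli inequality into powers of `W(shell)` with exponents strictly
between `0` and `1`; the conditions on `α`, `β`, `γ` ensure that the powers of `R` are absorbed.
Hence `W(B_ρ) ≤ C (R / (τ - ρ))⁶ (M ^ ε + M ^ (1 - ε))` with `M = W(shell ρ τ)`. As the power of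
`M` is sublinear, iterating over the radii `R (2 - 2⁻ⁱ)` bounds `W(B_R)` uniformly. Then the shell
energies tend to `0`, and the same inequality with `ρ = R`, `τ = 2R` forces `W = 0`.
-/

open scoped ContDiff Topology

section Smooth

variable {E F : Type*} [NormedAddCommGroup E] [NormedSpace ℝ E] [NormedAddCommGroup F]
  [NormedSpace ℝ F] {f : E → F}

@[fun_prop]
theorem differentiableAt_of_contDiff_infty (hf : ContDiff ℝ ∞ f) {x : E} :
    DifferentiableAt ℝ f x :=
  hf.differentiable (by simp) x

end Smooth

section PartialDerivatives

variable {f g w : R3 → ℝ} {x : R3}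

theorem fderiv_apply_eq_sum_pd (f : R3 → ℝ) (x v : R3) : fderiv ℝ f x v = ∑ j, v j * pd f j x := by
  have hv : v = ∑ j, v j • EuclideanSpace.single j (1 : ℝ) := by
    ext i
    simp [Pi.single_apply]
  conv_lhs => rw [hv]
  simp [pd]

theorem pd_add (hf : DifferentiableAt ℝ f x) (hg : DifferentiableAt ℝ g x) (j : Fin 3) :
    pd (fun y => f y + g y) j x = pd f j x + pd g j x := by
  simp [pd, fderiv_fun_add hf hg]

theorem pd_sub (hf : DifferentiableAt ℝ f x) (hg : DifferentiableAt ℝ g x) (j : Fin 3) :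
    pd (fun y => f y - g y) j x = pd f j x - pd g j x := by
  simp [pd, fderiv_fun_sub hf hg]

theorem pd_mul (hf : DifferentiableAt ℝ f x) (hg : DifferentiableAt ℝ g x) (j : Fin 3) :
    pd (fun y => f y * g y) j x = f x * pd g j x + pd f j x * g x := by
  simp only [pd, fderiv_fun_mul hf hg, add_apply, smul_apply, smul_eq_mul]
  ring

theorem pd_const_mul (hf : DifferentiableAt ℝ f x) (c : ℝ) (j : Fin 3) :
    pd (fun y => c * f y) j x = c * pd f j x := by
  simp [pd, fderiv_const_mul hf]

theorem pd_sum {ι : Type*} (s : Finset ι) {f : ι → R3 → ℝ}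
    (hf : ∀ i, DifferentiableAt ℝ (f i) x) (j : Fin 3) :
    pd (fun y => ∑ i ∈ s, f i y) j x = ∑ i ∈ s, pd (f i) j x := by
  simp [pd, fderiv_fun_sum fun i _ => hf i]

theorem pd_eq_zero_of_eventuallyEq_const {c : ℝ} (hf : f =ᶠ[nhds x] fun _ => c) (j : Fin 3) :
    pd f j x = 0 := by
  simp [pd, hf.fderiv_eq]

theorem pd_comp_sub_smul {s : ℝ} {z : R3} (hf : DifferentiableAt ℝ f (x - s • z)) (j : Fin 3) :
    pd (fun z => f (x - s • z)) j z = -s * pd f j (x - s • z) := by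
  have hinner : HasFDerivAt (fun z : R3 => x - s • z) (-(s • ContinuousLinearMap.id ℝ R3)) z :=
    ((hasFDerivAt_id (𝕜 := ℝ) z).const_smul s).const_sub x
  have hcomp := (hf.hasFDerivAt.comp z hinner).fderiv
  rw [Function.comp_def] at hcomp
  simp [pd, hcomp]

@[fun_prop]
theorem contDiff_pd (hf : ContDiff ℝ ∞ f) (j : Fin 3) : ContDiff ℝ ∞ (pd f j) :=
  (hf.fderiv_right (m := ∞) (by simp)).clm_apply contDiff_const

@[fun_prop]
theorem contDiff_lap (hf : ContDiff ℝ ∞ f) : ContDiff ℝ ∞ (lap f) :=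
  ContDiff.sum fun j _ => contDiff_pd (contDiff_pd hf j) j

@[fun_prop]
theorem continuous_pd (hf : ContDiff ℝ 1 f) (j : Fin 3) : Continuous (pd f j) :=
  (hf.continuous_fderiv one_ne_zero).clm_apply continuous_const

theorem pd_comm (hf : ContDiff ℝ 2 f) (i j : Fin 3) (x : R3) :
    pd (pd f i) j x = pd (pd f j) i x := by
  have hsymm : IsSymmSndFDerivAt ℝ f x := hf.contDiffAt.isSymmSndFDerivAt (by simp)
  have hdiff : Differentiable ℝ (fderiv ℝ f) :=
    (hf.fderiv_right (m := 1) (by norm_num)).differentiable one_ne_zero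
  have hsnd : ∀ i j : Fin 3, pd (pd f i) j x =
      fderiv ℝ (fderiv ℝ f) x (EuclideanSpace.single j 1) (EuclideanSpace.single i 1) := by
    intro i j
    unfold pd
    rw [fderiv_clm_apply (hdiff x) (differentiableAt_const _)]
    simp
  rw [hsnd, hsnd]
  exact hsymm.eq _ _

theorem tsupport_pd_subset (f : R3 → ℝ) (j : Fin 3) : tsupport (pd f j) ⊆ tsupport f :=
  closure_minimal (fun x hx => by
    by_contra hxf
    exact hx (by simp [pd, fderiv_of_notMem_tsupport ℝ hxf])) (isClosed_tsupport f)

theorem hasCompactSupport_pd (hf : HasCompactSupport f) (j : Fin 3) :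
    HasCompactSupport (pd f j) :=
  hf.of_isClosed_subset (isClosed_tsupport _) (tsupport_pd_subset f j)

theorem integral_mul_pd_eq_neg (hf : ContDiff ℝ 1 f) (hg : ContDiff ℝ 1 g)
    (hc : HasCompactSupport f) (j : Fin 3) :
    ∫ x, f x * pd g j x = -∫ x, pd f j x * g x := by
  refine integral_mul_fderiv_eq_neg_fderiv_mul_of_integrable ?_ ?_ ?_
    (fun x _ => hf.differentiable one_ne_zero x) (fun x _ => hg.differentiable one_ne_zero x)
  · exact ((continuous_pd hf j).mul hg.continuous).integrable_of_hasCompactSupport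
      (hasCompactSupport_pd hc j).mul_right
  · exact (hf.continuous.mul (continuous_pd hg j)).integrable_of_hasCompactSupport hc.mul_right
  · exact (hf.continuous.mul hg.continuous).integrable_of_hasCompactSupport hc.mul_right

end PartialDerivatives

section ParametricIntegral

variable {Y : Type*} [TopologicalSpace Y] [MeasurableSpace Y] [OpensMeasurableSpace Y]
  {μ : Measure Y} [IsFiniteMeasureOnCompacts μ] {w : Y → ℝ}

theorem hasFDerivAt_integral_smul_of_hasCompactSupport {V E : Type*} [NormedAddCommGroup V]
    [NormedSpace ℝ V] [ProperSpace V] [NormedAddCommGroup E] [NormedSpace ℝ E]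
    (hw : Continuous w) (hc : HasCompactSupport w) {Q : V → Y → E} {Q' : V → Y → V →L[ℝ] E}
    (hQ : Continuous (Function.uncurry Q)) (hQ' : Continuous (Function.uncurry Q'))
    (hd : ∀ s y, HasFDerivAt (fun t => Q t y) (Q' s y) s) (s : V) :
    HasFDerivAt (fun t => ∫ y, w y • Q t y ∂μ) (∫ y, w y • Q' s y ∂μ) s := by
  have h_int : ∀ g : Y → E, Continuous g → Integrable (fun y => w y • g y) μ := fun g hg =>
    (hw.smul hg).integrable_of_hasCompactSupport hc.smul_right
  have hQt : ∀ t, Continuous (Q t) := fun t => hQ.comp (Continuous.prodMk_right t)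
  obtain ⟨B, hB⟩ := ((isCompact_closedBall s 1).prod hc).exists_bound_of_continuousOn
    hQ'.continuousOn
  refine hasFDerivAt_integral_of_dominated_of_fderiv_le (s := closedBall s 1)
    (F := fun t y => w y • Q t y) (F' := fun t y => w y • Q' t y)
    (bound := fun y => ‖w y‖ * B) (closedBall_mem_nhds s one_pos)
    (Eventually.of_forall fun t => (h_int _ (hQt t)).aestronglyMeasurable) (h_int _ (hQt s))
    (((hw.smul (hQ'.comp (Continuous.prodMk_right s))).integrable_of_hasCompactSupport
      hc.smul_right).aestronglyMeasurable)
    (Eventually.of_forall fun y t ht => ?_)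
    ((hw.norm.mul continuous_const).integrable_of_hasCompactSupport hc.norm.mul_right)
    (Eventually.of_forall fun y t _ => (hd t y).const_smul (w y))
  by_cases hy : y ∈ tsupport w
  · rw [norm_smul]
    exact mul_le_mul_of_nonneg_left (hB (t, y) ⟨ht, hy⟩) (norm_nonneg _)
  · simp [image_eq_zero_of_notMem_tsupport hy]

theorem hasDerivAt_integral_mul_of_hasCompactSupport (hw : Continuous w) (hc : HasCompactSupport w)
    {Q Q' : ℝ → Y → ℝ} (hQ : Continuous (Function.uncurry Q))
    (hQ' : Continuous (Function.uncurry Q'))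
    (hd : ∀ s y, HasDerivAt (fun t => Q t y) (Q' s y) s) (s : ℝ) :
    HasDerivAt (fun t => ∫ y, w y * Q t y ∂μ) (∫ y, w y * Q' s y ∂μ) s := by
  have hQ'' : Continuous (Function.uncurry fun s y => ContinuousLinearMap.toSpanSingleton ℝ
      (Q' s y)) := (ContinuousLinearMap.toSpanSingletonCLE (𝕜 := ℝ) (E := ℝ)).continuous.comp hQ'
  have hfderiv := hasFDerivAt_integral_smul_of_hasCompactSupport (μ := μ) hw hc hQ hQ'' hd s
  refine hfderiv.hasDerivAt.congr_deriv ?_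
  rw [ContinuousLinearMap.integral_apply]
  · simp
  · exact (hw.smul (hQ''.comp (Continuous.prodMk_right s))).integrable_of_hasCompactSupport
      hc.smul_right

end ParametricIntegral

section SetIntegral

variable {X : Type*} [MetricSpace X] [ProperSpace X] [MeasurableSpace X]
  [OpensMeasurableSpace X] {μ : Measure X} [IsFiniteMeasureOnCompacts μ]
  {S : Set X} {f g : X → ℝ}

theorem integrableOn_of_continuous_of_isBounded (hg : Continuous g) (hS : Bornology.IsBounded S) :
    IntegrableOn g S μ :=
  (hg.continuousOn.integrableOn_compact hS.isCompact_closure).mono_set subset_closure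

theorem abs_integral_le_setIntegral (hg : Continuous g) (hS : Bornology.IsBounded S)
    (hzero : ∀ x, x ∉ S → f x = 0) (hfg : ∀ x, |f x| ≤ g x) :
    |∫ x, f x ∂μ| ≤ ∫ x in S, g x ∂μ := by
  rw [← setIntegral_eq_integral_of_forall_compl_eq_zero hzero]
  exact norm_integral_le_of_norm_le (f := f) (integrableOn_of_continuous_of_isBounded hg hS)
    (Eventually.of_forall hfg)

end SetIntegral

/-- A smooth solution of the stationary tropical climate model. -/
structure SmoothTCM (u v : R3 → R3) (pr θ : R3 → ℝ) : Prop where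
  contDiff_u : ContDiff ℝ ∞ u
  contDiff_v : ContDiff ℝ ∞ v
  contDiff_pr : ContDiff ℝ ∞ pr
  contDiff_θ : ContDiff ℝ ∞ θ
  tcm : TCM u v pr θ

/-- The squared length `|∇f|²` of the gradient. -/
def gradSq (f : R3 → ℝ) (x : R3) : ℝ := ∑ j, pd f j x ^ 2

/-- The energy density `|u|² + |v|² + θ²` (twice the physical one). -/
def energyDensity (u v : R3 → R3) (θ : R3 → ℝ) (x : R3) : ℝ := ‖u x‖ ^ 2 + ‖v x‖ ^ 2 + θ x ^ 2

/-- The rate of energy dissipation `|∇u|² + |∇v|² + |∇θ|²`. -/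
def dissipation (u v : R3 → R3) (θ : R3 → ℝ) (x : R3) : ℝ :=
  (∑ i, gradSq (fun y => u y i) x) + (∑ i, gradSq (fun y => v y i) x) + gradSq θ x

/-- The energy flux `½∇e - (½e + π) u - (u·v + θ) v`, where `e = |u|² + |v|² + θ²`. -/
def energyFlux (u v : R3 → R3) (pr θ : R3 → ℝ) (j : Fin 3) (x : R3) : ℝ :=
  1 / 2 * pd (energyDensity u v θ) j x - (1 / 2 * energyDensity u v θ x + pr x) * u x j
    - (inner ℝ (u x) (v x) + θ x) * v x j

section EnergyBalance

variable {u v : R3 → R3} {pr θ : R3 → ℝ}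

theorem pd_pd_sq {f : R3 → ℝ} (hf : ContDiff ℝ ∞ f) (j : Fin 3) (x : R3) :
    pd (pd (fun y => f y ^ 2) j) j x = 2 * (f x * pd (pd f j) j x + pd f j x ^ 2) := by
  have hfirst : pd (fun y => f y ^ 2) j = fun x => 2 * (f x * pd f j x) := by
    ext x
    simp_rw [pow_two]
    rw [pd_mul (by fun_prop) (by fun_prop)]
    ring
  rw [hfirst, pd_const_mul (by fun_prop),
    pd_mul (by fun_prop) (by fun_prop)]
  ring

theorem contDiff_energyDensity (hu : ContDiff ℝ ∞ u) (hv : ContDiff ℝ ∞ v)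
    (hθ : ContDiff ℝ ∞ θ) : ContDiff ℝ ∞ (energyDensity u v θ) :=
  ((hu.norm_sq ℝ).add (hv.norm_sq ℝ)).add (hθ.pow 2)

@[fun_prop]
theorem continuous_gradSq {f : R3 → ℝ} (hf : ContDiff ℝ 1 f) : Continuous (gradSq f) := by
  unfold gradSq
  fun_prop

theorem continuous_dissipation (hu : ContDiff ℝ ∞ u) (hv : ContDiff ℝ ∞ v)
    (hθ : ContDiff ℝ ∞ θ) : Continuous (dissipation u v θ) := by
  unfold dissipation
  fun_prop (disch := simp)

theorem lap_sum {ι : Type*} (s : Finset ι) {f : ι → R3 → ℝ} (hf : ∀ i, ContDiff ℝ ∞ (f i))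
    (x : R3) : lap (fun y => ∑ i ∈ s, f i y) x = ∑ i ∈ s, lap (f i) x := by
  unfold lap
  rw [Finset.sum_comm]
  refine Finset.sum_congr rfl fun j _ => ?_
  rw [show pd (fun y => ∑ i ∈ s, f i y) j = fun x => ∑ i ∈ s, pd (f i) j x from
    funext fun x => pd_sum s (by fun_prop) j, pd_sum s (by fun_prop)]

theorem lap_add {f g : R3 → ℝ} (hf : ContDiff ℝ ∞ f) (hg : ContDiff ℝ ∞ g) (x : R3) :
    lap (fun y => f y + g y) x = lap f x + lap g x := by
  simpa [Fin.sum_univ_two] using lap_sum Finset.univ (f := ![f, g])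
    (Fin.forall_fin_two.2 ⟨hf, hg⟩) x

theorem lap_sq {f : R3 → ℝ} (hf : ContDiff ℝ ∞ f) (x : R3) :
    lap (fun y => f y ^ 2) x = 2 * (f x * lap f x + gradSq f x) := by
  simp only [lap, gradSq, pd_pd_sq hf, Finset.mul_sum, ← Finset.sum_add_distrib]

theorem lap_energyDensity (hu : ContDiff ℝ ∞ u) (hv : ContDiff ℝ ∞ v) (hθ : ContDiff ℝ ∞ θ)
    (x : R3) :
    lap (energyDensity u v θ) x = 2 * ((∑ i, u x i * lap (fun y => u y i) x)
      + (∑ i, v x i * lap (fun y => v y i) x) + θ x * lap θ x + dissipation u v θ x) := by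
  unfold energyDensity dissipation
  simp_rw [EuclideanSpace.real_norm_sq_eq]
  rw [lap_add (by fun_prop) (by fun_prop), lap_add (by fun_prop) (by fun_prop),
    lap_sum _ (by fun_prop), lap_sum _ (by fun_prop), lap_sq hθ]
  simp_rw [fun i => lap_sq (f := fun y => u y i) (by fun_prop),
    fun i => lap_sq (f := fun y => v y i) (by fun_prop), ← Finset.mul_sum, Finset.sum_add_distrib]
  ring

theorem pd_energyDensity (hu : ContDiff ℝ ∞ u) (hv : ContDiff ℝ ∞ v) (hθ : ContDiff ℝ ∞ θ)
    (j : Fin 3) (x : R3) :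
    pd (energyDensity u v θ) j x = 2 * ((∑ i, u x i * pd (fun y => u y i) j x)
      + (∑ i, v x i * pd (fun y => v y i) j x) + θ x * pd θ j x) := by
  unfold energyDensity
  simp_rw [EuclideanSpace.real_norm_sq_eq, pow_two]
  rw [pd_add (by fun_prop) (by fun_prop), pd_add (by fun_prop) (by fun_prop),
    pd_sum _ (by fun_prop), pd_sum _ (by fun_prop), pd_mul (by fun_prop) (by fun_prop)]
  simp_rw [fun i => pd_mul (f := fun y => u y i) (g := fun y => u y i) (x := x) (by fun_prop)
    (by fun_prop), fun i => pd_mul (f := fun y => v y i) (g := fun y => v y i) (x := x)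
    (by fun_prop) (by fun_prop), Finset.sum_add_distrib]
  simp only [mul_comm (pd _ _ _)]
  ring

theorem sum_pd_mul {g : R3 → ℝ} {F : R3 → R3} {x : R3} (hg : DifferentiableAt ℝ g x)
    (hF : ∀ j, DifferentiableAt ℝ (fun y => F y j) x) :
    ∑ j, pd (fun y => g y * F y j) j x
      = g x * (∑ j, pd (fun y => F y j) j x) + ∑ j, pd g j x * F x j := by
  simp only [pd_mul hg (hF _), Finset.sum_add_distrib, Finset.mul_sum]

attribute [local fun_prop] ContDiff.inner DifferentiableAt.inner

namespace SmoothTCM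

variable (h : SmoothTCM u v pr θ)
include h

theorem dissipation_eq_sum_pd_energyFlux (x : R3) :
    dissipation u v θ x = ∑ j, pd (energyFlux u v pr θ j) j x := by
  have ⟨hu, hv, hpr, hθ, hmom, hbar, htemp, hdiv⟩ := h
  have he := contDiff_energyDensity hu hv hθ
  have hflux : ∑ j, pd (energyFlux u v pr θ j) j x = 1 / 2 * lap (energyDensity u v θ) x
      - ∑ j, pd (fun y => (1 / 2 * energyDensity u v θ y + pr y) * u y j) j x
      - ∑ j, pd (fun y => (inner ℝ (u y) (v y) + θ y) * v y j) j x := by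
    unfold energyFlux lap
    rw [Finset.mul_sum, ← Finset.sum_sub_distrib, ← Finset.sum_sub_distrib]
    refine Finset.sum_congr rfl fun j _ => ?_
    rw [pd_sub (by fun_prop) (by fun_prop), pd_sub (by fun_prop) (by fun_prop),
      pd_const_mul (by fun_prop)]
  have hdot : ∀ j, pd (fun y => inner ℝ (u y) (v y) + θ y) j x =
      (∑ i, (u x i * pd (fun y => v y i) j x + pd (fun y => u y i) j x * v x i)) + pd θ j x := by
    intro j
    simp only [PiLp.inner_apply, RCLike.inner_apply, conj_trivial, mul_comm (v _ _)]
    rw [pd_add (by fun_prop) (by fun_prop), pd_sum _ (by fun_prop)]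
    simp_rw [fun i => pd_mul (f := fun y => u y i) (g := fun y => v y i) (x := x) (by fun_prop)
      (by fun_prop)]
  have hhead : ∀ j, pd (fun y => 1 / 2 * energyDensity u v θ y + pr y) j x =
      1 / 2 * pd (energyDensity u v θ) j x + pd pr j x := fun j => by
    rw [pd_add (by fun_prop) (by fun_prop), pd_const_mul (by fun_prop)]
  rw [hflux, sum_pd_mul (by fun_prop) (by fun_prop), sum_pd_mul (by fun_prop) (by fun_prop),
    hdiv, lap_energyDensity hu hv hθ]
  simp_rw [hdot, hhead, pd_energyDensity hu hv hθ]
  have hten := fun i j => pd_mul (f := fun y => v y j) (g := fun y => v y i) (x := x)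
    (by fun_prop) (by fun_prop) j
  have hm := fun i => hmom i x
  have hb := fun i => hbar i x
  have ht := htemp x
  simp_rw [hten] at hm
  simp only [PiLp.inner_apply, RCLike.inner_apply, conj_trivial, Fin.sum_univ_three] at *
  linear_combination u x 0 * hm 0 + u x 1 * hm 1 + u x 2 * hm 2
    + v x 0 * hb 0 + v x 1 * hb 1 + v x 2 * hb 2 + θ x * ht

end SmoothTCM
end EnergyBalance

/-- `χ` is a smooth compactly supported cutoff with values in `[0, 1]` whose first and second
derivatives are bounded by `c / d` and `c / d ^ 2` and live on `S`, the transition region. -/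
structure IsCutoff (χ : R3 → ℝ) (S : Set R3) (c d : ℝ) : Prop where
  contDiff : ContDiff ℝ ∞ χ
  hasCompactSupport : HasCompactSupport χ
  nonneg : ∀ x, 0 ≤ χ x
  le_one : ∀ x, χ x ≤ 1
  norm_fderiv_le : ∀ x, ‖fderiv ℝ χ x‖ ≤ c / d
  abs_lap_le : ∀ x, |lap χ x| ≤ c / d ^ 2
  fderiv_eq_zero : ∀ x ∉ S, fderiv ℝ χ x = 0
  lap_eq_zero : ∀ x ∉ S, lap χ x = 0

section LocalEnergy

variable {u v : R3 → R3} {pr θ χ : R3 → ℝ} {S : Set R3} {c d : ℝ}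

theorem energyDensity_nonneg (u v : R3 → R3) (θ : R3 → ℝ) (x : R3) : 0 ≤ energyDensity u v θ x := by
  unfold energyDensity
  positivity

theorem dissipation_nonneg (u v : R3 → R3) (θ : R3 → ℝ) (x : R3) : 0 ≤ dissipation u v θ x := by
  unfold dissipation gradSq
  positivity

theorem IsCutoff.abs_fderiv_apply_le (hχ : IsCutoff χ S c d) (x w : R3) :
    |fderiv ℝ χ x w| ≤ c / d * ‖w‖ :=
  (fderiv ℝ χ x).le_of_opNorm_le (hχ.norm_fderiv_le x) w

theorem hasCompactSupport_fderiv_apply (hχ : HasCompactSupport χ) (w : R3 → R3) :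
    HasCompactSupport fun x => fderiv ℝ χ x (w x) :=
  HasCompactSupport.intro hχ fun x hx => by simp [fderiv_of_notMem_tsupport ℝ hx]

@[fun_prop]
theorem continuous_fderiv_apply {w : R3 → R3} (hχ : ContDiff ℝ ∞ χ) (hw : Continuous w) :
    Continuous fun x => fderiv ℝ χ x (w x) :=
  (hχ.continuous_fderiv (by simp)).clm_apply hw

theorem integrable_fderiv_apply_mul (hχ : ContDiff ℝ ∞ χ) (hc : HasCompactSupport χ) {w : R3 → R3}
    {g : R3 → ℝ} (hw : Continuous w) (hg : Continuous g) :
    Integrable fun x => fderiv ℝ χ x (w x) * g x :=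
  ((continuous_fderiv_apply hχ hw).mul hg).integrable_of_hasCompactSupport
    (hasCompactSupport_fderiv_apply hc w).mul_right

theorem IsCutoff.abs_integral_fderiv_apply_mul_le (hχ : IsCutoff χ S c d)
    (hS : Bornology.IsBounded S) {w : R3 → R3} {g : R3 → ℝ} (hw : Continuous w)
    (hg : Continuous g) :
    |∫ x, fderiv ℝ χ x (w x) * g x| ≤ c / d * ∫ x in S, ‖w x‖ * |g x| := by
  rw [← integral_const_mul]
  refine abs_integral_le_setIntegral (by fun_prop) hS
    (fun x hx => by simp [hχ.fderiv_eq_zero x hx]) fun x => ?_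
  rw [abs_mul, ← mul_assoc]
  exact mul_le_mul_of_nonneg_right (hχ.abs_fderiv_apply_le x _) (abs_nonneg _)

theorem integral_mul_sum_pd_eq_neg (hχ : ContDiff ℝ ∞ χ) (hc : HasCompactSupport χ)
    {F : Fin 3 → R3 → ℝ} (hF : ∀ j, ContDiff ℝ ∞ (F j)) :
    ∫ x, χ x * ∑ j, pd (F j) j x = -∫ x, ∑ j, pd χ j x * F j x := by
  simp only [Finset.mul_sum]
  rw [integral_finsetSum, integral_finsetSum, ← Finset.sum_neg_distrib]
  · exact Finset.sum_congr rfl fun j _ =>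
      integral_mul_pd_eq_neg (hχ.of_le (by simp)) ((hF j).of_le (by simp)) hc j
  · exact fun j _ => Continuous.integrable_of_hasCompactSupport (by fun_prop (disch := simp))
      (hasCompactSupport_pd hc j).mul_right
  · exact fun j _ => Continuous.integrable_of_hasCompactSupport (by fun_prop (disch := simp))
      hc.mul_right

theorem integral_sum_pd_mul_pd_eq_neg (hχ : ContDiff ℝ ∞ χ) (hc : HasCompactSupport χ)
    {g : R3 → ℝ} (hg : ContDiff ℝ ∞ g) :
    ∫ x, ∑ j, pd χ j x * pd g j x = -∫ x, lap χ x * g x := by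
  unfold lap
  simp only [Finset.sum_mul]
  rw [integral_finsetSum, integral_finsetSum, ← Finset.sum_neg_distrib]
  · exact Finset.sum_congr rfl fun j _ => integral_mul_pd_eq_neg (by fun_prop (disch := simp))
      (hg.of_le (by simp)) (hasCompactSupport_pd hc j) j
  · exact fun j _ => Continuous.integrable_of_hasCompactSupport (by fun_prop (disch := simp))
      (hasCompactSupport_pd (hasCompactSupport_pd hc j) j).mul_right
  · exact fun j _ => Continuous.integrable_of_hasCompactSupport (by fun_prop (disch := simp))
      (hasCompactSupport_pd hc j).mul_right

attribute [local fun_prop] ContDiff.inner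

namespace SmoothTCM

variable (h : SmoothTCM u v pr θ)
include h

@[fun_prop]
theorem continuous_energyDensity : Continuous (energyDensity u v θ) :=
  (contDiff_energyDensity h.contDiff_u h.contDiff_v h.contDiff_θ).continuous

theorem integral_cutoff_mul_dissipation (hχ : ContDiff ℝ ∞ χ) (hc : HasCompactSupport χ) :
    ∫ x, χ x * dissipation u v θ x = 1 / 2 * (∫ x, lap χ x * energyDensity u v θ x)
      + (∫ x, fderiv ℝ χ x (u x) * (1 / 2 * energyDensity u v θ x + pr x))
      + ∫ x, fderiv ℝ χ x (v x) * (inner ℝ (u x) (v x) + θ x) := by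
  have ⟨hu, hv, hpr, hθ, _⟩ := h
  have he := contDiff_energyDensity hu hv hθ
  simp_rw [h.dissipation_eq_sum_pd_energyFlux]
  rw [integral_mul_sum_pd_eq_neg hχ hc fun j => by
    unfold energyFlux
    fun_prop]
  have hpoint : ∀ x, ∑ j, pd χ j x * energyFlux u v pr θ j x
      = 1 / 2 * (∑ j, pd χ j x * pd (energyDensity u v θ) j x)
        - fderiv ℝ χ x (u x) * (1 / 2 * energyDensity u v θ x + pr x)
        - fderiv ℝ χ x (v x) * (inner ℝ (u x) (v x) + θ x) := by
    intro x
    simp only [energyFlux, fderiv_apply_eq_sum_pd, Finset.mul_sum, Finset.sum_mul,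
      ← Finset.sum_sub_distrib]
    exact Finset.sum_congr rfl fun j _ => by ring
  have hgrad : Integrable fun x => ∑ j, pd χ j x * pd (energyDensity u v θ) j x :=
    integrable_finsetSum _ fun j _ => Continuous.integrable_of_hasCompactSupport
      (by fun_prop (disch := simp)) (hasCompactSupport_pd hc j).mul_right
  have hadv : Integrable fun x => fderiv ℝ χ x (u x) * (1 / 2 * energyDensity u v θ x + pr x) :=
    integrable_fderiv_apply_mul hχ hc hu.continuous (by fun_prop)
  have hcouple : Integrable fun x => fderiv ℝ χ x (v x) * (inner ℝ (u x) (v x) + θ x) :=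
    integrable_fderiv_apply_mul hχ hc hv.continuous (by fun_prop)
  simp_rw [hpoint]
  rw [integral_sub (f := fun x => _ - _) ((hgrad.const_mul _).sub hadv) hcouple,
    integral_sub (hgrad.const_mul _) hadv,
    integral_const_mul, integral_sum_pd_mul_pd_eq_neg hχ hc he]
  ring

theorem setIntegral_norm_mul_abs_inner_le (hS : Bornology.IsBounded S) :
    ∫ x in S, ‖v x‖ * |inner ℝ (u x) (v x)| ≤ ∫ x in S, ‖u x‖ * energyDensity u v θ x := by
  have hu := h.contDiff_u.continuous
  have hv := h.contDiff_v.continuous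
  refine integral_mono (integrableOn_of_continuous_of_isBounded (by fun_prop) hS)
    (integrableOn_of_continuous_of_isBounded (hu.norm.mul h.continuous_energyDensity) hS)
    fun x => ?_
  have hsq : ‖v x‖ ^ 2 ≤ energyDensity u v θ x := by unfold energyDensity; nlinarith
  calc ‖v x‖ * |inner ℝ (u x) (v x)|
      ≤ ‖v x‖ * (‖u x‖ * ‖v x‖) := by gcongr; exact abs_real_inner_le_norm _ _
    _ = ‖u x‖ * ‖v x‖ ^ 2 := by ring
    _ ≤ ‖u x‖ * energyDensity u v θ x := by gcongr

theorem integral_cutoff_mul_dissipation_le (hχ : IsCutoff χ S c d) (hS : Bornology.IsBounded S) :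
    ∫ x, χ x * dissipation u v θ x ≤ c / d ^ 2 * (∫ x in S, energyDensity u v θ x)
      + 2 * (c / d) * (∫ x in S, ‖u x‖ * energyDensity u v θ x)
      + c / d * (∫ x in S, ‖v x‖ * |θ x|) + |∫ x, fderiv ℝ χ x (u x) * pr x| := by
  have ⟨hu, hv, hpr, hθ, _⟩ := h
  have hu := hu.continuous
  have hv := hv.continuous
  have hcd : 0 ≤ c / d := (norm_nonneg _).trans (hχ.norm_fderiv_le 0)
  have he0 := energyDensity_nonneg u v θ
  have hlap : |∫ x, lap χ x * energyDensity u v θ x|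
      ≤ c / d ^ 2 * ∫ x in S, energyDensity u v θ x := by
    rw [← integral_const_mul]
    refine abs_integral_le_setIntegral (by fun_prop) hS
      (fun x hx => by rw [hχ.lap_eq_zero x hx, zero_mul]) fun x => ?_
    rw [abs_mul, abs_of_nonneg (he0 x)]
    exact mul_le_mul_of_nonneg_right (hχ.abs_lap_le x) (he0 x)
  have hadv : |∫ x, fderiv ℝ χ x (u x) * (1 / 2 * energyDensity u v θ x)|
      ≤ 1 / 2 * (c / d) * ∫ x in S, ‖u x‖ * energyDensity u v θ x := by
    refine (hχ.abs_integral_fderiv_apply_mul_le hS hu (by fun_prop)).trans_eq ?_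
    simp_rw [abs_mul, abs_of_nonneg (he0 _), mul_left_comm ‖u _‖]
    rw [integral_const_mul, abs_of_pos (by norm_num)]
    ring
  have hdot : |∫ x, fderiv ℝ χ x (v x) * inner ℝ (u x) (v x)|
      ≤ c / d * ∫ x in S, ‖u x‖ * energyDensity u v θ x := by
    exact (hχ.abs_integral_fderiv_apply_mul_le hS hv (by fun_prop)).trans
      (mul_le_mul_of_nonneg_left (h.setIntegral_norm_mul_abs_inner_le hS) hcd)
  have h_int := fun {w : R3 → R3} {g : R3 → ℝ} =>
    integrable_fderiv_apply_mul (w := w) (g := g) hχ.contDiff hχ.hasCompactSupport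
  rw [h.integral_cutoff_mul_dissipation hχ.contDiff hχ.hasCompactSupport]
  simp_rw [mul_add]
  rw [integral_add (h_int hu (by fun_prop)) (h_int hu (by fun_prop)),
    integral_add (h_int hv (by fun_prop)) (h_int hv (by fun_prop))]
  have hlap0 := (abs_nonneg _).trans hlap
  have hadv0 := (abs_nonneg _).trans hdot
  linarith [le_of_abs_le hlap, le_of_abs_le hadv, le_of_abs_le hdot,
    le_of_abs_le (hχ.abs_integral_fderiv_apply_mul_le hS hv hθ.continuous),
    le_abs_self (∫ x, fderiv ℝ χ x (u x) * pr x)]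

end SmoothTCM
end LocalEnergy

section Cutoff

theorem hasCompactSupport_deriv_smoothTransition :
    HasCompactSupport (deriv Real.smoothTransition) := by
  refine HasCompactSupport.intro (isCompact_Icc (a := 0) (b := 1)) fun t ht => ?_
  rcases not_and_or.1 ht with ht | ht <;> rw [not_le] at ht
  · have hconst : Real.smoothTransition =ᶠ[nhds t] fun _ => 0 := by
      filter_upwards [Iio_mem_nhds ht] with y hy
      exact Real.smoothTransition.zero_of_nonpos (le_of_lt hy)
    simp [hconst.deriv_eq]
  · have hconst : Real.smoothTransition =ᶠ[nhds t] fun _ => 1 := by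
      filter_upwards [Ioi_mem_nhds ht] with y hy
      exact Real.smoothTransition.one_of_one_le (le_of_lt hy)
    simp [hconst.deriv_eq]

theorem contDiff_deriv_smoothTransition : ContDiff ℝ ∞ (deriv Real.smoothTransition) :=
  (contDiff_infty_iff_deriv.1 Real.smoothTransition.contDiff).2

theorem exists_bound_deriv_smoothTransition :
    ∃ c : ℝ, 0 < c ∧ (∀ t, |deriv Real.smoothTransition t| ≤ c) ∧
      ∀ t, |deriv (deriv Real.smoothTransition) t| ≤ c := by
  obtain ⟨c₁, hc₁⟩ := hasCompactSupport_deriv_smoothTransition.exists_bound_of_continuous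
    contDiff_deriv_smoothTransition.continuous
  obtain ⟨c₂, hc₂⟩ := hasCompactSupport_deriv_smoothTransition.deriv.exists_bound_of_continuous
    (contDiff_infty_iff_deriv.1 contDiff_deriv_smoothTransition).2.continuous
  exact ⟨max (max c₁ c₂) 1, by positivity, fun t => (hc₁ t).trans (by simp),
    fun t => (hc₂ t).trans (by simp)⟩

theorem deriv_comp_sub_div {f : ℝ → ℝ} (hf : Differentiable ℝ f) (B k t : ℝ) :
    deriv (fun t => f ((B - t) / k)) t = -(deriv f ((B - t) / k) / k) := by
  have hinner : HasDerivAt (fun t => (B - t) / k) (-1 / k) t := by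
    simpa using ((hasDerivAt_id t).const_sub B).div_const k
  refine ((hf _).hasDerivAt.comp t hinner).deriv.trans ?_
  ring

section Radial

variable {φ : ℝ → ℝ} (hφ : ContDiff ℝ ∞ φ)
include hφ

theorem contDiff_comp_norm_sq : ContDiff ℝ ∞ fun x : R3 => φ (‖x‖ ^ 2) :=
  hφ.comp (contDiff_norm_sq ℝ)

theorem fderiv_comp_norm_sq (x : R3) :
    fderiv ℝ (fun x : R3 => φ (‖x‖ ^ 2)) x = (2 * deriv φ (‖x‖ ^ 2)) • innerSL ℝ x := by
  have hφ' := (hφ.differentiable (by simp) (‖x‖ ^ 2)).hasDerivAt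
  have hcomp := (hφ'.comp_hasFDerivAt x (hasStrictFDerivAt_norm_sq x).hasFDerivAt).fderiv
  rw [Function.comp_def] at hcomp
  rw [hcomp]
  ext y
  simp
  ring

theorem pd_comp_norm_sq (j : Fin 3) (x : R3) :
    pd (fun x => φ (‖x‖ ^ 2)) j x = 2 * deriv φ (‖x‖ ^ 2) * x j := by
  simp [pd, fderiv_comp_norm_sq hφ, EuclideanSpace.inner_single_right]

theorem lap_comp_norm_sq (x : R3) :
    lap (fun x => φ (‖x‖ ^ 2)) x
      = 4 * deriv (deriv φ) (‖x‖ ^ 2) * ‖x‖ ^ 2 + 6 * deriv φ (‖x‖ ^ 2) := by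
  have hφ' : ContDiff ℝ ∞ (deriv φ) := (contDiff_infty_iff_deriv.1 hφ).2
  have hdiff := differentiableAt_of_contDiff_infty (contDiff_comp_norm_sq hφ') (x := x)
  have hcoord : ∀ j, pd (fun y : R3 => y j) j x = 1 := fun j => by
    have hproj : (fun y : R3 => y j) = (EuclideanSpace.proj j : R3 →L[ℝ] ℝ) := rfl
    rw [pd, hproj, ContinuousLinearMap.fderiv]
    simp
  have hsnd : ∀ j, pd (pd (fun x => φ (‖x‖ ^ 2)) j) j x
      = 4 * deriv (deriv φ) (‖x‖ ^ 2) * x j ^ 2 + 2 * deriv φ (‖x‖ ^ 2) := by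
    intro j
    have hfst : pd (fun x => φ (‖x‖ ^ 2)) j = fun x => 2 * (deriv φ (‖x‖ ^ 2) * x j) := by
      ext x
      rw [pd_comp_norm_sq hφ, mul_assoc]
    rw [hfst, pd_const_mul (f := fun x => deriv φ (‖x‖ ^ 2) * x j)
      (hdiff.mul (by fun_prop)), pd_mul hdiff (by fun_prop),
      pd_comp_norm_sq hφ', hcoord]
    ring
  simp only [lap, hsnd, Finset.sum_add_distrib, ← Finset.mul_sum, ← EuclideanSpace.real_norm_sq_eq,
    Finset.sum_const, Finset.card_univ, Fintype.card_fin, nsmul_eq_mul]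
  ring

end Radial

/-- The radial cutoff which is `1` on the ball of radius `a` and `0` off the ball of radius `b`. -/
def radialCutoff (a b : ℝ) (x : R3) : ℝ :=
  Real.smoothTransition ((b ^ 2 - ‖x‖ ^ 2) / (b ^ 2 - a ^ 2))

section RadialCutoff

variable {a b : ℝ} {x : R3}

theorem radialCutoff_eq_one (ha : 0 < a) (hab : a < b) (hx : ‖x‖ ≤ a) : radialCutoff a b x = 1 := by
  refine Real.smoothTransition.one_of_one_le ?_
  rw [one_le_div (by nlinarith)]
  gcongr

theorem radialCutoff_eq_zero (ha : 0 < a) (hab : a < b) (hx : b ≤ ‖x‖) :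
    radialCutoff a b x = 0 :=
  Real.smoothTransition.zero_of_nonpos
    (div_nonpos_of_nonpos_of_nonneg (by nlinarith) (by nlinarith))

theorem contDiff_radialCutoff (a b : ℝ) : ContDiff ℝ ∞ (radialCutoff a b) :=
  contDiff_comp_norm_sq (φ := fun t => Real.smoothTransition ((b ^ 2 - t) / (b ^ 2 - a ^ 2)))
    (Real.smoothTransition.contDiff.comp (by fun_prop))

theorem exists_eventuallyEq_radialCutoff (ha : 0 < a) (hab : a < b)
    (hx : x ∉ {x : R3 | a ≤ ‖x‖ ∧ ‖x‖ ≤ b}) :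
    ∃ C : ℝ, radialCutoff a b =ᶠ[nhds x] fun _ => C := by
  rcases not_and_or.1 hx with hx | hx <;> rw [not_le] at hx
  · exact ⟨1, (continuous_norm.continuousAt.eventually_lt_const hx).mono fun y hy =>
      radialCutoff_eq_one ha hab hy.le⟩
  · exact ⟨0, (continuous_norm.continuousAt.eventually_const_lt hx).mono fun y hy =>
      radialCutoff_eq_zero ha hab hy.le⟩

theorem fderiv_radialCutoff (a b : ℝ) (x : R3) : fderiv ℝ (radialCutoff a b) x
    = (2 * -(deriv Real.smoothTransition ((b ^ 2 - ‖x‖ ^ 2) / (b ^ 2 - a ^ 2)) / (b ^ 2 - a ^ 2)))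
      • innerSL ℝ x := by
  rw [← deriv_comp_sub_div (Real.smoothTransition.contDiff.differentiable one_ne_zero)]
  exact fderiv_comp_norm_sq
    (φ := fun t => Real.smoothTransition ((b ^ 2 - t) / (b ^ 2 - a ^ 2)))
    (Real.smoothTransition.contDiff.comp (by fun_prop)) x

theorem lap_radialCutoff (a b : ℝ) (x : R3) : lap (radialCutoff a b) x
    = 4 * (deriv (deriv Real.smoothTransition) ((b ^ 2 - ‖x‖ ^ 2) / (b ^ 2 - a ^ 2))
        / (b ^ 2 - a ^ 2) ^ 2) * ‖x‖ ^ 2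
      - 6 * (deriv Real.smoothTransition ((b ^ 2 - ‖x‖ ^ 2) / (b ^ 2 - a ^ 2))
        / (b ^ 2 - a ^ 2)) := by
  have hlap := lap_comp_norm_sq
    (φ := fun t => Real.smoothTransition ((b ^ 2 - t) / (b ^ 2 - a ^ 2)))
    (Real.smoothTransition.contDiff.comp (by fun_prop)) x
  have hderiv : deriv (fun t => Real.smoothTransition ((b ^ 2 - t) / (b ^ 2 - a ^ 2)))
      = fun t => -(deriv Real.smoothTransition ((b ^ 2 - t) / (b ^ 2 - a ^ 2))
        / (b ^ 2 - a ^ 2)) :=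
    funext (deriv_comp_sub_div (Real.smoothTransition.contDiff.differentiable one_ne_zero) _ _)
  refine hlap.trans ?_
  rw [hderiv, deriv.fun_neg, deriv_div_const, deriv_comp_sub_div
    (contDiff_deriv_smoothTransition.differentiable (by simp))]
  generalize b ^ 2 - a ^ 2 = k
  ring

theorem fderiv_radialCutoff_eq_zero (ha : 0 < a) (hab : a < b)
    (hx : x ∉ {x : R3 | a ≤ ‖x‖ ∧ ‖x‖ ≤ b}) : fderiv ℝ (radialCutoff a b) x = 0 := by
  obtain ⟨C, hC⟩ := exists_eventuallyEq_radialCutoff ha hab hx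
  simp [hC.fderiv_eq]

theorem lap_radialCutoff_eq_zero (ha : 0 < a) (hab : a < b)
    (hx : x ∉ {x : R3 | a ≤ ‖x‖ ∧ ‖x‖ ≤ b}) : lap (radialCutoff a b) x = 0 := by
  obtain ⟨C, hC⟩ := exists_eventuallyEq_radialCutoff ha hab hx
  refine Finset.sum_eq_zero fun j _ => pd_eq_zero_of_eventuallyEq_const (c := 0) ?_ j
  filter_upwards [eventually_eventuallyEq_nhds.2 hC] with y hy
  exact pd_eq_zero_of_eventuallyEq_const hy j

theorem norm_fderiv_radialCutoff_le {c : ℝ} (ha : 0 < a) (hab : a < b)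
    (hc : ∀ t, |deriv Real.smoothTransition t| ≤ c) (hx : ‖x‖ ≤ b) :
    ‖fderiv ℝ (radialCutoff a b) x‖ ≤ 2 * c / (b - a) := by
  have hd : 0 < b - a := sub_pos.2 hab
  have hs : 0 < b + a := by linarith
  have hk : b ^ 2 - a ^ 2 = (b - a) * (b + a) := by ring
  have hkpos : 0 < b ^ 2 - a ^ 2 := hk ▸ mul_pos hd hs
  have hc₀ : 0 ≤ c := (abs_nonneg _).trans (hc 0)
  rw [fderiv_radialCutoff, norm_smul, innerSL_apply_norm, norm_mul, norm_neg, norm_div,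
    Real.norm_of_nonneg hkpos.le, Real.norm_two]
  calc 2 * (‖deriv Real.smoothTransition _‖ / (b ^ 2 - a ^ 2)) * ‖x‖
      ≤ 2 * (c / (b ^ 2 - a ^ 2)) * (b + a) := by
        gcongr
        · exact hc _
        · linarith
    _ = 2 * c / (b - a) := by rw [hk]; field_simp

theorem abs_lap_radialCutoff_le {c : ℝ} (ha : 0 < a) (hab : a < b)
    (hc₁ : ∀ t, |deriv Real.smoothTransition t| ≤ c)
    (hc₂ : ∀ t, |deriv (deriv Real.smoothTransition) t| ≤ c) (hx : ‖x‖ ≤ b) :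
    |lap (radialCutoff a b) x| ≤ 10 * c / (b - a) ^ 2 := by
  have hd : 0 < b - a := sub_pos.2 hab
  have hs : 0 < b + a := by linarith
  have hk : b ^ 2 - a ^ 2 = (b - a) * (b + a) := by ring
  have hkpos : 0 < b ^ 2 - a ^ 2 := hk ▸ mul_pos hd hs
  have hc₀ : 0 ≤ c := (abs_nonneg _).trans (hc₁ 0)
  rw [lap_radialCutoff]
  refine (abs_sub _ _).trans ?_
  simp only [abs_mul, abs_div, abs_pow, abs_norm, abs_of_pos hkpos, Nat.abs_ofNat]
  calc 4 * (|deriv (deriv Real.smoothTransition) _| / (b ^ 2 - a ^ 2) ^ 2) * ‖x‖ ^ 2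
        + 6 * (|deriv Real.smoothTransition _| / (b ^ 2 - a ^ 2))
      ≤ 4 * (c / (b ^ 2 - a ^ 2) ^ 2) * (b + a) ^ 2 + 6 * (c / ((b - a) * (b - a))) := by
        gcongr
        · exact hc₂ _
        · linarith
        · exact hc₁ _
        · nlinarith
    _ = 10 * c / (b - a) ^ 2 := by rw [hk]; field_simp; ring

theorem exists_isCutoff_radialCutoff : ∃ c : ℝ, 0 < c ∧ ∀ a b : ℝ, 0 < a → a < b →
    IsCutoff (radialCutoff a b) {x | a ≤ ‖x‖ ∧ ‖x‖ ≤ b} c (b - a) := by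
  obtain ⟨c, hc, hc₁, hc₂⟩ := exists_bound_deriv_smoothTransition
  refine ⟨10 * c, by positivity, fun a b ha hab => ?_⟩
  have := sub_pos.2 hab
  refine ⟨contDiff_radialCutoff a b, ?_, fun x => Real.smoothTransition.nonneg _,
    fun x => Real.smoothTransition.le_one _, fun x => ?_, fun x => ?_,
    fun x hx => fderiv_radialCutoff_eq_zero ha hab hx,
    fun x hx => lap_radialCutoff_eq_zero ha hab hx⟩
  · refine HasCompactSupport.intro (isCompact_closedBall (0 : R3) b) fun x hx =>
      radialCutoff_eq_zero ha hab ?_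
    rw [mem_closedBall_zero_iff, not_le] at hx
    exact hx.le
  · by_cases hx : x ∈ {x : R3 | a ≤ ‖x‖ ∧ ‖x‖ ≤ b}
    · refine (norm_fderiv_radialCutoff_le ha hab hc₁ hx.2).trans ?_
      gcongr
      norm_num
    · rw [fderiv_radialCutoff_eq_zero ha hab hx, norm_zero]
      positivity
  · by_cases hx : x ∈ {x : R3 | a ≤ ‖x‖ ∧ ‖x‖ ≤ b}
    · exact abs_lap_radialCutoff_le ha hab hc₁ hc₂ hx.2
    · rw [lap_radialCutoff_eq_zero ha hab hx, abs_zero]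
      positivity

end RadialCutoff

end Cutoff

/-- `η` is a normalized smooth kernel on the closed unit ball whose first moment density `z η(z)`
equals `-∇H(z)` for a smooth `H` supported in the same ball. The potential `H` expresses the
derivative of a mollification with respect to its scale through the gradient of the mollified
function without differentiating the kernel. -/
structure IsMollifier (η H : R3 → ℝ) : Prop where
  contDiff_kernel : ContDiff ℝ ∞ η
  contDiff_potential : ContDiff ℝ ∞ H
  kernel_eq_zero : ∀ z ∉ closedBall (0 : R3) 1, η z = 0
  potential_eq_zero : ∀ z ∉ closedBall (0 : R3) 1, H z = 0
  integral_kernel : ∫ z, η z = 1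
  pd_potential : ∀ i z, pd H i z = -(η z * z i)

theorem exists_isMollifier : ∃ η H, IsMollifier η H := by
  set bump : R3 → ℝ := fun z => 2 * deriv Real.smoothTransition (1 - ‖z‖ ^ 2) with hbump
  have hbump_smooth : ContDiff ℝ ∞ bump := contDiff_const.mul
    (contDiff_comp_norm_sq (φ := fun t => deriv Real.smoothTransition (1 - t))
      (contDiff_deriv_smoothTransition.comp (by fun_prop)))
  have hφ : ContDiff ℝ ∞ fun t => Real.smoothTransition (1 - t) :=
    Real.smoothTransition.contDiff.comp (by fun_prop)
  have houtside : ∀ z : R3, z ∉ closedBall (0 : R3) 1 → 1 - ‖z‖ ^ 2 < 0 := fun z hz => by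
    rw [mem_closedBall_zero_iff, not_le] at hz
    nlinarith
  have hbump_zero : ∀ z, z ∉ closedBall (0 : R3) 1 → bump z = 0 := fun z hz => by
    have hconst : Real.smoothTransition =ᶠ[nhds (1 - ‖z‖ ^ 2)] fun _ => 0 := by
      filter_upwards [Iio_mem_nhds (houtside z hz)] with y hy
      exact Real.smoothTransition.zero_of_nonpos (le_of_lt hy)
    simp [hbump, hconst.deriv_eq]
  have hbump_nonneg : ∀ z, 0 ≤ bump z := fun z =>
    mul_nonneg zero_le_two Real.smoothTransition.monotone.deriv_nonneg
  have hmass : 0 < ∫ z, bump z := by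
    -- By the mean value theorem the derivative of the transition equals `1` somewhere in `(0, 1)`.
    obtain ⟨t, ht, hslope⟩ := exists_deriv_eq_slope Real.smoothTransition zero_lt_one
      Real.smoothTransition.continuous.continuousOn
      (Real.smoothTransition.contDiff.differentiable one_ne_zero).differentiableOn
    simp only [Real.smoothTransition.one, Real.smoothTransition.zero, sub_zero, div_one] at hslope
    refine hbump_smooth.continuous.integral_pos_of_hasCompactSupport_nonneg_nonzero
      (x := EuclideanSpace.single 0 √(1 - t))
      (HasCompactSupport.intro (isCompact_closedBall (0 : R3) 1) hbump_zero) hbump_nonneg ?_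
    simp [hbump, Real.sq_sqrt (sub_nonneg.2 ht.2.le), hslope]
  set m := ∫ z, bump z
  refine ⟨fun z => m⁻¹ * bump z, fun z => m⁻¹ * Real.smoothTransition (1 - ‖z‖ ^ 2),
    contDiff_const.mul hbump_smooth, contDiff_const.mul (contDiff_comp_norm_sq hφ),
    fun z hz => by rw [hbump_zero z hz, mul_zero], fun z hz => ?_, ?_, fun i z => ?_⟩
  · rw [Real.smoothTransition.zero_of_nonpos (houtside z hz).le, mul_zero]
  · rw [integral_const_mul, inv_mul_cancel₀ hmass.ne']
  · rw [pd_const_mul (differentiableAt_of_contDiff_infty (contDiff_comp_norm_sq hφ)),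
      pd_comp_norm_sq hφ, deriv_comp_const_sub]
    simp only [hbump]
    ring

section Sobolev

theorem norm_fderiv_sq_le {f : R3 → ℝ} (x : R3) : ‖fderiv ℝ f x‖ ^ 2 ≤ gradSq f x := by
  have hnonneg : 0 ≤ gradSq f x := by
    unfold gradSq
    positivity
  rw [← Real.le_sqrt (norm_nonneg _) hnonneg]
  refine ContinuousLinearMap.opNorm_le_bound _ (Real.sqrt_nonneg _) fun v => ?_
  rw [fderiv_apply_eq_sum_pd, Real.norm_eq_abs, EuclideanSpace.norm_eq, ← Real.sqrt_mul hnonneg]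
  refine Real.abs_le_sqrt ((Finset.sum_mul_sq_le_sq_mul_sq _ _ _).trans_eq ?_)
  simp [gradSq, mul_comm]

theorem norm_fderiv_sq_le_sum_gradSq {ι : Type*} [Fintype ι] {f : R3 → EuclideanSpace ℝ ι}
    {x : R3} (hf : DifferentiableAt ℝ f x) :
    ‖fderiv ℝ f x‖ ^ 2 ≤ ∑ i, gradSq (fun y => f y i) x := by
  have hnonneg : 0 ≤ ∑ i, gradSq (fun y => f y i) x := by
    unfold gradSq
    positivity
  rw [← Real.le_sqrt (norm_nonneg _) hnonneg]
  refine ContinuousLinearMap.opNorm_le_bound _ (Real.sqrt_nonneg _) fun v => ?_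
  rw [← Real.sqrt_sq (norm_nonneg v), ← Real.sqrt_mul hnonneg]
  refine Real.le_sqrt_of_sq_le ?_
  rw [EuclideanSpace.norm_sq_eq, Finset.sum_mul]
  refine Finset.sum_le_sum fun i _ => ?_
  have hcoord : fderiv ℝ f x v i = fderiv ℝ (fun y => f y i) x v := by
    have hproj := ((EuclideanSpace.proj i : EuclideanSpace ℝ ι →L[ℝ] ℝ).hasFDerivAt.comp x
      hf.hasFDerivAt).fderiv
    exact (congrArg (fun L : R3 →L[ℝ] ℝ => L v) hproj).symm
  rw [hcoord]
  calc ‖fderiv ℝ (fun y => f y i) x v‖ ^ 2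
      ≤ (‖fderiv ℝ (fun y => f y i) x‖ * ‖v‖) ^ 2 := by
        gcongr
        exact ContinuousLinearMap.le_opNorm _ _
    _ ≤ gradSq (fun y => f y i) x * ‖v‖ ^ 2 := by
      rw [mul_pow]
      gcongr
      exact norm_fderiv_sq_le x

theorem norm_fderiv_smul_sq_le {F : Type*} [NormedAddCommGroup F] [NormedSpace ℝ F] {χ : R3 → ℝ}
    {f : R3 → F} {x : R3} (hχ : DifferentiableAt ℝ χ x) (hf : DifferentiableAt ℝ f x) :
    ‖fderiv ℝ (fun y => χ y • f y) x‖ ^ 2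
      ≤ 2 * (χ x ^ 2 * ‖fderiv ℝ f x‖ ^ 2) + 2 * (‖fderiv ℝ χ x‖ ^ 2 * ‖f x‖ ^ 2) := by
  have htriangle : ‖fderiv ℝ (fun y => χ y • f y) x‖
      ≤ |χ x| * ‖fderiv ℝ f x‖ + ‖fderiv ℝ χ x‖ * ‖f x‖ := by
    rw [fderiv_fun_smul hχ hf]
    refine (norm_add_le _ _).trans (add_le_add ?_ ?_)
    · rw [norm_smul, Real.norm_eq_abs]
    · rw [ContinuousLinearMap.norm_smulRight_apply]
  calc ‖fderiv ℝ (fun y => χ y • f y) x‖ ^ 2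
      ≤ (|χ x| * ‖fderiv ℝ f x‖ + ‖fderiv ℝ χ x‖ * ‖f x‖) ^ 2 := by gcongr
    _ ≤ 2 * ((|χ x| * ‖fderiv ℝ f x‖) ^ 2 + (‖fderiv ℝ χ x‖ * ‖f x‖) ^ 2) := add_sq_le
    _ = _ := by rw [mul_pow, mul_pow, sq_abs, mul_add]

theorem exists_sobolev_constant : ∃ K : ℝ, 0 ≤ K ∧ ∀ {F : Type} [NormedAddCommGroup F]
    [InnerProductSpace ℝ F] [CompleteSpace F] {f : R3 → F}, ContDiff ℝ 1 f → HasCompactSupport f →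
    ∫ x, ‖f x‖ ^ 6 ≤ K * (∫ x, ‖fderiv ℝ f x‖ ^ 2) ^ 3 := by
  set c := eLpNormLESNormFDerivOfEqInnerConst (volume : Measure R3) ((2 : NNReal) : ℝ) with hc
  refine ⟨(c : ℝ) ^ 6, by positivity, fun {F} _ _ _ f hf hcs => ?_⟩
  have hsobolev := eLpNorm_le_eLpNorm_fderiv_of_eq_inner (volume : Measure R3) (p := 2) (p' := 6)
    hf hcs (by norm_num) (by simp) (by simp; norm_num)
  have hf6 : MemLp f ((6 : NNReal) : ENNReal) volume :=
    hf.continuous.memLp_of_hasCompactSupport hcs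
  have hf2 : MemLp (fderiv ℝ f) ((2 : NNReal) : ENNReal) volume :=
    (hf.continuous_fderiv one_ne_zero).memLp_of_hasCompactSupport (hcs.fderiv (𝕜 := ℝ))
  rw [hf6.eLpNorm_eq_integral_rpow_norm (by simp) (by simp),
    hf2.eLpNorm_eq_integral_rpow_norm (by simp) (by simp), ← hc,
    ← ENNReal.ofReal_coe_nnreal (p := c), ← ENNReal.ofReal_mul (by positivity),
    ENNReal.ofReal_le_ofReal_iff (by positivity)] at hsobolev
  have hpow := pow_le_pow_left₀ (by positivity) hsobolev 6
  simp only [ENNReal.coe_toReal, NNReal.coe_ofNat, mul_pow, Real.rpow_ofNat] at hpow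
  rw [← Real.rpow_natCast, ← Real.rpow_mul (by positivity), ← Real.rpow_natCast (_ ^ (2 : ℝ)⁻¹),
    ← Real.rpow_mul (by positivity)] at hpow
  norm_num at hpow
  exact hpow

theorem IsCutoff.integral_norm_fderiv_smul_sq_le {F : Type*} [NormedAddCommGroup F]
    [NormedSpace ℝ F] {f : R3 → F} {χ : R3 → ℝ} {S : Set R3} {c d : ℝ} (hχ : IsCutoff χ S c d)
    (hf : ContDiff ℝ 1 f) (hS : Bornology.IsBounded S) :
    ∫ x, ‖fderiv ℝ (fun y => χ y • f y) x‖ ^ 2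
      ≤ 2 * ((∫ x, χ x * ‖fderiv ℝ f x‖ ^ 2) + (c / d) ^ 2 * ∫ x in S, ‖f x‖ ^ 2) := by
  have hχ₁ : ContDiff ℝ 1 χ := hχ.contDiff.of_le (by simp)
  have hcont : Continuous fun x => ‖fderiv ℝ χ x‖ ^ 2 * ‖f x‖ ^ 2 :=
    ((hχ₁.continuous_fderiv one_ne_zero).norm.pow 2).mul (hf.continuous.norm.pow 2)
  have hinner : Integrable fun x => χ x * ‖fderiv ℝ f x‖ ^ 2 :=
    (hχ₁.continuous.mul
      ((hf.continuous_fderiv one_ne_zero).norm.pow 2)).integrable_of_hasCompactSupport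
      hχ.hasCompactSupport.mul_right
  have houter : Integrable fun x => ‖fderiv ℝ χ x‖ ^ 2 * ‖f x‖ ^ 2 :=
    hcont.integrable_of_hasCompactSupport
      (HasCompactSupport.intro hχ.hasCompactSupport fun x hx => by
        simp [fderiv_of_notMem_tsupport ℝ hx])
  have houter_le : ∫ x, ‖fderiv ℝ χ x‖ ^ 2 * ‖f x‖ ^ 2
      ≤ (c / d) ^ 2 * ∫ x in S, ‖f x‖ ^ 2 := by
    rw [← integral_const_mul]
    refine (le_abs_self _).trans (abs_integral_le_setIntegral
      (continuous_const.mul (hf.continuous.norm.pow 2)) hS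
      (fun x hx => by simp [hχ.fderiv_eq_zero x hx]) fun x => ?_)
    rw [abs_of_nonneg (by positivity)]
    gcongr
    exact hχ.norm_fderiv_le x
  calc ∫ x, ‖fderiv ℝ (fun y => χ y • f y) x‖ ^ 2
      ≤ ∫ x, 2 * (χ x * ‖fderiv ℝ f x‖ ^ 2) + 2 * (‖fderiv ℝ χ x‖ ^ 2 * ‖f x‖ ^ 2) := by
        refine integral_mono_of_nonneg (Eventually.of_forall fun x => sq_nonneg _)
          ((hinner.const_mul 2).add (houter.const_mul 2)) (Eventually.of_forall fun x => ?_)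
        refine (norm_fderiv_smul_sq_le (hχ₁.differentiable one_ne_zero x)
          (hf.differentiable one_ne_zero x)).trans ?_
        dsimp only
        gcongr
        exact pow_le_of_le_one (hχ.nonneg x) (hχ.le_one x) two_ne_zero
    _ = 2 * ((∫ x, χ x * ‖fderiv ℝ f x‖ ^ 2) + ∫ x, ‖fderiv ℝ χ x‖ ^ 2 * ‖f x‖ ^ 2) := by
        rw [integral_add (hinner.const_mul 2) (houter.const_mul 2), integral_const_mul,
          integral_const_mul, mul_add]
    _ ≤ _ := mul_le_mul_of_nonneg_left (add_le_add_right houter_le _) zero_le_two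

theorem exists_local_sobolev_constant : ∃ K : ℝ, 0 ≤ K ∧ ∀ {F : Type} [NormedAddCommGroup F]
    [InnerProductSpace ℝ F] [CompleteSpace F] {f : R3 → F} {χ : R3 → ℝ} {S B : Set R3} {c d : ℝ},
    ContDiff ℝ 1 f → IsCutoff χ S c d → Bornology.IsBounded S → MeasurableSet B →
    (∀ x ∈ B, χ x = 1) →
    ∫ x in B, ‖f x‖ ^ 6
      ≤ K * ((∫ x, χ x * ‖fderiv ℝ f x‖ ^ 2) + (c / d) ^ 2 * ∫ x in S, ‖f x‖ ^ 2) ^ 3 := by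
  obtain ⟨K, hK, hsobolev⟩ := exists_sobolev_constant
  refine ⟨8 * K, by positivity, fun {F} _ _ _ f χ S B c d hf hχ hS hB hone => ?_⟩
  have hχf : ContDiff ℝ 1 fun x => χ x • f x := (hχ.contDiff.of_le (by simp)).smul hf
  have hcs : HasCompactSupport fun x => χ x • f x := hχ.hasCompactSupport.smul_right
  have hcs6 : HasCompactSupport fun x => ‖χ x • f x‖ ^ 6 :=
    HasCompactSupport.intro hcs fun x hx => by simp [image_eq_zero_of_notMem_tsupport hx]
  have hcut : ∫ x in B, ‖f x‖ ^ 6 = ∫ x in B, ‖χ x • f x‖ ^ 6 :=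
    setIntegral_congr_fun hB fun x hx => by simp [hone x hx]
  have hextend : ∫ x in B, ‖χ x • f x‖ ^ 6 ≤ ∫ x, ‖χ x • f x‖ ^ 6 :=
    setIntegral_le_integral ((hχf.continuous.norm.pow 6).integrable_of_hasCompactSupport hcs6)
      (Eventually.of_forall fun x => by positivity)
  have hgrad := pow_le_pow_left₀ (integral_nonneg fun x => sq_nonneg _)
    (hχ.integral_norm_fderiv_smul_sq_le hf hS) 3
  rw [mul_pow] at hgrad
  rw [hcut]
  linarith [hsobolev hχf hcs, mul_le_mul_of_nonneg_left hgrad hK]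

/-- The fields `u`, `v`, `θ` gathered into one vector field with values in a seven-dimensional
Euclidean space, to which the vector-valued Sobolev inequality applies. -/
def stateVector (u v : R3 → R3) (θ : R3 → ℝ) (x : R3) :
    EuclideanSpace ℝ (Fin 3 ⊕ Fin 3 ⊕ Unit) :=
  WithLp.toLp 2 (Sum.elim (u x) (Sum.elim (v x) fun _ => θ x))

section StateVector

variable {u v : R3 → R3} {θ : R3 → ℝ}

theorem norm_stateVector_sq (x : R3) : ‖stateVector u v θ x‖ ^ 2 = energyDensity u v θ x := by
  simp [stateVector, energyDensity, EuclideanSpace.norm_sq_eq, add_assoc]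

theorem contDiff_stateVector (hu : ContDiff ℝ ∞ u) (hv : ContDiff ℝ ∞ v) (hθ : ContDiff ℝ ∞ θ) :
    ContDiff ℝ ∞ (stateVector u v θ) := by
  rw [contDiff_euclidean]
  rintro (i | i | i) <;> simp only [stateVector, Sum.elim_inl, Sum.elim_inr] <;> fun_prop

theorem norm_fderiv_stateVector_sq_le (hu : ContDiff ℝ ∞ u) (hv : ContDiff ℝ ∞ v)
    (hθ : ContDiff ℝ ∞ θ) (x : R3) :
    ‖fderiv ℝ (stateVector u v θ) x‖ ^ 2 ≤ dissipation u v θ x := by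
  refine (norm_fderiv_sq_le_sum_gradSq
    (differentiableAt_of_contDiff_infty (contDiff_stateVector hu hv hθ))).trans_eq ?_
  simp [stateVector, dissipation, add_assoc]

theorem exists_integral_energyDensity_cube_le : ∃ K : ℝ, 0 ≤ K ∧
    ∀ {u v : R3 → R3} {θ χ : R3 → ℝ} {S B : Set R3} {c d : ℝ},
    ContDiff ℝ ∞ u → ContDiff ℝ ∞ v → ContDiff ℝ ∞ θ → IsCutoff χ S c d →
    Bornology.IsBounded S → MeasurableSet B → (∀ x ∈ B, χ x = 1) →
    ∫ x in B, energyDensity u v θ x ^ 3 ≤ K * ((∫ x, χ x * dissipation u v θ x)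
      + (c / d) ^ 2 * ∫ x in S, energyDensity u v θ x) ^ 3 := by
  obtain ⟨K, hK, hsobolev⟩ := exists_local_sobolev_constant
  refine ⟨K, hK, fun {u v θ χ S B c d} hu hv hθ hχ hS hB hone => ?_⟩
  have hw : ContDiff ℝ 1 (stateVector u v θ) := (contDiff_stateVector hu hv hθ).of_le (by simp)
  have hlocal := hsobolev hw hχ hS hB hone
  simp only [norm_stateVector_sq, show ∀ x, ‖stateVector u v θ x‖ ^ 6 = energyDensity u v θ x ^ 3
    from fun x => by rw [← norm_stateVector_sq, ← pow_mul]] at hlocal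
  refine hlocal.trans ?_
  have henergy : 0 ≤ ∫ x in S, energyDensity u v θ x :=
    integral_nonneg (energyDensity_nonneg u v θ)
  have hgrad : 0 ≤ ∫ x, χ x * ‖fderiv ℝ (stateVector u v θ) x‖ ^ 2 :=
    integral_nonneg fun x => mul_nonneg (hχ.nonneg x) (sq_nonneg _)
  have h_int : Integrable fun x => χ x * dissipation u v θ x :=
    Continuous.integrable_of_hasCompactSupport
      (hχ.contDiff.continuous.mul (continuous_dissipation hu hv hθ)) hχ.hasCompactSupport.mul_right
  have hmono : ∫ x, χ x * ‖fderiv ℝ (stateVector u v θ) x‖ ^ 2 ≤ ∫ x, χ x * dissipation u v θ x :=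
    integral_mono_of_nonneg
      (Eventually.of_forall fun x => mul_nonneg (hχ.nonneg x) (sq_nonneg _)) h_int
      (Eventually.of_forall fun x =>
        mul_le_mul_of_nonneg_left (norm_fderiv_stateVector_sq_le hu hv hθ x) (hχ.nonneg x))
  gcongr

end StateVector

end Sobolev

section Holder

variable {S : Set R3} {f g : R3 → ℝ}

theorem memLp_restrict_of_continuous_of_isBounded (hf : Continuous f) (hS : Bornology.IsBounded S)
    (p : ENNReal) : MemLp f p (volume.restrict S) := by
  obtain ⟨C, hC⟩ := hS.isCompact_closure.exists_bound_of_continuousOn hf.continuousOn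
  have : IsFiniteMeasure (volume.restrict (closure S)) :=
    isFiniteMeasure_restrict.2 hS.isCompact_closure.measure_ne_top
  exact (MemLp.of_bound hf.aestronglyMeasurable C
    (ae_restrict_of_forall_mem isClosed_closure.measurableSet hC)).mono_measure
    (Measure.restrict_mono_set _ subset_closure)

theorem lpS_nonneg (f : R3 → ℝ) (p : ℝ) (S : Set R3) : 0 ≤ lpS f p S := by
  unfold lpS
  positivity

theorem lpS_of_nonneg (hf : ∀ x, 0 ≤ f x) (p : ℝ) (S : Set R3) :
    lpS f p S = (∫ x in S, f x ^ p) ^ (1 / p) := by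
  simp only [lpS, abs_of_nonneg (hf _)]

theorem setIntegral_mul_le_lpS_mul_lpS (hf : Continuous f) (hg : Continuous g)
    (hS : Bornology.IsBounded S) {p q : ℝ} (hpq : p.HolderConjugate q) :
    ∫ x in S, |f x| * |g x| ≤ lpS f p S * lpS g q S :=
  integral_mul_le_Lp_mul_Lq_of_nonneg hpq (Eventually.of_forall fun _ => abs_nonneg _)
    (Eventually.of_forall fun _ => abs_nonneg _)
    (memLp_restrict_of_continuous_of_isBounded hf.abs hS _)
    (memLp_restrict_of_continuous_of_isBounded hg.abs hS _)

theorem setIntegral_rpow_mul_rpow_le (hf : Continuous f) (hg : Continuous g) (hf₀ : ∀ x, 0 ≤ f x)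
    (hg₀ : ∀ x, 0 ≤ g x) (hS : Bornology.IsBounded S) {t : ℝ} (ht₀ : 0 < t) (ht₁ : t < 1) :
    ∫ x in S, f x ^ t * g x ^ (1 - t) ≤ (∫ x in S, f x) ^ t * (∫ x in S, g x) ^ (1 - t) := by
  have ht₁' : 0 < 1 - t := sub_pos.2 ht₁
  have hconj : (1 / t).HolderConjugate (1 / (1 - t)) :=
    Real.holderConjugate_iff.2 ⟨by rwa [lt_div_iff₀ ht₀, one_mul], by simp⟩
  have hholder := integral_mul_le_Lp_mul_Lq_of_nonneg hconj
    (Eventually.of_forall fun x => Real.rpow_nonneg (hf₀ x) t)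
    (Eventually.of_forall fun x => Real.rpow_nonneg (hg₀ x) (1 - t))
    (memLp_restrict_of_continuous_of_isBounded (hf.rpow_const fun _ => Or.inr ht₀.le) hS _)
    (memLp_restrict_of_continuous_of_isBounded (hg.rpow_const fun _ => Or.inr ht₁'.le) hS _)
  simpa only [one_div, ← Real.rpow_mul (hf₀ _), ← Real.rpow_mul (hg₀ _), inv_inv,
    mul_inv_cancel₀ ht₀.ne', mul_inv_cancel₀ ht₁'.ne', Real.rpow_one] using hholder

end Holder

/-- The integral `∫_{|z| ≤ 1} f(x - s z) dz`, that is, up to a constant factor, the mean of `f` over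
the ball of radius `s` about `x`. -/
def ballMean (f : R3 → ℝ) (s : ℝ) (x : R3) : ℝ := ∫ z in closedBall 0 1, f (x - s • z)

section BallMean

variable {f : R3 → ℝ} {S T : Set R3} {s : ℝ} {x : R3}

theorem ballMean_nonneg (hf : ∀ x, 0 ≤ f x) (s : ℝ) (x : R3) : 0 ≤ ballMean f s x :=
  integral_nonneg fun _ => hf _

theorem continuous_ballMean (hf : Continuous f) (s : ℝ) : Continuous (ballMean f s) :=
  continuous_parametric_integral_of_continuous (f := fun x z => f (x - s • z))
    (by unfold Function.uncurry; fun_prop) (isCompact_closedBall 0 1)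

theorem ballMean_le_rpow_ballMean_rpow (hf : Continuous f) (hf₀ : ∀ x, 0 ≤ f x) {m : ℝ}
    (hm : 1 < m) : ballMean f s x ≤ volume.real (closedBall (0 : R3) 1) ^ (1 - 1 / m)
      * ballMean (fun y => f y ^ m) s x ^ (1 / m) := by
  have hm₀ : 0 < m := by linarith
  have ht : 0 < 1 - 1 / m := by rw [sub_pos, div_lt_one hm₀]; exact hm
  have hholder := setIntegral_rpow_mul_rpow_le (S := closedBall 0 1) (f := fun _ => 1)
    (g := fun z => f (x - s • z) ^ m) continuous_const
    ((hf.comp (by fun_prop)).rpow_const fun _ => Or.inr hm₀.le) (fun _ => zero_le_one)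
    (fun _ => Real.rpow_nonneg (hf₀ _) _) isBounded_closedBall ht (by linarith [one_div_pos.2 hm₀])
  simp only [Real.one_rpow, one_mul, sub_sub_cancel, ← Real.rpow_mul (hf₀ _),
    mul_one_div_cancel hm₀.ne', Real.rpow_one, setIntegral_const, smul_eq_mul, mul_one] at hholder
  exact hholder

theorem setIntegral_comp_le_of_mapsTo {φ : R3 → R3} (hφ : MeasurePreserving φ)
    (hφe : MeasurableEmbedding φ) (hST : Set.MapsTo φ S T) (hf₀ : ∀ x, 0 ≤ f x)
    (hf : IntegrableOn f T) : ∫ x in S, f (φ x) ≤ ∫ y in T, f y := by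
  rw [← hφ.setIntegral_preimage_emb hφe f T]
  exact setIntegral_mono_set ((hφ.integrableOn_comp_preimage hφe).2 hf)
    (Eventually.of_forall fun x => hf₀ _) (LE.le.eventuallyLE hST)

theorem ballMean_le (hf : Continuous f) (hf₀ : ∀ x, 0 ≤ f x) (hT : Bornology.IsBounded T)
    (hs : 0 < s) (hx : ∀ z ∈ closedBall 0 1, x - s • z ∈ T) :
    ballMean f s x ≤ (s ^ 3)⁻¹ * ∫ y in T, f y := by
  have hscale := Measure.setIntegral_comp_smul_of_pos volume (fun y => f (x - y))
    (closedBall (0 : R3) 1) hs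
  rw [finrank_euclideanSpace_fin, smul_eq_mul] at hscale
  rw [ballMean, hscale]
  gcongr
  refine setIntegral_comp_le_of_mapsTo (Measure.measurePreserving_sub_left volume x)
    (measurableEmbedding_subLeft x) ?_ hf₀ (integrableOn_of_continuous_of_isBounded hf hT)
  rintro _ ⟨z, hz, rfl⟩
  exact hx z hz

theorem setIntegral_ballMean_le (hf : Continuous f) (hf₀ : ∀ x, 0 ≤ f x)
    (hS : Bornology.IsBounded S) (hT : Bornology.IsBounded T)
    (hST : ∀ x ∈ S, ∀ z ∈ closedBall 0 1, x - s • z ∈ T) :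
    ∫ x in S, ballMean f s x ≤ volume.real (closedBall (0 : R3) 1) * ∫ y in T, f y := by
  have h_int : Integrable (Function.uncurry fun x z => f (x - s • z))
      ((volume.restrict S).prod (volume.restrict (closedBall 0 1))) := by
    rw [Measure.prod_restrict]
    exact integrableOn_of_continuous_of_isBounded (by unfold Function.uncurry; fun_prop)
      (hS.prod isBounded_closedBall)
  have htranslate : ∀ z ∈ closedBall 0 1, ∫ x in S, f (x - s • z) ≤ ∫ y in T, f y := fun z hz =>
    setIntegral_comp_le_of_mapsTo (measurePreserving_sub_right volume (s • z))
      (measurableEmbedding_subRight _) (fun x hx => hST x hx z hz) hf₀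
      (integrableOn_of_continuous_of_isBounded hf hT)
  unfold ballMean
  rw [integral_integral_swap h_int]
  refine (setIntegral_mono_on h_int.integral_prod_right
    (integrableOn_of_continuous_of_isBounded continuous_const isBounded_closedBall)
    measurableSet_closedBall htranslate).trans_eq ?_
  rw [setIntegral_const, smul_eq_mul]

theorem ballMean_rpow_le (hf : Continuous f) (hf₀ : ∀ x, 0 ≤ f x) (hT : Bornology.IsBounded T)
    (hs : 0 < s) {m q : ℝ} (hm : 1 < m) (hmq : m ≤ q)
    (hx : ∀ z ∈ closedBall 0 1, x - s • z ∈ T) :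
    ballMean f s x ^ q ≤ (volume.real (closedBall (0 : R3) 1) ^ (1 - 1 / m)) ^ q
      * ((s ^ 3)⁻¹ * ∫ y in T, f y ^ m) ^ (q / m - 1) * ballMean (fun y => f y ^ m) s x := by
  have hm₀ : 0 < m := by linarith
  have hq₀ : 0 < q := by linarith
  have hfm : ∀ y, 0 ≤ f y ^ m := fun y => Real.rpow_nonneg (hf₀ y) m
  have hmean := ballMean_nonneg hfm s x
  have hexp : 0 ≤ q / m - 1 := by rw [sub_nonneg, one_le_div hm₀]; exact hmq
  calc ballMean f s x ^ q
      ≤ (volume.real (closedBall (0 : R3) 1) ^ (1 - 1 / m)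
          * ballMean (fun y => f y ^ m) s x ^ (1 / m)) ^ q :=
        Real.rpow_le_rpow (ballMean_nonneg hf₀ s x) (ballMean_le_rpow_ballMean_rpow hf hf₀ hm)
          hq₀.le
    _ = (volume.real (closedBall (0 : R3) 1) ^ (1 - 1 / m)) ^ q
          * (ballMean (fun y => f y ^ m) s x ^ (q / m - 1)
            * ballMean (fun y => f y ^ m) s x) := by
        rw [Real.mul_rpow (by positivity) (by positivity), ← Real.rpow_mul hmean,
          ← Real.rpow_add_one' hmean (by rw [sub_add_cancel]; positivity), sub_add_cancel,
          one_div_mul_eq_div]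
    _ ≤ _ := by
        rw [mul_assoc]
        gcongr
        exact ballMean_le (hf.rpow_const fun _ => Or.inr hm₀.le) hfm hT hs hx

theorem lpS_ballMean_le (hf : Continuous f) (hf₀ : ∀ x, 0 ≤ f x) (hS : MeasurableSet S)
    (hSb : Bornology.IsBounded S) (hT : Bornology.IsBounded T) (hs : 0 < s) {m q : ℝ} (hm : 1 < m)
    (hmq : m ≤ q) (hST : ∀ x ∈ S, ∀ z ∈ closedBall 0 1, x - s • z ∈ T) :
    lpS (ballMean f s) q S ≤ volume.real (closedBall (0 : R3) 1) ^ (1 - 1 / m + 1 / q)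
      * s ^ (-3 * (1 / m - 1 / q)) * lpS f m T := by
  have hm₀ : 0 < m := by linarith
  have hq₀ : 0 < q := by linarith
  have hfm : ∀ y, 0 ≤ f y ^ m := fun y => Real.rpow_nonneg (hf₀ y) m
  have hfmc : Continuous fun y => f y ^ m := hf.rpow_const fun _ => Or.inr hm₀.le
  have hbpos : 0 < volume.real (closedBall (0 : R3) 1) :=
    ENNReal.toReal_pos (measure_closedBall_pos _ _ one_pos).ne' measure_closedBall_lt_top.ne
  have hI : 0 ≤ ∫ y in T, f y ^ m := integral_nonneg hfm
  have h_int : ∫ x in S, ballMean f s x ^ q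
      ≤ (volume.real (closedBall (0 : R3) 1) ^ (1 - 1 / m)) ^ q
        * ((s ^ 3)⁻¹ * ∫ y in T, f y ^ m) ^ (q / m - 1)
        * (volume.real (closedBall (0 : R3) 1) * ∫ y in T, f y ^ m) := by
    refine (setIntegral_mono_on
      (integrableOn_of_continuous_of_isBounded
        ((continuous_ballMean hf s).rpow_const fun _ => Or.inr hq₀.le) hSb)
      ((integrableOn_of_continuous_of_isBounded (continuous_ballMean hfmc s) hSb).const_mul _)
      hS fun x hx => ballMean_rpow_le hf hf₀ hT hs hm hmq (hST x hx)).trans ?_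
    rw [integral_const_mul]
    gcongr
    exact setIntegral_ballMean_le hfmc hfm hSb hT hST
  rw [lpS_of_nonneg (ballMean_nonneg hf₀ s), lpS_of_nonneg hf₀]
  refine (Real.rpow_le_rpow (integral_nonneg fun x => Real.rpow_nonneg (ballMean_nonneg hf₀ s x) q)
    h_int (by positivity)).trans_eq ?_
  generalize ∫ y in T, f y ^ m = I at hI ⊢
  generalize volume.real (closedBall (0 : R3) 1) = b at hbpos ⊢
  have hexp : (q / m - 1) * (1 / q) = 1 / m - 1 / q := by field_simp
  have hscale : ((s ^ 3)⁻¹ : ℝ) ^ (1 / m - 1 / q) = s ^ (-3 * (1 / m - 1 / q)) := by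
    rw [← Real.rpow_natCast, ← Real.rpow_neg hs.le, ← Real.rpow_mul hs.le]
    norm_num
  have hImul : I ^ (1 / m - 1 / q) * I ^ (1 / q) = I ^ (1 / m) := by
    rw [← Real.rpow_add' hI (by simpa using hm₀.ne'), sub_add_cancel]
  rw [Real.mul_rpow (by positivity) (by positivity), Real.mul_rpow (by positivity) (by positivity),
    Real.mul_rpow hbpos.le hI, ← Real.rpow_mul (by positivity), mul_one_div_cancel hq₀.ne',
    Real.rpow_one, ← Real.rpow_mul (by positivity), hexp, Real.mul_rpow (by positivity) hI, hscale,
    Real.rpow_add hbpos, ← hImul]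
  ring

theorem setIntegral_mul_ballMean_le {g : R3 → ℝ} (hg : Continuous g) (hf : Continuous f)
    (hf₀ : ∀ x, 0 ≤ f x) (hS : MeasurableSet S) (hSb : Bornology.IsBounded S)
    (hT : Bornology.IsBounded T) (hs : 0 < s) {p : ℝ} (hp₁ : 1 < p) (hp₂ : p ≤ 3)
    (hST : ∀ x ∈ S, ∀ z ∈ closedBall 0 1, x - s • z ∈ T) :
    ∫ x in S, |g x| * ballMean f s x ≤ volume.real (closedBall (0 : R3) 1) ^ (4 / 3 - 1 / p)
      * s ^ (-(3 / p - 1)) * lpS g p S * lpS f (3 / 2) T := by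
  have hpq : p.HolderConjugate (p / (p - 1)) := Real.HolderConjugate.conjExponent hp₁
  have hq : 1 / (p / (p - 1)) = 1 - 1 / p := by field_simp
  have hqm : 3 / 2 ≤ p / (p - 1) := by rw [le_div_iff₀ (by linarith)]; linarith
  have hmean := lpS_ballMean_le hf hf₀ hS hSb hT hs (m := 3 / 2) (by norm_num) hqm hST
  have hholder := setIntegral_mul_le_lpS_mul_lpS hg (continuous_ballMean hf s) hSb hpq
  simp only [abs_of_nonneg (ballMean_nonneg hf₀ s _)] at hholder
  rw [hq, show 1 - 1 / (3 / 2) + (1 - 1 / p) = 4 / 3 - 1 / p by ring,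
    show -3 * (1 / (3 / 2) - (1 - 1 / p)) = -(3 / p - 1) by ring] at hmean
  linarith [mul_le_mul_of_nonneg_left hmean (lpS_nonneg g p S)]

end BallMean

/-- The scaled convolution `∫ w(z) g(x - s z) dz`; when `w` is a mollifier it regularizes `g` at the
scale `s`. -/
def scaledConv (w g : R3 → ℝ) (s : ℝ) (x : R3) : ℝ := ∫ z, w z * g (x - s • z)

section ScaledConv

variable {w g : R3 → ℝ} {s : ℝ} {x : R3}

theorem integrable_mul_comp_sub_smul (hw : Continuous w) (hc : HasCompactSupport w)
    (hg : Continuous g) (s : ℝ) (x : R3) : Integrable fun z => w z * g (x - s • z) :=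
  Continuous.integrable_of_hasCompactSupport (by fun_prop) hc.mul_right

theorem continuous_scaledConv (hw : Continuous w) (hc : HasCompactSupport w)
    (hg : Continuous g) : Continuous fun y : ℝ × R3 => scaledConv w g y.1 y.2 := by
  have hset : ∀ y : ℝ × R3,
      scaledConv w g y.1 y.2 = ∫ z in tsupport w, w z * g (y.2 - y.1 • z) := fun y =>
    (setIntegral_eq_integral_of_forall_compl_eq_zero fun z hz => by
      rw [image_eq_zero_of_notMem_tsupport hz, zero_mul]).symm
  simp only [hset]
  exact continuous_parametric_integral_of_continuous
    (f := fun (y : ℝ × R3) z => w z * g (y.2 - y.1 • z)) (by unfold Function.uncurry; fun_prop) hc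

theorem scaledConv_sub {g' : R3 → ℝ} (hw : Continuous w) (hc : HasCompactSupport w)
    (hg : Continuous g) (hg' : Continuous g') :
    scaledConv w (fun y => g y - g' y) s x = scaledConv w g s x - scaledConv w g' s x := by
  simp only [scaledConv, mul_sub]
  exact integral_sub (integrable_mul_comp_sub_smul hw hc hg s x)
    (integrable_mul_comp_sub_smul hw hc hg' s x)

theorem scaledConv_sum {ι : Type*} (t : Finset ι) {g : ι → R3 → ℝ} (hw : Continuous w)
    (hc : HasCompactSupport w) (hg : ∀ i, Continuous (g i)) :
    scaledConv w (fun y => ∑ i ∈ t, g i y) s x = ∑ i ∈ t, scaledConv w (g i) s x := by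
  simp only [scaledConv, Finset.mul_sum]
  exact integral_finsetSum _ fun i _ => integrable_mul_comp_sub_smul hw hc (hg i) s x

theorem mul_scaledConv_pd (hw : ContDiff ℝ 1 w) (hg : ContDiff ℝ 1 g) (hc : HasCompactSupport w)
    (j : Fin 3) (s : ℝ) (x : R3) : s * scaledConv w (pd g j) s x = scaledConv (pd w j) g s x := by
  have hparts := integral_mul_pd_eq_neg hw (g := fun z => g (x - s • z)) (by fun_prop) hc j
  rw [← neg_eq_iff_eq_neg] at hparts
  rw [scaledConv, scaledConv, ← hparts, ← integral_const_mul, ← integral_neg]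
  congr 1 with z
  rw [pd_comp_sub_smul (hg.differentiable one_ne_zero _)]
  ring

theorem sq_mul_scaledConv_pd_pd (hw : ContDiff ℝ ∞ w) (hg : ContDiff ℝ ∞ g)
    (hc : HasCompactSupport w) (j : Fin 3) (s : ℝ) (x : R3) :
    s ^ 2 * scaledConv w (pd (pd g j) j) s x = scaledConv (pd (pd w j) j) g s x := by
  rw [pow_two, mul_assoc, mul_scaledConv_pd (hw.of_le (by simp))
    ((contDiff_pd hg j).of_le (by simp)) hc, mul_scaledConv_pd ((contDiff_pd hw j).of_le (by simp))
    (hg.of_le (by simp)) (hasCompactSupport_pd hc j)]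

theorem abs_scaledConv_le {G : R3 → ℝ} {c C : ℝ} (hzero : ∀ z ∉ closedBall (0 : R3) 1, w z = 0)
    (hw : ∀ z, |w z| ≤ c) (hG : Continuous G) (hgG : ∀ x, |g x| ≤ C * G x) :
    |scaledConv w g s x| ≤ c * C * ballMean G s x := by
  rw [ballMean, ← integral_const_mul]
  refine abs_integral_le_setIntegral (by fun_prop) isBounded_closedBall
    (fun z hz => by rw [hzero z hz, zero_mul]) fun z => ?_
  rw [abs_mul, mul_assoc]
  exact mul_le_mul (hw z) (hgG _) (abs_nonneg _) ((abs_nonneg _).trans (hw z))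

theorem hasDerivAt_comp_of_contDiff (hg : ContDiff ℝ ∞ g) {γ : ℝ → R3} {γ' : R3} {t : ℝ}
    (hγ : HasDerivAt γ γ' t) : HasDerivAt (fun t => g (γ t)) (∑ i, γ' i * pd g i (γ t)) t := by
  rw [← fderiv_apply_eq_sum_pd]
  exact (differentiableAt_of_contDiff_infty hg).hasFDerivAt.comp_hasDerivAt t hγ

theorem hasFDerivAt_scaledConv (hw : Continuous w) (hc : HasCompactSupport w)
    (hg : ContDiff ℝ ∞ g) (s : ℝ) (x : R3) : HasFDerivAt (scaledConv w g s)
      (∑ i, scaledConv w (pd g i) s x • (EuclideanSpace.proj i : R3 →L[ℝ] ℝ)) x := by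
  have hfderiv : Continuous (fderiv ℝ g) := hg.continuous_fderiv (by simp)
  have hmain := hasFDerivAt_integral_smul_of_hasCompactSupport (μ := volume) hw hc
    (Q := fun x z => g (x - s • z)) (Q' := fun x z => fderiv ℝ g (x - s • z))
    (by unfold Function.uncurry; fun_prop) (by unfold Function.uncurry; fun_prop)
    (fun x z => (differentiableAt_of_contDiff_infty hg).hasFDerivAt.comp x
      ((hasFDerivAt_id x).sub_const (s • z))) x
  refine hmain.congr_fderiv (ContinuousLinearMap.ext fun v => ?_)
  rw [ContinuousLinearMap.integral_apply ((hw.smul (by fun_prop)).integrable_of_hasCompactSupport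
    hc.smul_right)]
  simp only [smul_apply, fderiv_apply_eq_sum_pd, smul_eq_mul, Finset.mul_sum,
    mul_left_comm (w _)]
  rw [integral_finsetSum _ fun i _ => (integrable_mul_comp_sub_smul hw hc
    (continuous_pd (hg.of_le (by simp)) i) s x).const_mul _]
  simp [integral_const_mul, scaledConv, mul_comm]

end ScaledConv

theorem exists_forall_abs_le_of_hasCompactSupport {ι X : Type*} [Finite ι] [TopologicalSpace X]
    {w : ι → X → ℝ} (hw : ∀ i, Continuous (w i)) (hc : ∀ i, HasCompactSupport (w i)) :
    ∃ c : ℝ, 0 ≤ c ∧ ∀ i x, |w i x| ≤ c := by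
  choose C hC using fun i => (hw i).bounded_above_of_compact_support (hc i)
  obtain ⟨c, hCc⟩ := (Set.finite_range C).bddAbove
  exact ⟨max c 0, le_max_right _ _, fun i x =>
    (hC i x).trans ((hCc ⟨i, rfl⟩).trans (le_max_left _ _))⟩

theorem pd_eq_zero_of_forall_notMem {K : Set R3} {f : R3 → ℝ} (hK : IsClosed K)
    (hf : ∀ z ∉ K, f z = 0) (j : Fin 3) : ∀ z ∉ K, pd f j z = 0 := fun _ hz =>
  pd_eq_zero_of_eventuallyEq_const
    (Filter.mem_of_superset (hK.isOpen_compl.mem_nhds hz) fun y hy => hf y hy) j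

namespace IsMollifier

variable {η H : R3 → ℝ} (hη : IsMollifier η H)
include hη

theorem hasCompactSupport_kernel : HasCompactSupport η :=
  HasCompactSupport.intro (isCompact_closedBall 0 1) hη.kernel_eq_zero

theorem hasCompactSupport_potential : HasCompactSupport H :=
  HasCompactSupport.intro (isCompact_closedBall 0 1) hη.potential_eq_zero

theorem pd_kernel_eq_zero (i : Fin 3) : ∀ z ∉ closedBall (0 : R3) 1, pd η i z = 0 :=
  pd_eq_zero_of_forall_notMem isClosed_closedBall hη.kernel_eq_zero i

theorem pd_potential_eq_zero (i : Fin 3) : ∀ z ∉ closedBall (0 : R3) 1, pd H i z = 0 :=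
  pd_eq_zero_of_forall_notMem isClosed_closedBall hη.potential_eq_zero i

theorem continuous_pd_potential (i : Fin 3) : Continuous (pd H i) :=
  (contDiff_pd hη.contDiff_potential i).continuous

theorem scaledConv_zero (g : R3 → ℝ) (x : R3) : scaledConv η g 0 x = g x := by
  simp only [scaledConv, zero_smul, sub_zero, integral_mul_const, hη.integral_kernel, one_mul]

end IsMollifier

/-- The derivative with respect to the scale `s` of the mollification of `g` by the mollifier with
potential `H`. -/
def scaleDeriv (H g : R3 → ℝ) (s : ℝ) (x : R3) : ℝ := ∑ i, scaledConv (pd H i) (pd g i) s x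

section ScaleDeriv

variable {η H g : R3 → ℝ}

theorem continuous_scaleDeriv (hη : IsMollifier η H) (hg : ContDiff ℝ ∞ g) :
    Continuous fun y : ℝ × R3 => scaleDeriv H g y.1 y.2 :=
  continuous_finsetSum _ fun i _ => continuous_scaledConv (hη.continuous_pd_potential i)
    (hasCompactSupport_pd hη.hasCompactSupport_potential i) (contDiff_pd hg i).continuous

theorem hasDerivAt_scaledConv (hη : IsMollifier η H) (hg : ContDiff ℝ ∞ g) (s : ℝ) (x : R3) :
    HasDerivAt (fun s => scaledConv η g s x) (scaleDeriv H g s x) s := by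
  have hη₀ := hη.contDiff_kernel
  have hγ : ∀ (s : ℝ) (z : R3), HasDerivAt (fun s => x - s • z) (-z) s := fun s z => by
    simpa using ((hasDerivAt_id s).smul_const z).const_sub x
  have hderiv := hasDerivAt_integral_mul_of_hasCompactSupport (μ := volume) hη₀.continuous
    hη.hasCompactSupport_kernel
    (Q := fun s z => g (x - s • z)) (Q' := fun s z => ∑ i, (-z) i * pd g i (x - s • z))
    (by unfold Function.uncurry; fun_prop)
    (by unfold Function.uncurry; fun_prop (disch := simp))
    (fun s z => hasDerivAt_comp_of_contDiff hg (hγ s z)) s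
  refine hderiv.congr_deriv ?_
  simp only [scaleDeriv, scaledConv, Finset.mul_sum]
  rw [← integral_finsetSum _ fun i _ => integrable_mul_comp_sub_smul
    (hη.continuous_pd_potential i) (hasCompactSupport_pd hη.hasCompactSupport_potential i)
    (contDiff_pd hg i).continuous s x]
  simp only [hη.pd_potential, PiLp.neg_apply, neg_mul, mul_neg, mul_assoc]

theorem hasDerivAt_integral_mul_scaledConv (hη : IsMollifier η H) (hg : ContDiff ℝ ∞ g)
    {f : R3 → ℝ} (hf : Continuous f) (hfc : HasCompactSupport f) (s : ℝ) :
    HasDerivAt (fun s => ∫ x, f x * scaledConv η g s x) (∫ x, f x * scaleDeriv H g s x) s :=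
  hasDerivAt_integral_mul_of_hasCompactSupport (Q := scaledConv η g) (Q' := scaleDeriv H g) hf hfc
    (continuous_scaledConv hη.contDiff_kernel.continuous hη.hasCompactSupport_kernel hg.continuous)
    (continuous_scaleDeriv hη hg) (fun s x => hasDerivAt_scaledConv hη hg s x) s

end ScaleDeriv

theorem sum_pd_lap_eq_zero {w : R3 → R3} (hw : ContDiff ℝ ∞ w)
    (hdiv : ∀ x, ∑ i, pd (fun y => w y i) i x = 0) (x : R3) :
    ∑ i, pd (lap fun y => w y i) i x = 0 := by
  have hcomm : ∀ i, pd (lap fun y => w y i) i x = lap (pd (fun y => w y i) i) x := fun i => by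
    have hinner : ∀ j, pd (pd (fun y => w y i) j) i = pd (pd (fun y => w y i) i) j := fun j =>
      funext (pd_comm (contDiff_infty.1 (by fun_prop) 2) j i)
    unfold lap
    rw [pd_sum _ (by fun_prop)]
    exact Finset.sum_congr rfl fun j _ => by
      rw [pd_comm (contDiff_infty.1 (by fun_prop) 2), hinner]
  simp only [hcomm]
  rw [← lap_sum _ (by fun_prop), show (fun y => ∑ i, pd (fun y => w y i) i y) = fun _ => 0 from
    funext hdiv]
  have hpd : pd (fun _ : R3 => (0 : ℝ)) = fun _ _ => 0 := funext₂ fun j x => by simp [pd]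
  simp [lap, hpd]

/-- The stress tensor `u ⊗ u + v ⊗ v` whose divergence balances `Δu - ∇π`. -/
def inertialStress (u v : R3 → R3) (i j : Fin 3) (x : R3) : ℝ := u x j * u x i + v x j * v x i

/-- The product `√e √D` of the square roots of the energy density and the dissipation; it controls
the first derivatives of the inertial stress. -/
def mixedDensity (u v : R3 → R3) (θ : R3 → ℝ) (x : R3) : ℝ :=
  √(energyDensity u v θ x) * √(dissipation u v θ x)

section Pressure

variable {u v : R3 → R3} {pr θ η H : R3 → ℝ} {s c : ℝ}

theorem contDiff_inertialStress (hu : ContDiff ℝ ∞ u) (hv : ContDiff ℝ ∞ v) (i j : Fin 3) :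
    ContDiff ℝ ∞ (inertialStress u v i j) := by
  unfold inertialStress
  fun_prop

theorem mixedDensity_nonneg (u v : R3 → R3) (θ : R3 → ℝ) (x : R3) : 0 ≤ mixedDensity u v θ x := by
  unfold mixedDensity
  positivity

theorem abs_apply_mul_apply_le (a : R3) (i j : Fin 3) : |a j * a i| ≤ ‖a‖ ^ 2 := by
  rw [abs_mul, pow_two]
  exact mul_le_mul (PiLp.norm_apply_le a j) (PiLp.norm_apply_le a i) (abs_nonneg _) (norm_nonneg _)

theorem abs_inertialStress_le (u v : R3 → R3) (θ : R3 → ℝ) (i j : Fin 3) (x : R3) :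
    |inertialStress u v i j x| ≤ energyDensity u v θ x := by
  refine (abs_add_le _ _).trans ?_
  unfold energyDensity
  linarith [abs_apply_mul_apply_le (u x) i j, abs_apply_mul_apply_le (v x) i j, sq_nonneg (θ x)]

theorem pd_sq_le_sum_gradSq (w : R3 → R3) (i j : Fin 3) (x : R3) :
    pd (fun y => w y i) j x ^ 2 ≤ ∑ i, gradSq (fun y => w y i) x :=
  (Finset.single_le_sum (f := fun j => pd (fun y => w y i) j x ^ 2) (fun _ _ => sq_nonneg _)
    (Finset.mem_univ j)).trans (Finset.single_le_sum (f := fun i => gradSq (fun y => w y i) x)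
      (fun _ _ => Finset.sum_nonneg fun _ _ => sq_nonneg _) (Finset.mem_univ i))

theorem abs_mul_pd_le_mixedDensity (u v : R3 → R3) (θ : R3 → ℝ) {w : R3 → R3}
    (hw : w = u ∨ w = v) (i j k : Fin 3) (x : R3) :
    |w x k * pd (fun y => w y i) j x| ≤ mixedDensity u v θ x := by
  have hsq := pow_le_pow_left₀ (norm_nonneg _) (PiLp.norm_apply_le (w x) k) 2
  rw [Real.norm_eq_abs, sq_abs] at hsq
  have hgrad := pd_sq_le_sum_gradSq w i j x
  have hgradSq : ∀ f : R3 → ℝ, 0 ≤ gradSq f x := fun f => Finset.sum_nonneg fun _ _ => sq_nonneg _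
  have hgrad_u : 0 ≤ ∑ i, gradSq (fun y => u y i) x := Finset.sum_nonneg fun _ _ => hgradSq _
  have hgrad_v : 0 ≤ ∑ i, gradSq (fun y => v y i) x := Finset.sum_nonneg fun _ _ => hgradSq _
  rw [abs_mul, mixedDensity]
  refine mul_le_mul (Real.abs_le_sqrt ?_) (Real.abs_le_sqrt ?_) (abs_nonneg _) (Real.sqrt_nonneg _)
  · unfold energyDensity
    rcases hw with hw | hw <;> rw [hw] at hsq ⊢ <;>
      linarith [sq_nonneg ‖u x‖, sq_nonneg ‖v x‖, sq_nonneg (θ x)]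
  · unfold dissipation
    rcases hw with hw | hw <;> rw [hw] at hgrad ⊢ <;> linarith [hgradSq θ]

theorem abs_pd_inertialStress_le (hu : ContDiff ℝ ∞ u) (hv : ContDiff ℝ ∞ v) (θ : R3 → ℝ)
    (i j : Fin 3) (x : R3) :
    |pd (inertialStress u v i j) j x| ≤ 4 * mixedDensity u v θ x := by
  unfold inertialStress
  rw [pd_add (by fun_prop) (by fun_prop), pd_mul (by fun_prop) (by fun_prop),
    pd_mul (by fun_prop) (by fun_prop), mul_comm (pd _ j x) (u x i), mul_comm (pd _ j x) (v x i)]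
  refine (abs_add_le _ _).trans ((add_le_add (abs_add_le _ _) (abs_add_le _ _)).trans ?_)
  linarith [abs_mul_pd_le_mixedDensity u v θ (Or.inl rfl) i j j x,
    abs_mul_pd_le_mixedDensity u v θ (Or.inl rfl) j j i x,
    abs_mul_pd_le_mixedDensity u v θ (Or.inr rfl) i j j x,
    abs_mul_pd_le_mixedDensity u v θ (Or.inr rfl) j j i x]

theorem abs_scaledConv_pd_inertialStress_le {w : R3 → ℝ} (hu : ContDiff ℝ ∞ u)
    (hv : ContDiff ℝ ∞ v) (hθ : ContDiff ℝ ∞ θ) (hw : ContDiff ℝ ∞ w)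
    (hzero : ∀ z ∉ closedBall (0 : R3) 1, w z = 0) (hc : ∀ j z, |pd w j z| ≤ c) (hs : 0 < s)
    (i j : Fin 3) (x : R3) :
    |scaledConv w (pd (inertialStress u v i j) j) s x|
      ≤ c * s⁻¹ * ballMean (energyDensity u v θ) s x := by
  have hbound := abs_scaledConv_le (s := s) (x := x) (C := 1)
    (pd_eq_zero_of_forall_notMem isClosed_closedBall hzero j) (hc j)
    (contDiff_energyDensity hu hv hθ).continuous
    (fun x => by simpa using abs_inertialStress_le u v θ i j x)
  rw [← mul_scaledConv_pd (hw.of_le (by simp)) ((contDiff_inertialStress hu hv i j).of_le (by simp))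
    (HasCompactSupport.intro (isCompact_closedBall 0 1) hzero), abs_mul, abs_of_pos hs,
    mul_one] at hbound
  rwa [mul_right_comm, ← div_eq_mul_inv, le_div_iff₀' hs]

namespace SmoothTCM

variable (h : SmoothTCM u v pr θ)
include h

theorem continuous_mixedDensity : Continuous (mixedDensity u v θ) :=
  h.continuous_energyDensity.sqrt.mul
    (continuous_dissipation h.contDiff_u h.contDiff_v h.contDiff_θ).sqrt

theorem pd_pressure (i : Fin 3) (x : R3) :
    pd pr i x = lap (fun y => u y i) x - ∑ j, pd (inertialStress u v i j) j x := by
  have ⟨hu, hv, _, _, hmom, _, _, hdiv⟩ := h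
  have hstress : ∑ j, pd (inertialStress u v i j) j x
      = (∑ j, u x j * pd (fun y => u y i) j x) + ∑ j, pd (fun y => v y j * v y i) j x := by
    unfold inertialStress
    simp_rw [fun j => pd_add (f := fun y => u y j * u y i) (g := fun y => v y j * v y i) (x := x)
      (by fun_prop) (by fun_prop), fun j => pd_mul (f := fun y => u y j) (g := fun y => u y i)
      (x := x) (by fun_prop) (by fun_prop), Finset.sum_add_distrib, ← Finset.sum_mul, hdiv]
    ring
  linarith [hmom i x]

theorem scaledConv_pd_pressure {w : R3 → ℝ} (hw : Continuous w) (hc : HasCompactSupport w)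
    (i : Fin 3) (s : ℝ) (x : R3) :
    scaledConv w (pd pr i) s x = scaledConv w (lap fun y => u y i) s x
      - ∑ j, scaledConv w (pd (inertialStress u v i j) j) s x := by
  have hu := h.contDiff_u
  have hstress : ∀ j, Continuous (pd (inertialStress u v i j) j) := fun j =>
    (contDiff_pd (contDiff_inertialStress hu h.contDiff_v i j) j).continuous
  rw [show pd pr i = _ from funext (h.pd_pressure i),
    scaledConv_sub hw hc (contDiff_lap (by fun_prop)).continuous
      (continuous_finsetSum _ fun j _ => hstress j), scaledConv_sum _ hw hc hstress]

theorem scaleDeriv_pressure (hη : IsMollifier η H) (s : ℝ) (x : R3) :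
    scaleDeriv H pr s x = -∑ i, ∑ j, scaledConv (pd H i) (pd (inertialStress u v i j) j) s x := by
  have hu := h.contDiff_u
  have hH := hη.contDiff_potential
  have hHc := hη.hasCompactSupport_potential
  have hlap : ∑ i, scaledConv (pd H i) (lap fun y => u y i) s x = 0 := by
    have hparts : ∀ i, scaledConv (pd H i) (lap fun y => u y i) s x
        = s * scaledConv H (pd (lap fun y => u y i) i) s x := fun i =>
      (mul_scaledConv_pd (hH.of_le (by simp)) (contDiff_infty.1 (by fun_prop) 1) hHc i s x).symm
    simp only [hparts, ← Finset.mul_sum]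
    rw [← scaledConv_sum _ hH.continuous hHc fun i =>
      (contDiff_pd (contDiff_lap (by fun_prop)) i).continuous]
    simp [scaledConv, sum_pd_lap_eq_zero hu h.tcm.2.2.2]
  simp only [scaleDeriv, fun i => h.scaledConv_pd_pressure (hη.continuous_pd_potential i)
    (hasCompactSupport_pd hHc i) i s x, Finset.sum_sub_distrib, hlap, zero_sub]

theorem abs_scaleDeriv_pressure_le_mixedDensity (hη : IsMollifier η H)
    (hc : ∀ i z, |pd H i z| ≤ c) (s : ℝ) (x : R3) :
    |scaleDeriv H pr s x| ≤ 36 * c * ballMean (mixedDensity u v θ) s x := by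
  have hterm : ∀ i j, |scaledConv (pd H i) (pd (inertialStress u v i j) j) s x|
      ≤ c * 4 * ballMean (mixedDensity u v θ) s x := fun i j =>
    abs_scaledConv_le (hη.pd_potential_eq_zero i) (hc i) h.continuous_mixedDensity
      (abs_pd_inertialStress_le h.contDiff_u h.contDiff_v θ i j)
  rw [h.scaleDeriv_pressure hη, abs_neg]
  refine (Finset.abs_sum_le_sum_abs _ _).trans ((Finset.sum_le_sum fun i _ =>
    (Finset.abs_sum_le_sum_abs _ _).trans (Finset.sum_le_sum fun j _ => hterm i j)).trans ?_)
  simp only [Finset.sum_const, Finset.card_univ, Fintype.card_fin, nsmul_eq_mul]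
  push_cast
  linarith

theorem abs_scaleDeriv_pressure_le_energyDensity (hη : IsMollifier η H)
    (hc : ∀ i j z, |pd (pd H i) j z| ≤ c) (hs : 0 < s) (x : R3) :
    |scaleDeriv H pr s x| ≤ 9 * c * s⁻¹ * ballMean (energyDensity u v θ) s x := by
  have hterm : ∀ i j, |scaledConv (pd H i) (pd (inertialStress u v i j) j) s x|
      ≤ c * s⁻¹ * ballMean (energyDensity u v θ) s x := fun i j =>
    abs_scaledConv_pd_inertialStress_le h.contDiff_u h.contDiff_v h.contDiff_θ
      (contDiff_pd hη.contDiff_potential i) (hη.pd_potential_eq_zero i) (hc i) hs i j x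
  rw [h.scaleDeriv_pressure hη, abs_neg]
  refine (Finset.abs_sum_le_sum_abs _ _).trans ((Finset.sum_le_sum fun i _ =>
    (Finset.abs_sum_le_sum_abs _ _).trans (Finset.sum_le_sum fun j _ => hterm i j)).trans ?_)
  simp only [Finset.sum_const, Finset.card_univ, Fintype.card_fin, nsmul_eq_mul]
  push_cast
  linarith

theorem abs_scaledConv_pd_pressure_le (hη : IsMollifier η H) (hc₁ : ∀ j z, |pd η j z| ≤ c)
    (hc₂ : ∀ j z, |pd (pd η j) j z| ≤ c) (hs : 0 < s) (i : Fin 3) (x : R3) :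
    |scaledConv η (pd pr i) s x| ≤ 3 * c * (s ^ 2)⁻¹ * ballMean (fun y => ‖u y‖) s x
      + 3 * c * s⁻¹ * ballMean (energyDensity u v θ) s x := by
  have hu := h.contDiff_u
  have hη₀ := hη.contDiff_kernel
  have hηc := hη.hasCompactSupport_kernel
  have hlap : ∀ j, |scaledConv η (pd (pd (fun y => u y i) j) j) s x|
      ≤ c * (s ^ 2)⁻¹ * ballMean (fun y => ‖u y‖) s x := fun j => by
    have hbound := abs_scaledConv_le (s := s) (x := x) (C := 1) (g := fun y => u y i)
      (pd_eq_zero_of_forall_notMem isClosed_closedBall (hη.pd_kernel_eq_zero j) j) (hc₂ j)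
      hu.continuous.norm (fun x => by simpa using PiLp.norm_apply_le (u x) i)
    rw [← sq_mul_scaledConv_pd_pd hη₀ (by fun_prop) hηc, abs_mul, abs_of_pos (pow_pos hs 2),
      mul_one] at hbound
    rwa [mul_right_comm, ← div_eq_mul_inv, le_div_iff₀' (pow_pos hs 2)]
  have hstress := fun j => abs_scaledConv_pd_inertialStress_le hu h.contDiff_v h.contDiff_θ hη₀
    hη.kernel_eq_zero hc₁ hs i j x
  rw [h.scaledConv_pd_pressure hη₀.continuous hηc]
  unfold lap
  rw [scaledConv_sum _ hη₀.continuous hηc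
    fun j => (contDiff_pd (contDiff_pd (by fun_prop) j) j).continuous]
  refine (abs_sub _ _).trans ((add_le_add
    ((Finset.abs_sum_le_sum_abs _ _).trans (Finset.sum_le_sum fun j _ => hlap j))
    ((Finset.abs_sum_le_sum_abs _ _).trans (Finset.sum_le_sum fun j _ => hstress j))).trans ?_)
  simp only [Finset.sum_const, Finset.card_univ, Fintype.card_fin, nsmul_eq_mul]
  push_cast
  linarith

end SmoothTCM

end Pressure

section SphericalShell

variable {E : Type*} [NormedAddCommGroup E] [InnerProductSpace ℝ E]

theorem exists_norm_eq_inner_eq_zero [FiniteDimensional ℝ E] (hE : 2 < Module.finrank ℝ E)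
    (x y : E) {a : ℝ} (ha : 0 ≤ a) :
    ∃ z : E, ‖z‖ = a ∧ inner ℝ x z = 0 ∧ inner ℝ z y = 0 := by
  classical
  set K : Submodule ℝ E := Submodule.span ℝ ({x, y} : Finset E)
  have hrank : Module.finrank ℝ K ≤ 2 := (finrank_span_finset_le_card _).trans Finset.card_le_two
  have : Nontrivial Kᗮ := Module.nontrivial_of_finrank_pos (R := ℝ) (by
    have := K.finrank_add_finrank_orthogonal
    omega)
  obtain ⟨z, hz⟩ := exists_norm_eq Kᗮ ha
  exact ⟨z, hz, Submodule.inner_right_of_mem_orthogonal (Submodule.subset_span (by simp)) z.2,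
    Submodule.inner_left_of_mem_orthogonal (Submodule.subset_span (by simp)) z.2⟩

theorem norm_smul_add_smul_of_inner_eq_zero {x z : E} {a c s : ℝ} (hx : ‖x‖ = a) (hz : ‖z‖ = a)
    (hxz : inner ℝ x z = 0) (hcs : c ^ 2 + s ^ 2 = 1) : ‖c • x + s • z‖ = a := by
  have ha : 0 ≤ a := hx ▸ norm_nonneg x
  refine (sq_eq_sq₀ (norm_nonneg _) ha).1 ?_
  rw [norm_add_sq_real, inner_smul_left, inner_smul_right, hxz, norm_smul, norm_smul, hx, hz,
    mul_pow, mul_pow, Real.norm_eq_abs, Real.norm_eq_abs, sq_abs, sq_abs]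
  linear_combination a ^ 2 * hcs

variable {F : Type*} [NormedAddCommGroup F] [NormedSpace ℝ F] {f : E → F} {f' : E → E →L[ℝ] F}
  {a b L : ℝ} {x y z : E}

theorem norm_sub_le_of_inner_eq_zero (hf : ∀ x, ‖x‖ = a → HasFDerivAt f (f' x) x)
    (hL : ∀ x, ‖x‖ = a → ‖f' x‖ ≤ L) (hx : ‖x‖ = a) (hz : ‖z‖ = a) (hxz : inner ℝ x z = 0) :
    ‖f z - f x‖ ≤ 2 * a * L := by
  have hsphere : ∀ t, ‖Real.cos t • x + Real.sin t • z‖ = a := fun t =>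
    norm_smul_add_smul_of_inner_eq_zero hx hz hxz (Real.cos_sq_add_sin_sq t)
  have hvelocity : ∀ t, ‖-Real.sin t • x + Real.cos t • z‖ = a := fun t =>
    norm_smul_add_smul_of_inner_eq_zero hx hz hxz (by rw [neg_sq, Real.sin_sq_add_cos_sq])
  have hderiv : ∀ t, HasDerivAt (fun t => f (Real.cos t • x + Real.sin t • z))
      (f' (Real.cos t • x + Real.sin t • z) (-Real.sin t • x + Real.cos t • z)) t := fun t =>
    (hf _ (hsphere t)).comp_hasDerivAt t
      (((Real.hasDerivAt_cos t).smul_const x).add ((Real.hasDerivAt_sin t).smul_const z))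
  have hmean := Convex.norm_image_sub_le_of_norm_hasDerivWithin_le (C := L * a)
    (fun t _ => (hderiv t).hasDerivWithinAt) (fun t _ => (hvelocity t ▸
      ContinuousLinearMap.le_of_opNorm_le _ (hL _ (hsphere t)) _)) convex_univ
    (Set.mem_univ 0) (Set.mem_univ (Real.pi / 2))
  simp only [Real.cos_pi_div_two, Real.sin_pi_div_two, Real.cos_zero, Real.sin_zero, zero_smul,
    one_smul, zero_add, add_zero, sub_zero, Real.norm_eq_abs] at hmean
  have hLa : 0 ≤ L * a :=
    mul_nonneg ((norm_nonneg _).trans (hL x hx)) (hx ▸ norm_nonneg x)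
  calc ‖f z - f x‖ ≤ L * a * |Real.pi / 2| := hmean
    _ ≤ L * a * 2 := by
      rw [abs_of_pos (by positivity)]
      exact mul_le_mul_of_nonneg_left (by linarith [Real.pi_le_four]) hLa
    _ = 2 * a * L := by ring

theorem norm_sub_le_of_norm_eq [FiniteDimensional ℝ E] (hE : 2 < Module.finrank ℝ E)
    (hf : ∀ x, ‖x‖ = a → HasFDerivAt f (f' x) x) (hL : ∀ x, ‖x‖ = a → ‖f' x‖ ≤ L)
    (hx : ‖x‖ = a) (hy : ‖y‖ = a) : ‖f x - f y‖ ≤ 4 * a * L := by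
  obtain ⟨z, hz, hxz, hzy⟩ := exists_norm_eq_inner_eq_zero hE x y (hx ▸ norm_nonneg x)
  have hxz' := norm_sub_le_of_inner_eq_zero hf hL hx hz hxz
  have hzy' := norm_sub_le_of_inner_eq_zero hf hL hz hy hzy
  calc ‖f x - f y‖ ≤ ‖f x - f z‖ + ‖f z - f y‖ := norm_sub_le_norm_sub_add_norm_sub _ _ _
    _ ≤ 4 * a * L := by rw [norm_sub_rev (f x), norm_sub_rev (f z) (f y)]; linarith

theorem norm_sub_radialProj_le (ha : 0 < a) (hf : ∀ x, a ≤ ‖x‖ → ‖x‖ ≤ b → HasFDerivAt f (f' x) x)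
    (hL : ∀ x, a ≤ ‖x‖ → ‖x‖ ≤ b → ‖f' x‖ ≤ L) (hax : a ≤ ‖x‖) (hxb : ‖x‖ ≤ b) :
    ‖f ((a / ‖x‖) • x) - f x‖ ≤ b * L := by
  have hx : 0 < ‖x‖ := ha.trans_le hax
  have hsegment : ∀ y ∈ segment ℝ x ((a / ‖x‖) • x), a ≤ ‖y‖ ∧ ‖y‖ ≤ b := by
    rintro _ ⟨s, t, hs, ht, hst, rfl⟩
    have hnorm : ‖s • x + t • (a / ‖x‖) • x‖ = s * ‖x‖ + t * a := by
      rw [smul_smul, ← add_smul, norm_smul, Real.norm_of_nonneg (by positivity), add_mul]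
      field_simp
    obtain rfl : s = 1 - t := by linarith
    rw [hnorm]
    constructor <;> nlinarith
  have hmean := (convex_segment x ((a / ‖x‖) • x)).norm_image_sub_le_of_norm_hasFDerivWithin_le
    (fun y hy => (hf y (hsegment y hy).1 (hsegment y hy).2).hasFDerivWithinAt)
    (fun y hy => hL y (hsegment y hy).1 (hsegment y hy).2) (left_mem_segment ..)
    (right_mem_segment ..)
  have hdist : ‖(a / ‖x‖) • x - x‖ ≤ b := by
    have hle : a / ‖x‖ - 1 ≤ 0 := by rw [sub_nonpos, div_le_one hx]; exact hax
    rw [show (a / ‖x‖) • x - x = (a / ‖x‖ - 1) • x by rw [sub_smul, one_smul], norm_smul,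
      Real.norm_of_nonpos hle]
    calc -(a / ‖x‖ - 1) * ‖x‖ = ‖x‖ - a := by field_simp; ring
      _ ≤ b := by linarith
  rw [mul_comm]
  exact hmean.trans (mul_le_mul_of_nonneg_left hdist ((norm_nonneg _).trans (hL x hax hxb)))

theorem norm_sub_le_of_mem_sphericalShell [FiniteDimensional ℝ E] (hE : 2 < Module.finrank ℝ E)
    (ha : 0 < a) (hf : ∀ x, a ≤ ‖x‖ → ‖x‖ ≤ b → HasFDerivAt f (f' x) x)
    (hL : ∀ x, a ≤ ‖x‖ → ‖x‖ ≤ b → ‖f' x‖ ≤ L) (hax : a ≤ ‖x‖) (hxb : ‖x‖ ≤ b) (hy : ‖y‖ = a) :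
    ‖f x - f y‖ ≤ 5 * b * L := by
  have hab : a ≤ b := hax.trans hxb
  have hx : 0 < ‖x‖ := ha.trans_le hax
  have hradial := norm_sub_radialProj_le ha hf hL hax hxb
  have hspherical := norm_sub_le_of_norm_eq hE (fun x hx => hf x hx.ge (hx.trans_le hab))
    (fun x hx => hL x hx.ge (hx.trans_le hab)) (x := (a / ‖x‖) • x)
    (by rw [norm_smul, Real.norm_of_nonneg (by positivity), div_mul_cancel₀ _ hx.ne']) hy
  have hLab : a * L ≤ b * L :=
    mul_le_mul_of_nonneg_right hab ((norm_nonneg _).trans (hL x hax hxb))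
  calc ‖f x - f y‖ ≤ ‖f x - f ((a / ‖x‖) • x)‖ + ‖f ((a / ‖x‖) • x) - f y‖ :=
        norm_sub_le_norm_sub_add_norm_sub _ _ _
    _ ≤ 5 * b * L := by rw [norm_sub_rev]; linarith

end SphericalShell

section DerivInterpolation

variable {F F' Φ Φ' : ℝ → ℝ} {a b : ℝ}

theorem sub_le_sub_of_deriv_le (hab : a ≤ b) (hF : ∀ s, HasDerivAt F (F' s) s)
    (hΦc : ContinuousOn Φ (Set.Icc a b)) (hΦ : ∀ s ∈ Set.Ioo a b, HasDerivAt Φ (Φ' s) s)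
    (hle : ∀ s ∈ Set.Ioo a b, F' s ≤ Φ' s) : F b - F a ≤ Φ b - Φ a := by
  have hderiv : ∀ s ∈ interior (Set.Icc a b), HasDerivAt (Φ - F) (Φ' s - F' s) s := fun s hs =>
    (hΦ s (interior_Icc (a := a) ▸ hs)).sub (hF s)
  have hmono : MonotoneOn (Φ - F) (Set.Icc a b) :=
    monotoneOn_of_deriv_nonneg (convex_Icc a b)
      (hΦc.sub (continuous_iff_continuousAt.2 fun s => (hF s).continuousAt).continuousOn)
      (fun s hs => (hderiv s hs).differentiableAt.differentiableWithinAt) fun s hs => by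
        rw [(hderiv s hs).deriv]
        exact sub_nonneg.2 (hle s (interior_Icc (a := a) ▸ hs))
  have hends := hmono (Set.left_mem_Icc.2 hab) (Set.right_mem_Icc.2 hab) hab
  simp only [Pi.sub_apply] at hends
  linarith

theorem abs_sub_le_sub_of_abs_deriv_le (hab : a ≤ b) (hF : ∀ s, HasDerivAt F (F' s) s)
    (hΦc : ContinuousOn Φ (Set.Icc a b)) (hΦ : ∀ s ∈ Set.Ioo a b, HasDerivAt Φ (Φ' s) s)
    (hle : ∀ s ∈ Set.Ioo a b, |F' s| ≤ Φ' s) : |F b - F a| ≤ Φ b - Φ a := by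
  have hupper := sub_le_sub_of_deriv_le hab hF hΦc hΦ fun s hs => (abs_le.1 (hle s hs)).2
  have hlower := sub_le_sub_of_deriv_le (F := -F) (F' := -F') hab (fun s => (hF s).neg) hΦc hΦ
    fun s hs => neg_le.1 (abs_le.1 (hle s hs)).1
  simp only [Pi.neg_apply] at hlower
  exact abs_le.2 ⟨by linarith, hupper⟩

variable {ε d E M : ℝ}

theorem abs_sub_zero_le_of_abs_deriv_le (hε : ε < 1) (hd : 0 ≤ d)
    (hF : ∀ s, HasDerivAt F (F' s) s) (hM : ∀ s, 0 < s → s ≤ d → |F' s| ≤ M * s ^ (-ε)) :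
    |F d - F 0| ≤ M * (d ^ (1 - ε) / (1 - ε)) := by
  have hε' : 0 < 1 - ε := sub_pos.2 hε
  have hmain := abs_sub_le_sub_of_abs_deriv_le (Φ := fun s => M * (s ^ (1 - ε) / (1 - ε)))
    (Φ' := fun s => M * s ^ (-ε)) hd hF
    (((Real.continuous_rpow_const hε'.le).div_const _).const_mul _).continuousOn
    (fun s hs => ((((Real.hasDerivAt_rpow_const (Or.inl hs.1.ne')).div_const (1 - ε)).const_mul
      M).congr_deriv (by rw [show 1 - ε - 1 = -ε by ring]; field_simp)))
    fun s hs => hM s hs.1 hs.2.le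
  simpa [Real.zero_rpow hε'.ne'] using hmain

theorem abs_sub_le_of_abs_deriv_le (hε : 0 < ε) (ha : 0 < a) (hE : 0 ≤ E) (had : a ≤ d)
    (hF : ∀ s, HasDerivAt F (F' s) s)
    (hEs : ∀ s, 0 < s → s ≤ d → |F' s| ≤ E * s ^ (-ε - 1)) :
    |F d - F a| ≤ E * (a ^ (-ε) / ε) := by
  have hmain := abs_sub_le_sub_of_abs_deriv_le (Φ := fun s => E * (-s ^ (-ε) / ε))
    (Φ' := fun s => E * s ^ (-ε - 1)) had hF
    (fun s hs => ((((Real.continuousAt_rpow_const s (-ε) (Or.inl (ha.trans_le hs.1).ne')).neg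
      ).div_const ε).const_mul E).continuousWithinAt)
    (fun s hs => ((((Real.hasDerivAt_rpow_const (Or.inl (ha.trans hs.1).ne')).neg.div_const
      ε).const_mul E).congr_deriv (by field_simp)))
    fun s hs => hEs s (ha.trans hs.1) hs.2.le
  have hpos : 0 ≤ E * (d ^ (-ε) / ε) :=
    mul_nonneg hE (div_nonneg (Real.rpow_nonneg (ha.trans_le had).le _) hε.le)
  calc |F d - F a| ≤ E * (-d ^ (-ε) / ε) - E * (-a ^ (-ε) / ε) := hmain
    _ = E * (a ^ (-ε) / ε) - E * (d ^ (-ε) / ε) := by ring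
    _ ≤ E * (a ^ (-ε) / ε) := sub_le_self _ hpos

/-- The two derivative bounds agree at the scale `s = E / M`, where the interval is split. -/
theorem abs_sub_zero_le_rpow_mul_rpow (hε₀ : 0 < ε) (hε₁ : ε < 1) (hE : 0 ≤ E) (hM : 0 ≤ M)
    (hd : 0 < d) (hF : ∀ s, HasDerivAt F (F' s) s)
    (hMs : ∀ s, 0 < s → s ≤ d → |F' s| ≤ M * s ^ (-ε))
    (hEs : ∀ s, 0 < s → s ≤ d → |F' s| ≤ E * s ^ (-ε - 1)) :
    |F d - F 0| ≤ (1 / (1 - ε) + 1 / ε) * (E ^ (1 - ε) * M ^ ε) := by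
  have hε₁' : 0 < 1 - ε := sub_pos.2 hε₁
  rcases hE.eq_or_lt with rfl | hE₀
  · have hconst := abs_sub_zero_le_of_abs_deriv_le (M := 0) hε₁ hd.le hF
      fun s hs hsd => by simpa using hEs s hs hsd
    simpa [Real.zero_rpow hε₁'.ne'] using hconst
  have hsmall : ∀ δ, 0 ≤ δ → δ ≤ d → δ * M ≤ E →
      |F δ - F 0| ≤ 1 / (1 - ε) * (E ^ (1 - ε) * M ^ ε) := fun δ hδ hδd hδE => by
    have hsplit : M * δ ^ (1 - ε) = (δ * M) ^ (1 - ε) * M ^ ε := by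
      rw [Real.mul_rpow hδ hM, mul_assoc, ← Real.rpow_add_of_nonneg hM hε₁'.le hε₀.le,
        sub_add_cancel, Real.rpow_one, mul_comm]
    calc |F δ - F 0| ≤ M * (δ ^ (1 - ε) / (1 - ε)) := abs_sub_zero_le_of_abs_deriv_le hε₁ hδ hF
          fun s hs hsδ => hMs s hs (hsδ.trans hδd)
      _ = 1 / (1 - ε) * ((δ * M) ^ (1 - ε) * M ^ ε) := by rw [← hsplit]; ring
      _ ≤ 1 / (1 - ε) * (E ^ (1 - ε) * M ^ ε) := by gcongr
  rcases le_or_gt (d * M) E with hdM | hdM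
  · have hnonneg : 0 ≤ 1 / ε * (E ^ (1 - ε) * M ^ ε) := by positivity
    linarith [hsmall d hd.le le_rfl hdM]
  have hM₀ : 0 < M := (mul_pos_iff_of_pos_left hd).1 (hE.trans_lt hdM)
  have hδd : E / M ≤ d := ((div_lt_iff₀ hM₀).2 hdM).le
  have hzero := hsmall (E / M) (by positivity) hδd (div_mul_cancel₀ _ hM₀.ne').le
  have hlarge : |F d - F (E / M)| ≤ 1 / ε * (E ^ (1 - ε) * M ^ ε) := by
    have hscale : E * (E / M) ^ (-ε) = E ^ (1 - ε) * M ^ ε := by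
      rw [Real.rpow_neg (by positivity), Real.div_rpow hE hM, inv_div, Real.rpow_sub hE₀,
        Real.rpow_one]
      ring
    calc |F d - F (E / M)| ≤ E * ((E / M) ^ (-ε) / ε) :=
          abs_sub_le_of_abs_deriv_le hε₀ (by positivity) hE hδd hF hEs
      _ = 1 / ε * (E ^ (1 - ε) * M ^ ε) := by rw [← hscale]; ring
  calc |F d - F 0| ≤ |F d - F (E / M)| + |F (E / M) - F 0| := abs_sub_le _ _ _
    _ ≤ (1 / (1 - ε) + 1 / ε) * (E ^ (1 - ε) * M ^ ε) := by linarith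

end DerivInterpolation

section LpS

variable {f g : R3 → ℝ} {p : ℝ} {S T : Set R3}

theorem lpS_eq_toReal_eLpNorm (hf : Continuous f) (hS : Bornology.IsBounded S) (hp : 0 < p) :
    lpS f p S = (eLpNorm f (ENNReal.ofReal p) (volume.restrict S)).toReal := by
  rw [(memLp_restrict_of_continuous_of_isBounded hf hS _).eLpNorm_eq_integral_rpow_norm
    (by simpa using hp) ENNReal.ofReal_ne_top, ENNReal.toReal_ofReal hp.le,
    ENNReal.toReal_ofReal (by positivity), lpS, one_div]
  rfl

theorem lpS_add_le (hf : Continuous f) (hg : Continuous g) (hS : Bornology.IsBounded S)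
    (hp : 1 ≤ p) : lpS (fun x => f x + g x) p S ≤ lpS f p S + lpS g p S := by
  have hp₀ : 0 < p := one_pos.trans_le hp
  have hfL := memLp_restrict_of_continuous_of_isBounded hf hS (ENNReal.ofReal p)
  have hgL := memLp_restrict_of_continuous_of_isBounded hg hS (ENNReal.ofReal p)
  change lpS (f + g) p S ≤ _
  rw [lpS_eq_toReal_eLpNorm (hf.add hg) hS hp₀, lpS_eq_toReal_eLpNorm hf hS hp₀,
    lpS_eq_toReal_eLpNorm hg hS hp₀, ← ENNReal.toReal_add hfL.eLpNorm_ne_top hgL.eLpNorm_ne_top]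
  exact ENNReal.toReal_mono (ENNReal.add_ne_top.2 ⟨hfL.eLpNorm_ne_top, hgL.eLpNorm_ne_top⟩)
    (eLpNorm_add_le hfL.1 hgL.1 (by simpa using hp))

theorem lpS_mono_set (hf : Continuous f) (hT : Bornology.IsBounded T) (hp : 0 ≤ p) (hST : S ⊆ T) :
    lpS f p S ≤ lpS f p T :=
  Real.rpow_le_rpow (integral_nonneg fun _ => Real.rpow_nonneg (abs_nonneg _) _)
    (setIntegral_mono_set (integrableOn_of_continuous_of_isBounded
      (hf.abs.rpow_const fun _ => Or.inr hp) hT)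
      (Eventually.of_forall fun _ => Real.rpow_nonneg (abs_nonneg _) _) hST.eventuallyLE)
    (by positivity)

theorem lpS_mono (hf : Continuous f) (hg : Continuous g) (hS : Bornology.IsBounded S) (hp : 0 ≤ p)
    (hfg : ∀ x, |f x| ≤ |g x|) : lpS f p S ≤ lpS g p S :=
  Real.rpow_le_rpow (integral_nonneg fun _ => Real.rpow_nonneg (abs_nonneg _) _)
    (integral_mono
      (integrableOn_of_continuous_of_isBounded (hf.abs.rpow_const fun _ => Or.inr hp) hS)
      (integrableOn_of_continuous_of_isBounded (hg.abs.rpow_const fun _ => Or.inr hp) hS)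
      fun x => Real.rpow_le_rpow (abs_nonneg _) (hfg x) hp) (by positivity)

theorem lpS_sq (f : R3 → ℝ) (p : ℝ) (S : Set R3) :
    lpS (fun x => f x ^ 2) p S = lpS f (2 * p) S ^ 2 := by
  have hpow : ∀ x, |f x ^ 2| ^ p = |f x| ^ (2 * p) := fun x => by
    rw [abs_pow, Real.rpow_mul (abs_nonneg _), Real.rpow_two]
  simp only [lpS, hpow]
  rw [← Real.rpow_mul_natCast (integral_nonneg fun _ => Real.rpow_nonneg (abs_nonneg _) _)]
  congr 1
  push_cast
  rw [one_div, one_div, mul_inv, mul_right_comm, inv_mul_cancel₀ two_ne_zero, one_mul]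

theorem lpS_two_sq (f : R3 → ℝ) (S : Set R3) : lpS f 2 S ^ 2 = ∫ x in S, f x ^ 2 := by
  have hsq := lpS_sq f 1 S
  rw [mul_one] at hsq
  rw [← hsq]
  simp [lpS]

theorem lpS_le_rpow_mul_rpow (hf : Continuous f) (hS : Bornology.IsBounded S) {a b q l : ℝ}
    (ha : 0 < a) (hb : 0 < b) (hl₀ : 0 < l) (hl₁ : l < 1) (hq : 1 / q = (1 - l) / a + l / b) :
    lpS f q S ≤ lpS f a S ^ (1 - l) * lpS f b S ^ l := by
  have hl₁' : 0 < 1 - l := sub_pos.2 hl₁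
  have hq₀ : 0 < q := one_div_pos.1 (hq ▸ by positivity)
  obtain ⟨t, ht⟩ : ∃ t, t = q * ((1 - l) / a) := ⟨_, rfl⟩
  have ht' : 1 - t = q * (l / b) := by
    have hsum : q * (1 / q) = 1 := mul_one_div_cancel hq₀.ne'
    rw [hq, mul_add] at hsum
    linarith
  have ht₀ : 0 < t := ht ▸ by positivity
  have ht₁ : 0 < 1 - t := ht' ▸ by positivity
  have hsplit : ∀ x, |f x| ^ q = (|f x| ^ a) ^ t * (|f x| ^ b) ^ (1 - t) := fun x => by
    rw [← Real.rpow_mul (abs_nonneg _), ← Real.rpow_mul (abs_nonneg _),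
      ← Real.rpow_add_of_nonneg (abs_nonneg _) (by positivity) (by positivity), ht', ht]
    congr 1
    rw [mul_left_comm, mul_left_comm b, ← mul_add, mul_div_cancel₀ _ ha.ne',
      mul_div_cancel₀ _ hb.ne', sub_add_cancel, mul_one]
  have hA : 0 ≤ ∫ x in S, |f x| ^ a := integral_nonneg fun _ => Real.rpow_nonneg (abs_nonneg _) _
  have hB : 0 ≤ ∫ x in S, |f x| ^ b := integral_nonneg fun _ => Real.rpow_nonneg (abs_nonneg _) _
  calc lpS f q S = (∫ x in S, (|f x| ^ a) ^ t * (|f x| ^ b) ^ (1 - t)) ^ (1 / q) := by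
        simp only [lpS, hsplit]
    _ ≤ ((∫ x in S, |f x| ^ a) ^ t * (∫ x in S, |f x| ^ b) ^ (1 - t)) ^ (1 / q) :=
      Real.rpow_le_rpow (integral_nonneg fun _ => by positivity)
        (setIntegral_rpow_mul_rpow_le (hf.abs.rpow_const fun _ => Or.inr ha.le)
          (hf.abs.rpow_const fun _ => Or.inr hb.le) (fun _ => by positivity)
          (fun _ => by positivity) hS ht₀ (sub_pos.1 ht₁)) (by positivity)
    _ = lpS f a S ^ (1 - l) * lpS f b S ^ l := by
      rw [Real.mul_rpow (by positivity) (by positivity), ← Real.rpow_mul hA, ← Real.rpow_mul hB,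
        lpS, lpS, ← Real.rpow_mul hA, ← Real.rpow_mul hB, ht', ht]
      congr 2 <;> field_simp

theorem setIntegral_abs_mul_setIntegral_abs_le (hf : Continuous f) (hg : Continuous g)
    (hS : Bornology.IsBounded S) {q : ℝ} (hpq : p.HolderConjugate q) :
    (∫ x in S, |f x|) * ∫ x in S, |g x| ≤ volume.real S * (lpS f p S * lpS g q S) := by
  have hlpS_one : ∀ r, lpS (fun _ => 1) r S = volume.real S ^ (1 / r) := fun r => by simp [lpS]
  have hleft := setIntegral_mul_le_lpS_mul_lpS hf (g := fun _ => 1) continuous_const hS hpq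
  have hright := setIntegral_mul_le_lpS_mul_lpS hg (g := fun _ => 1) continuous_const hS hpq.symm
  simp only [abs_one, mul_one, hlpS_one] at hleft hright
  have hvol : volume.real S ^ (1 / q) * volume.real S ^ (1 / p) = volume.real S := by
    rw [← Real.rpow_add_of_nonneg measureReal_nonneg (one_div_nonneg.2 hpq.symm.nonneg)
      (one_div_nonneg.2 hpq.nonneg), one_div, one_div, add_comm, hpq.inv_add_inv_eq_one,
      Real.rpow_one]
  calc (∫ x in S, |f x|) * ∫ x in S, |g x|
      ≤ (lpS f p S * volume.real S ^ (1 / q)) * (lpS g q S * volume.real S ^ (1 / p)) :=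
        mul_le_mul hleft hright (integral_nonneg fun _ => abs_nonneg _)
          (mul_nonneg (lpS_nonneg ..) (by positivity))
    _ = volume.real S * (lpS f p S * lpS g q S) := by
      linear_combination (lpS f p S * lpS g q S) * hvol

end LpS

/-- The spherical shell `ρ ≤ |x| < τ`. -/
def shell (ρ τ : ℝ) : Set R3 := ball 0 τ \ ball 0 ρ

/-- The closed middle third of `shell ρ τ`. -/
def middleShell (ρ τ : ℝ) : Set R3 := {x | ρ + (τ - ρ) / 3 ≤ ‖x‖ ∧ ‖x‖ ≤ ρ + 2 * (τ - ρ) / 3}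

section Shell

variable {ρ τ : ℝ}

theorem mem_shell {x : R3} : x ∈ shell ρ τ ↔ ρ ≤ ‖x‖ ∧ ‖x‖ < τ := by
  simp [shell, and_comm]

theorem isBounded_shell : Bornology.IsBounded (shell ρ τ) := isBounded_ball.subset Set.sdiff_subset

theorem shell_subset_shell {ρ' τ' : ℝ} (hρ : ρ' ≤ ρ) (hτ : τ ≤ τ') : shell ρ τ ⊆ shell ρ' τ' :=
  Set.sdiff_subset_sdiff (ball_subset_ball hτ) (ball_subset_ball hρ)

theorem volume_real_shell_le {R : ℝ} (hR : 0 < R) (hτ : τ ≤ 2 * R) :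
    volume.real (shell ρ τ) ≤ 8 * volume.real (ball (0 : R3) 1) * R ^ 3 := by
  calc volume.real (shell ρ τ) ≤ volume.real (ball (0 : R3) (2 * R)) :=
        measureReal_mono (Set.sdiff_subset.trans (ball_subset_ball hτ)) measure_ball_lt_top.ne
    _ = 8 * volume.real (ball (0 : R3) 1) * R ^ 3 := by
      rw [Measure.real, Measure.addHaar_ball volume (0 : R3) (by positivity), ENNReal.toReal_mul,
        ENNReal.toReal_ofReal (by positivity), finrank_euclideanSpace_fin]
      rw [Measure.real]
      ring

theorem middleShell_subset_shell (hρτ : ρ < τ) : middleShell ρ τ ⊆ shell ρ τ := fun x hx =>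
  mem_shell.2 ⟨by linarith [hx.1], by linarith [hx.2]⟩

theorem measurableSet_middleShell : MeasurableSet (middleShell ρ τ) :=
  (measurableSet_le measurable_const measurable_norm).inter
    (measurableSet_le measurable_norm measurable_const)

theorem isBounded_middleShell (hρτ : ρ < τ) : Bornology.IsBounded (middleShell ρ τ) :=
  isBounded_shell.subset (middleShell_subset_shell hρτ)

theorem sub_smul_mem_shell {s : ℝ} (hs₀ : 0 < s) (hs : s ≤ (τ - ρ) / 6) {x : R3}
    (hx : x ∈ middleShell ρ τ) {z : R3} (hz : z ∈ closedBall 0 1) : x - s • z ∈ shell ρ τ := by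
  have hsz : ‖s • z‖ ≤ s := by
    rw [norm_smul, Real.norm_of_nonneg hs₀.le]
    exact mul_le_of_le_one_right hs₀.le (mem_closedBall_zero_iff.1 hz)
  exact mem_shell.2 ⟨by linarith [hx.1, norm_sub_norm_le x (s • z)],
    by linarith [hx.2, norm_sub_le x (s • z)]⟩

end Shell

/-- The local energy on `S`: the dissipation over `S` plus the `L³(S)` norm of the energy density,
that is, plus the sixth-power Sobolev quantity that the dissipation controls. -/
def localEnergy (u v : R3 → R3) (θ : R3 → ℝ) (S : Set R3) : ℝ :=
  (∫ x in S, dissipation u v θ x) + lpS (energyDensity u v θ) 3 S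

/-- Hölder bound on `S` for the transport term `∫ |u| (|u|² + |v|² + θ²)`, in
which the energy density is interpolated between `L^{3/2}` and `L³`. -/
def transportBound (u v : R3 → R3) (θ : R3 → ℝ) (p : ℝ) (S : Set R3) : ℝ :=
  lpS (fun x => ‖u x‖) p S
    * (lpS (energyDensity u v θ) (3 / 2) S ^ (2 - 3 / p) * localEnergy u v θ S ^ (3 / p - 1))

section LocalEnergy

variable {u v : R3 → R3} {pr θ : R3 → ℝ} {p : ℝ} {S T : Set R3}

theorem setIntegral_dissipation_nonneg (u v : R3 → R3) (θ : R3 → ℝ) (S : Set R3) :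
    0 ≤ ∫ x in S, dissipation u v θ x := integral_nonneg fun x => dissipation_nonneg u v θ x

theorem setIntegral_energyDensity_nonneg (u v : R3 → R3) (θ : R3 → ℝ) (S : Set R3) :
    0 ≤ ∫ x in S, energyDensity u v θ x := integral_nonneg fun x => energyDensity_nonneg u v θ x

theorem localEnergy_nonneg (u v : R3 → R3) (θ : R3 → ℝ) (S : Set R3) : 0 ≤ localEnergy u v θ S :=
  add_nonneg (setIntegral_dissipation_nonneg u v θ S) (lpS_nonneg ..)

theorem transportBound_nonneg (u v : R3 → R3) (θ : R3 → ℝ) (p : ℝ) (S : Set R3) :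
    0 ≤ transportBound u v θ p S :=
  mul_nonneg (lpS_nonneg ..) (mul_nonneg (Real.rpow_nonneg (lpS_nonneg ..) _)
    (Real.rpow_nonneg (localEnergy_nonneg ..) _))

theorem setIntegral_dissipation_le_localEnergy (u v : R3 → R3) (θ : R3 → ℝ) (S : Set R3) :
    ∫ x in S, dissipation u v θ x ≤ localEnergy u v θ S := le_add_of_nonneg_right (lpS_nonneg ..)

theorem lpS_energyDensity_le_localEnergy (u v : R3 → R3) (θ : R3 → ℝ) (S : Set R3) :
    lpS (energyDensity u v θ) 3 S ≤ localEnergy u v θ S :=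
  le_add_of_nonneg_left (setIntegral_dissipation_nonneg ..)

theorem lpS_three_energyDensity (u v : R3 → R3) (θ : R3 → ℝ) (S : Set R3) :
    lpS (energyDensity u v θ) 3 S = (∫ x in S, energyDensity u v θ x ^ 3) ^ (1 / 3 : ℝ) := by
  simp only [lpS_of_nonneg (energyDensity_nonneg u v θ), Real.rpow_ofNat]

theorem norm_sq_le_energyDensity (u v : R3 → R3) (θ : R3 → ℝ) (x : R3) :
    ‖u x‖ ^ 2 ≤ energyDensity u v θ x := by
  unfold energyDensity
  linarith [sq_nonneg ‖v x‖, sq_nonneg (θ x)]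

namespace SmoothTCM

variable (h : SmoothTCM u v pr θ)
include h

theorem localEnergy_mono (hT : Bornology.IsBounded T) (hST : S ⊆ T) :
    localEnergy u v θ S ≤ localEnergy u v θ T :=
  add_le_add (setIntegral_mono_set (integrableOn_of_continuous_of_isBounded
      (continuous_dissipation h.contDiff_u h.contDiff_v h.contDiff_θ) hT)
      (Eventually.of_forall fun x => dissipation_nonneg u v θ x) hST.eventuallyLE)
    (lpS_mono_set h.continuous_energyDensity hT (by norm_num) hST)

theorem lpS_mixedDensity_le_localEnergy (hS : Bornology.IsBounded S) :
    lpS (mixedDensity u v θ) (3 / 2) S ≤ localEnergy u v θ S := by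
  have hcube : ∀ x, 0 ≤ energyDensity u v θ x ^ 3 := fun x =>
    pow_nonneg (energyDensity_nonneg u v θ x) 3
  have hsplit : ∀ x, mixedDensity u v θ x ^ (3 / 2 : ℝ)
      = (energyDensity u v θ x ^ 3) ^ (1 / 4 : ℝ) * dissipation u v θ x ^ (1 - 1 / 4 : ℝ) := by
    intro x
    have he := energyDensity_nonneg u v θ x
    have hD := dissipation_nonneg u v θ x
    rw [mixedDensity, Real.sqrt_eq_rpow, Real.sqrt_eq_rpow,
      Real.mul_rpow (by positivity) (by positivity), ← Real.rpow_mul he, ← Real.rpow_mul hD,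
      ← Real.rpow_natCast, ← Real.rpow_mul he]
    norm_num
  have hhold := setIntegral_rpow_mul_rpow_le (t := 1 / 4) (h.continuous_energyDensity.pow 3)
    (continuous_dissipation h.contDiff_u h.contDiff_v h.contDiff_θ) hcube
    (dissipation_nonneg u v θ) hS (by norm_num) (by norm_num)
  rw [lpS_of_nonneg (mixedDensity_nonneg u v θ)]
  simp only [hsplit]
  have hA := setIntegral_dissipation_nonneg u v θ S
  have hB : 0 ≤ ∫ x in S, energyDensity u v θ x ^ 3 := integral_nonneg hcube
  calc _ ≤ ((∫ x in S, energyDensity u v θ x ^ 3) ^ (1 / 4 : ℝ)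
        * (∫ x in S, dissipation u v θ x) ^ (1 - 1 / 4 : ℝ)) ^ (1 / (3 / 2) : ℝ) :=
        Real.rpow_le_rpow (integral_nonneg fun x => mul_nonneg (Real.rpow_nonneg (hcube x) _)
          (Real.rpow_nonneg (dissipation_nonneg u v θ x) _)) hhold (by norm_num)
    _ = lpS (energyDensity u v θ) 3 S ^ (1 / 2 : ℝ)
        * (∫ x in S, dissipation u v θ x) ^ (1 / 2 : ℝ) := by
        rw [lpS_three_energyDensity, Real.mul_rpow (by positivity) (by positivity),
          ← Real.rpow_mul hA, ← Real.rpow_mul hB, ← Real.rpow_mul hB]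
        norm_num
    _ ≤ localEnergy u v θ S ^ (1 / 2 : ℝ) * localEnergy u v θ S ^ (1 / 2 : ℝ) :=
        mul_le_mul (Real.rpow_le_rpow (lpS_nonneg ..) (lpS_energyDensity_le_localEnergy ..)
          (by norm_num)) (Real.rpow_le_rpow hA (setIntegral_dissipation_le_localEnergy ..)
          (by norm_num)) (by positivity) (Real.rpow_nonneg (localEnergy_nonneg ..) _)
    _ = localEnergy u v θ S := by
        rw [← Real.sqrt_eq_rpow, Real.mul_self_sqrt (localEnergy_nonneg ..)]

theorem lpS_energyDensity_conjExponent_le (hp₁ : 3 / 2 < p) (hp₂ : p < 3)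
    (hS : Bornology.IsBounded S) :
    lpS (energyDensity u v θ) (p / (p - 1)) S ≤ lpS (energyDensity u v θ) (3 / 2) S ^ (2 - 3 / p)
      * localEnergy u v θ S ^ (3 / p - 1) := by
  have hp : 0 < p := by linarith
  have hl₀ : 0 < 3 / p - 1 := by rwa [sub_pos, one_lt_div hp]
  have hl₁ : 3 / p - 1 < 1 := by rw [sub_lt_iff_lt_add, div_lt_iff₀ hp]; linarith
  have hinterp := lpS_le_rpow_mul_rpow (a := 3 / 2) (b := 3) (q := p / (p - 1))
    h.continuous_energyDensity hS (by norm_num) (by norm_num) hl₀ hl₁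
    (by rw [one_div_div]; field_simp; ring)
  rw [show 1 - (3 / p - 1) = 2 - 3 / p by ring] at hinterp
  exact hinterp.trans (mul_le_mul_of_nonneg_left (Real.rpow_le_rpow (lpS_nonneg ..)
    (lpS_energyDensity_le_localEnergy ..) hl₀.le) (Real.rpow_nonneg (lpS_nonneg ..) _))

theorem setIntegral_norm_mul_energyDensity_le (hp₁ : 3 / 2 < p) (hp₂ : p < 3)
    (hS : Bornology.IsBounded S) :
    ∫ x in S, ‖u x‖ * energyDensity u v θ x ≤ transportBound u v θ p S := by
  have hhold := setIntegral_mul_le_lpS_mul_lpS (h.contDiff_u.continuous.norm)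
    h.continuous_energyDensity hS (Real.HolderConjugate.conjExponent (by linarith : 1 < p))
  simp only [abs_norm, abs_of_nonneg (energyDensity_nonneg u v θ _)] at hhold
  exact hhold.trans (mul_le_mul_of_nonneg_left
    (h.lpS_energyDensity_conjExponent_le hp₁ hp₂ hS) (lpS_nonneg ..))

theorem setIntegral_norm_mul_setIntegral_energyDensity_le (hp₁ : 3 / 2 < p) (hp₂ : p < 3)
    (hS : Bornology.IsBounded S) : (∫ x in S, ‖u x‖) * ∫ x in S, energyDensity u v θ x
      ≤ volume.real S * transportBound u v θ p S := by
  have hhold := setIntegral_abs_mul_setIntegral_abs_le (h.contDiff_u.continuous.norm)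
    h.continuous_energyDensity hS (Real.HolderConjugate.conjExponent (by linarith : 1 < p))
  simp only [abs_norm, abs_of_nonneg (energyDensity_nonneg u v θ _)] at hhold
  exact hhold.trans (mul_le_mul_of_nonneg_left (mul_le_mul_of_nonneg_left
    (h.lpS_energyDensity_conjExponent_le hp₁ hp₂ hS) (lpS_nonneg ..)) measureReal_nonneg)

theorem setIntegral_norm_sq_le (hS : Bornology.IsBounded S) :
    (∫ x in S, ‖u x‖) ^ 2 ≤ volume.real S * ∫ x in S, energyDensity u v θ x := by
  have hu := h.contDiff_u.continuous.norm
  have hhold := setIntegral_abs_mul_setIntegral_abs_le hu hu hS Real.HolderConjugate.two_two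
  simp only [abs_norm, ← pow_two, lpS_two_sq] at hhold
  exact hhold.trans (mul_le_mul_of_nonneg_left (integral_mono
    (integrableOn_of_continuous_of_isBounded (hu.pow 2) hS)
    (integrableOn_of_continuous_of_isBounded h.continuous_energyDensity hS)
    fun x => norm_sq_le_energyDensity u v θ x) measureReal_nonneg)

end SmoothTCM

end LocalEnergy

theorem IsMollifier.exists_forall_abs_pd_le {η H : R3 → ℝ} (hη : IsMollifier η H) :
    ∃ B : ℝ, 0 ≤ B ∧ (∀ i z, |pd H i z| ≤ B) ∧ (∀ i j z, |pd (pd H i) j z| ≤ B) ∧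
      (∀ j z, |pd η j z| ≤ B) ∧ ∀ j z, |pd (pd η j) j z| ≤ B := by
  have hη₀ := hη.contDiff_kernel
  have hH := hη.contDiff_potential
  have hηc := hasCompactSupport_pd hη.hasCompactSupport_kernel
  have hHc := hasCompactSupport_pd hη.hasCompactSupport_potential
  obtain ⟨B₁, hB₁, hH₁⟩ := exists_forall_abs_le_of_hasCompactSupport
    (fun i => (contDiff_pd hH i).continuous) hHc
  obtain ⟨B₂, hB₂, hH₂⟩ := exists_forall_abs_le_of_hasCompactSupport
    (w := fun i : Fin 3 × Fin 3 => pd (pd H i.1) i.2)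
    (fun i => (contDiff_pd (contDiff_pd hH i.1) i.2).continuous)
    fun i => hasCompactSupport_pd (hHc i.1) i.2
  obtain ⟨B₃, hB₃, hη₁⟩ := exists_forall_abs_le_of_hasCompactSupport
    (fun j => (contDiff_pd hη₀ j).continuous) hηc
  obtain ⟨B₄, hB₄, hη₂⟩ := exists_forall_abs_le_of_hasCompactSupport
    (fun j => (contDiff_pd (contDiff_pd hη₀ j) j).continuous)
    fun j => hasCompactSupport_pd (hηc j) j
  exact ⟨B₁ + B₂ + B₃ + B₄, by positivity, fun i z => by linarith [hH₁ i z],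
    fun i j z => by linarith [hH₂ (i, j) z], fun j z => by linarith [hη₁ j z],
    fun j z => by linarith [hη₂ j z]⟩

theorem IsCutoff.abs_integral_fderiv_apply_mul_le_of_le_ballMean {χ f G : R3 → ℝ} {w : R3 → R3}
    {S T : Set R3} {c d l s p : ℝ} (hχ : IsCutoff χ S c d) (hS : MeasurableSet S)
    (hSb : Bornology.IsBounded S) (hT : Bornology.IsBounded T) (hw : Continuous w)
    (hf : Continuous f) (hG : Continuous G) (hG₀ : ∀ x, 0 ≤ G x) (hl : 0 ≤ l) (hs : 0 < s)
    (hp₁ : 1 < p) (hp₂ : p ≤ 3) (hST : ∀ x ∈ S, ∀ z ∈ closedBall 0 1, x - s • z ∈ T)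
    (hfG : ∀ x, |f x| ≤ l * ballMean G s x) :
    |∫ x, fderiv ℝ χ x (w x) * f x| ≤ l * (c / d * (volume.real (closedBall (0 : R3) 1)
      ^ (4 / 3 - 1 / p) * lpS (fun x => ‖w x‖) p T)) * lpS G (3 / 2) T * s ^ (-(3 / p - 1)) := by
  have hcd : 0 ≤ c / d := (norm_nonneg _).trans (hχ.norm_fderiv_le 0)
  have hsub : S ⊆ T := fun x hx => by simpa using hST x hx 0 (by simp)
  have hmean := continuous_ballMean hG s
  calc |∫ x, fderiv ℝ χ x (w x) * f x| ≤ c / d * ∫ x in S, ‖w x‖ * |f x| :=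
        hχ.abs_integral_fderiv_apply_mul_le hSb hw hf
    _ ≤ c / d * ∫ x in S, l * (|‖w x‖| * ballMean G s x) := by
        refine mul_le_mul_of_nonneg_left (integral_mono
          (integrableOn_of_continuous_of_isBounded (by fun_prop) hSb)
          (integrableOn_of_continuous_of_isBounded (by fun_prop) hSb) fun x => ?_) hcd
        simp only [abs_norm, mul_left_comm l]
        exact mul_le_mul_of_nonneg_left (hfG x) (norm_nonneg _)
    _ ≤ c / d * (l * (volume.real (closedBall (0 : R3) 1) ^ (4 / 3 - 1 / p) * s ^ (-(3 / p - 1))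
          * lpS (fun x => ‖w x‖) p S * lpS G (3 / 2) T)) := by
        rw [integral_const_mul]
        exact mul_le_mul_of_nonneg_left (mul_le_mul_of_nonneg_left
          (setIntegral_mul_ballMean_le hw.norm hG hG₀ hS hSb hT hs hp₁ hp₂ hST) hl) hcd
    _ ≤ c / d * (l * (volume.real (closedBall (0 : R3) 1) ^ (4 / 3 - 1 / p) * s ^ (-(3 / p - 1))
          * lpS (fun x => ‖w x‖) p T * lpS G (3 / 2) T)) := by
        have := lpS_nonneg G (3 / 2) T
        gcongr
        exact lpS_mono_set hw.norm hT (by linarith) hsub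
    _ = _ := by ring

namespace SmoothTCM

variable {u v : R3 → R3} {pr θ η H χ : R3 → ℝ} {S T : Set R3} {p B c d s δ : ℝ}
variable (h : SmoothTCM u v pr θ)
include h

theorem continuous_scaleDeriv_pressure (hη : IsMollifier η H) (s : ℝ) :
    Continuous (scaleDeriv H pr s) :=
  (continuous_scaleDeriv hη h.contDiff_pr).comp (Continuous.prodMk_right s)

theorem abs_integral_fderiv_mul_scaleDeriv_le_localEnergy (hη : IsMollifier η H) (hp₁ : 1 < p)
    (hp₂ : p ≤ 3) (hB : ∀ i z, |pd H i z| ≤ B) (hχ : IsCutoff χ S c d) (hS : MeasurableSet S)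
    (hSb : Bornology.IsBounded S) (hT : Bornology.IsBounded T) (hs : 0 < s)
    (hST : ∀ x ∈ S, ∀ z ∈ closedBall 0 1, x - s • z ∈ T) :
    |∫ x, fderiv ℝ χ x (u x) * scaleDeriv H pr s x|
      ≤ 36 * B * (c / d * (volume.real (closedBall (0 : R3) 1) ^ (4 / 3 - 1 / p)
        * lpS (fun x => ‖u x‖) p T)) * localEnergy u v θ T * s ^ (-(3 / p - 1)) := by
  have hcd : 0 ≤ c / d := (norm_nonneg _).trans (hχ.norm_fderiv_le 0)
  have hB₀ : 0 ≤ B := (abs_nonneg _).trans (hB 0 0)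
  have hN := lpS_nonneg (fun x => ‖u x‖) p T
  refine (hχ.abs_integral_fderiv_apply_mul_le_of_le_ballMean hS hSb hT h.contDiff_u.continuous
    (h.continuous_scaleDeriv_pressure hη s) h.continuous_mixedDensity (mixedDensity_nonneg u v θ)
    (by positivity) hs hp₁ hp₂ hST (h.abs_scaleDeriv_pressure_le_mixedDensity hη hB s)).trans ?_
  gcongr
  exact h.lpS_mixedDensity_le_localEnergy hT

theorem abs_integral_fderiv_mul_scaleDeriv_le_lpS (hη : IsMollifier η H) (hp₁ : 1 < p)
    (hp₂ : p ≤ 3) (hB : ∀ i j z, |pd (pd H i) j z| ≤ B) (hχ : IsCutoff χ S c d)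
    (hS : MeasurableSet S) (hSb : Bornology.IsBounded S) (hT : Bornology.IsBounded T) (hs : 0 < s)
    (hST : ∀ x ∈ S, ∀ z ∈ closedBall 0 1, x - s • z ∈ T) :
    |∫ x, fderiv ℝ χ x (u x) * scaleDeriv H pr s x|
      ≤ 9 * B * (c / d * (volume.real (closedBall (0 : R3) 1) ^ (4 / 3 - 1 / p)
        * lpS (fun x => ‖u x‖) p T)) * lpS (energyDensity u v θ) (3 / 2) T
        * s ^ (-(3 / p - 1) - 1) := by
  have hB₀ : 0 ≤ B := (abs_nonneg _).trans (hB 0 0 0)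
  refine (hχ.abs_integral_fderiv_apply_mul_le_of_le_ballMean hS hSb hT h.contDiff_u.continuous
    (h.continuous_scaleDeriv_pressure hη s) h.continuous_energyDensity (energyDensity_nonneg u v θ)
    (by positivity) hs hp₁ hp₂ hST
    (h.abs_scaleDeriv_pressure_le_energyDensity hη hB hs)).trans_eq ?_
  rw [Real.rpow_sub_one hs.ne']
  ring

theorem abs_integral_fderiv_mul_scaledConv_sub_le (hη : IsMollifier η H) (hp₁ : 3 / 2 < p)
    (hp₂ : p < 3) (hB₁ : ∀ i z, |pd H i z| ≤ B) (hB₂ : ∀ i j z, |pd (pd H i) j z| ≤ B)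
    (hχ : IsCutoff χ S c d) (hS : MeasurableSet S) (hSb : Bornology.IsBounded S)
    (hT : Bornology.IsBounded T) (hδ : 0 < δ)
    (hST : ∀ s, 0 < s → s ≤ δ → ∀ x ∈ S, ∀ z ∈ closedBall 0 1, x - s • z ∈ T) :
    |(∫ x, fderiv ℝ χ x (u x) * scaledConv η pr δ x) - ∫ x, fderiv ℝ χ x (u x) * pr x|
      ≤ (1 / (1 - (3 / p - 1)) + 1 / (3 / p - 1))
        * (36 * B * volume.real (closedBall (0 : R3) 1) ^ (4 / 3 - 1 / p))
        * (c / d * transportBound u v θ p T) := by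
  have hp : 0 < p := by linarith
  have hε₀ : 0 < 3 / p - 1 := by rwa [sub_pos, one_lt_div hp]
  have hε₁ : 3 / p - 1 < 1 := by rw [sub_lt_iff_lt_add, div_lt_iff₀ hp]; linarith
  have hcd : 0 ≤ c / d := (norm_nonneg _).trans (hχ.norm_fderiv_le 0)
  have hB₀ : 0 ≤ B := (abs_nonneg _).trans (hB₁ 0 0)
  have hM := localEnergy_nonneg u v θ T
  have hE := lpS_nonneg (energyDensity u v θ) (3 / 2) T
  have hN := lpS_nonneg (fun x => ‖u x‖) p T
  obtain ⟨A, hA⟩ : ∃ A, A = c / d * (volume.real (closedBall (0 : R3) 1) ^ (4 / 3 - 1 / p)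
    * lpS (fun x => ‖u x‖) p T) := ⟨_, rfl⟩
  have hA₀ : 0 ≤ 36 * B * A := by rw [hA]; positivity
  -- The two bounds on the scale derivative interpolate to an integrable singularity at `s = 0`.
  have hmain := abs_sub_zero_le_rpow_mul_rpow hε₀ hε₁ (mul_nonneg hA₀ hE) (mul_nonneg hA₀ hM) hδ
    (hasDerivAt_integral_mul_scaledConv hη h.contDiff_pr
      (continuous_fderiv_apply hχ.contDiff h.contDiff_u.continuous)
      (hasCompactSupport_fderiv_apply hχ.hasCompactSupport u))
    (fun s hs hsδ => hA ▸ h.abs_integral_fderiv_mul_scaleDeriv_le_localEnergy hη (by linarith)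
      hp₂.le hB₁ hχ hS hSb hT hs (hST s hs hsδ))
    fun s hs hsδ => (h.abs_integral_fderiv_mul_scaleDeriv_le_lpS hη (by linarith) hp₂.le hB₂ hχ
      hS hSb hT hs (hST s hs hsδ)).trans (by rw [hA]; gcongr; norm_num)
  simp only [hη.scaledConv_zero] at hmain
  refine hmain.trans_eq ?_
  rw [Real.mul_rpow hA₀ hE, Real.mul_rpow hA₀ hM, mul_mul_mul_comm, ← Real.rpow_add_of_nonneg hA₀
    (by linarith) hε₀.le, sub_add_cancel, Real.rpow_one, transportBound, hA,
    show 1 - (3 / p - 1) = 2 - 3 / p by ring]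
  ring

theorem integral_fderiv_apply_eq_zero (hχ : ContDiff ℝ ∞ χ) (hc : HasCompactSupport χ) :
    ∫ x, fderiv ℝ χ x (u x) = 0 := by
  have hparts := integral_mul_sum_pd_eq_neg hχ hc (F := fun j x => u x j)
    fun j => contDiff_euclidean.1 h.contDiff_u j
  simp only [h.tcm.2.2.2, mul_zero, integral_zero] at hparts
  simp only [fderiv_apply_eq_sum_pd, mul_comm (u _ _)]
  linarith

theorem abs_scaledConv_pd_pressure_le_setIntegral (hη : IsMollifier η H)
    (hB₁ : ∀ j z, |pd η j z| ≤ B) (hB₂ : ∀ j z, |pd (pd η j) j z| ≤ B)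
    (hT : Bornology.IsBounded T) (hδ : 0 < δ) {x : R3}
    (hx : ∀ z ∈ closedBall 0 1, x - δ • z ∈ T) (i : Fin 3) : |scaledConv η (pd pr i) δ x|
      ≤ 3 * B * (δ⁻¹ ^ 5 * (∫ y in T, ‖u y‖) + δ⁻¹ ^ 4 * ∫ y in T, energyDensity u v θ y) := by
  have hB₀ : 0 ≤ B := (abs_nonneg _).trans (hB₁ 0 0)
  calc |scaledConv η (pd pr i) δ x| ≤ _ := h.abs_scaledConv_pd_pressure_le hη hB₁ hB₂ hδ i x
    _ ≤ 3 * B * (δ ^ 2)⁻¹ * ((δ ^ 3)⁻¹ * ∫ y in T, ‖u y‖)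
        + 3 * B * δ⁻¹ * ((δ ^ 3)⁻¹ * ∫ y in T, energyDensity u v θ y) := by
        gcongr
        · exact ballMean_le h.contDiff_u.continuous.norm (fun _ => norm_nonneg _) hT hδ hx
        · exact ballMean_le h.continuous_energyDensity (energyDensity_nonneg u v θ) hT hδ hx
    _ = _ := by ring

theorem abs_scaledConv_pressure_sub_le (hη : IsMollifier η H) {a b L : ℝ} (ha : 0 < a)
    (hL : ∀ x : R3, a ≤ ‖x‖ → ‖x‖ ≤ b → ∀ i, |scaledConv η (pd pr i) δ x| ≤ L) {x y : R3}
    (hax : a ≤ ‖x‖) (hxb : ‖x‖ ≤ b) (hy : ‖y‖ = a) :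
    |scaledConv η pr δ x - scaledConv η pr δ y| ≤ 15 * b * L := by
  refine (norm_sub_le_of_mem_sphericalShell (E := R3) (L := 3 * L) (by simp) ha
    (fun x _ _ => hasFDerivAt_scaledConv hη.contDiff_kernel.continuous hη.hasCompactSupport_kernel
      h.contDiff_pr δ x) (fun x hax hxb => ?_) hax hxb hy).trans_eq (by ring)
  have hL₀ : 0 ≤ L := (abs_nonneg _).trans (hL x hax hxb 0)
  refine ContinuousLinearMap.opNorm_le_bound _ (by positivity) fun z => ?_
  simp only [_root_.sum_apply, _root_.smul_apply, smul_eq_mul]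
  refine (Finset.abs_sum_le_sum_abs _ _).trans ((Finset.sum_le_card_nsmul _ _ (L * ‖z‖)
    fun i _ => ?_).trans_eq (by simp; ring))
  rw [abs_mul]
  exact mul_le_mul (hL x hax hxb i) (PiLp.norm_apply_le z i) (abs_nonneg _) hL₀

theorem abs_integral_fderiv_mul_le_of_oscillation (hχ : IsCutoff χ S c d) (hS : MeasurableSet S)
    (hSb : Bornology.IsBounded S) {f : R3 → ℝ} (hf : Continuous f) {l m : ℝ}
    (hm : ∀ x ∈ S, |f x - m| ≤ l) :
    |∫ x, fderiv ℝ χ x (u x) * f x| ≤ c / d * ((∫ x in S, ‖u x‖) * l) := by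
  have hcd : 0 ≤ c / d := (norm_nonneg _).trans (hχ.norm_fderiv_le 0)
  have hu := h.contDiff_u.continuous
  have hflux := continuous_fderiv_apply hχ.contDiff hu
  have hsupp := hasCompactSupport_fderiv_apply hχ.hasCompactSupport u
  have hshift : ∫ x, fderiv ℝ χ x (u x) * f x = ∫ x, fderiv ℝ χ x (u x) * (f x - m) := by
    simp only [mul_sub]
    rw [integral_sub, integral_mul_const,
      h.integral_fderiv_apply_eq_zero hχ.contDiff hχ.hasCompactSupport, zero_mul, sub_zero]
    · exact (hflux.mul hf).integrable_of_hasCompactSupport hsupp.mul_right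
    · exact (hflux.mul continuous_const).integrable_of_hasCompactSupport hsupp.mul_right
  calc |∫ x, fderiv ℝ χ x (u x) * f x| ≤ c / d * ∫ x in S, ‖u x‖ * |f x - m| :=
        hshift ▸ hχ.abs_integral_fderiv_apply_mul_le hSb hu (hf.sub continuous_const)
    _ ≤ c / d * ∫ x in S, ‖u x‖ * l :=
        mul_le_mul_of_nonneg_left (setIntegral_mono_on
          (integrableOn_of_continuous_of_isBounded (by fun_prop) hSb)
          (integrableOn_of_continuous_of_isBounded (by fun_prop) hSb) hS
          fun x hx => mul_le_mul_of_nonneg_left (hm x hx) (norm_nonneg _)) hcd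
    _ = _ := by rw [integral_mul_const]

theorem abs_integral_fderiv_mul_scaledConv_le (hη : IsMollifier η H) (hp₁ : 3 / 2 < p)
    (hp₂ : p < 3) (hB₁ : ∀ j z, |pd η j z| ≤ B) (hB₂ : ∀ j z, |pd (pd η j) j z| ≤ B) {a b : ℝ}
    (ha : 0 < a) (hb : 0 ≤ b) (hχ : IsCutoff χ {x | a ≤ ‖x‖ ∧ ‖x‖ ≤ b} c d)
    (hT : Bornology.IsBounded T) (hδ : 0 < δ)
    (hST : ∀ x : R3, a ≤ ‖x‖ ∧ ‖x‖ ≤ b → ∀ z ∈ closedBall 0 1, x - δ • z ∈ T) :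
    |∫ x, fderiv ℝ χ x (u x) * scaledConv η pr δ x| ≤ 45 * B * b * volume.real T * (c / d *
      (δ⁻¹ ^ 5 * (∫ x in T, energyDensity u v θ x) + δ⁻¹ ^ 4 * transportBound u v θ p T)) := by
  obtain ⟨L, hL⟩ : ∃ L, L = 3 * B * (δ⁻¹ ^ 5 * (∫ y in T, ‖u y‖)
    + δ⁻¹ ^ 4 * ∫ y in T, energyDensity u v θ y) := ⟨_, rfl⟩
  have hcd : 0 ≤ c / d := (norm_nonneg _).trans (hχ.norm_fderiv_le 0)
  have hB₀ : 0 ≤ B := (abs_nonneg _).trans (hB₁ 0 0)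
  have hu := h.contDiff_u.continuous.norm
  have hsub : {x : R3 | a ≤ ‖x‖ ∧ ‖x‖ ≤ b} ⊆ T := fun x hx => by simpa using hST x hx 0 (by simp)
  have hosc : ∀ x ∈ {x : R3 | a ≤ ‖x‖ ∧ ‖x‖ ≤ b},
      |scaledConv η pr δ x - scaledConv η pr δ (EuclideanSpace.single 0 a)| ≤ 15 * b * L :=
    fun x hx => h.abs_scaledConv_pressure_sub_le hη ha (fun y hay hyb i =>
      hL ▸ h.abs_scaledConv_pd_pressure_le_setIntegral hη hB₁ hB₂ hT hδ (hST y ⟨hay, hyb⟩) i)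
      hx.1 hx.2 (by simp [ha.le])
  have hL₀ : 0 ≤ L := by
    have := setIntegral_energyDensity_nonneg u v θ T
    rw [hL]
    positivity
  calc |∫ x, fderiv ℝ χ x (u x) * scaledConv η pr δ x|
      ≤ c / d * ((∫ x in {x | a ≤ ‖x‖ ∧ ‖x‖ ≤ b}, ‖u x‖) * (15 * b * L)) :=
        h.abs_integral_fderiv_mul_le_of_oscillation hχ
          ((measurableSet_le measurable_const measurable_norm).inter
            (measurableSet_le measurable_norm measurable_const)) (hT.subset hsub)
          ((continuous_scaledConv hη.contDiff_kernel.continuous hη.hasCompactSupport_kernel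
            h.contDiff_pr.continuous).comp (Continuous.prodMk_right δ)) hosc
    _ ≤ c / d * ((∫ x in T, ‖u x‖) * (15 * b * L)) :=
        mul_le_mul_of_nonneg_left (mul_le_mul_of_nonneg_right (setIntegral_mono_set
          (integrableOn_of_continuous_of_isBounded hu hT)
          (Eventually.of_forall fun x => norm_nonneg _) hsub.eventuallyLE) (by positivity)) hcd
    _ = 45 * B * b * (c / d * (δ⁻¹ ^ 5 * (∫ x in T, ‖u x‖) ^ 2
          + δ⁻¹ ^ 4 * ((∫ x in T, ‖u x‖) * ∫ x in T, energyDensity u v θ x))) := by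
        rw [hL]
        ring
    _ ≤ 45 * B * b * (c / d * (δ⁻¹ ^ 5 * (volume.real T * ∫ x in T, energyDensity u v θ x)
          + δ⁻¹ ^ 4 * (volume.real T * transportBound u v θ p T))) := by
        gcongr 45 * B * b * (c / d * (δ⁻¹ ^ 5 * ?_ + δ⁻¹ ^ 4 * ?_))
        · exact h.setIntegral_norm_sq_le hT
        · exact h.setIntegral_norm_mul_setIntegral_energyDensity_le hp₁ hp₂ hT
    _ = _ := by ring

end SmoothTCM

theorem IsMollifier.exists_forall_abs_integral_fderiv_mul_scaledConv_le {η H : R3 → ℝ}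
    (hη : IsMollifier η H) {p : ℝ} (hp₁ : 3 / 2 < p) (hp₂ : p < 3) :
    ∃ C : ℝ, 0 ≤ C ∧ ∀ {u v : R3 → R3} {pr θ χ : R3 → ℝ} {c R ρ τ : ℝ}, SmoothTCM u v pr θ →
      0 < R → R ≤ ρ → ρ < τ → τ ≤ 2 * R → IsCutoff χ (middleShell ρ τ) c ((τ - ρ) / 3) → 0 ≤ c →
      |∫ x, fderiv ℝ χ x (u x) * scaledConv η pr ((τ - ρ) / 6) x| ≤ C * c * (R / (τ - ρ)) ^ 4 *
        ((∫ x in shell ρ τ, energyDensity u v θ x) / (τ - ρ) ^ 2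
          + transportBound u v θ p (shell ρ τ) / (τ - ρ)) := by
  obtain ⟨B, hB, -, -, hη₁, hη₂⟩ := hη.exists_forall_abs_pd_le
  refine ⟨45 * 48 * 6 ^ 5 * B * volume.real (ball (0 : R3) 1), by positivity, ?_⟩
  intro u v pr θ χ c R ρ τ h hR hRρ hρτ hτ hχ hc
  have hE := setIntegral_energyDensity_nonneg u v θ (shell ρ τ)
  have hN := transportBound_nonneg u v θ p (shell ρ τ)
  have hmean := h.abs_integral_fderiv_mul_scaledConv_le hη hp₁ hp₂ hη₁ hη₂ (by linarith)
    (by linarith) hχ isBounded_shell (δ := (τ - ρ) / 6) (by linarith)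
    fun x hx z hz => sub_smul_mem_shell (by linarith) le_rfl hx hz
  obtain ⟨t, ht⟩ : ∃ t, t = τ - ρ := ⟨_, rfl⟩
  have ht₀ : 0 < t := by linarith
  rw [← ht] at hmean ⊢
  generalize ∫ x in shell ρ τ, energyDensity u v θ x = E at hmean hE ⊢
  generalize transportBound u v θ p (shell ρ τ) = N at hmean hN ⊢
  calc _ ≤ 45 * B * (2 * R) * (8 * volume.real (ball (0 : R3) 1) * R ^ 3)
        * (c / (t / 3) * ((t / 6)⁻¹ ^ 5 * E + (t / 6)⁻¹ ^ 4 * N)) := by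
        refine hmean.trans ?_
        gcongr
        · linarith
        · exact volume_real_shell_le hR hτ
    _ = 45 * 48 * 6 ^ 5 * B * volume.real (ball (0 : R3) 1) * c * (R / t) ^ 4
        * (E / t ^ 2 + N / (6 * t)) := by
        field_simp
        ring
    _ ≤ _ := by
        gcongr
        linarith

theorem IsMollifier.exists_forall_abs_integral_fderiv_mul_scaledConv_sub_le {η H : R3 → ℝ}
    (hη : IsMollifier η H) {p : ℝ} (hp₁ : 3 / 2 < p) (hp₂ : p < 3) :
    ∃ C : ℝ, 0 ≤ C ∧ ∀ {u v : R3 → R3} {pr θ χ : R3 → ℝ} {c ρ τ : ℝ}, SmoothTCM u v pr θ →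
      ρ < τ → IsCutoff χ (middleShell ρ τ) c ((τ - ρ) / 3) →
      |(∫ x, fderiv ℝ χ x (u x) * scaledConv η pr ((τ - ρ) / 6) x)
        - ∫ x, fderiv ℝ χ x (u x) * pr x|
        ≤ C * c * (transportBound u v θ p (shell ρ τ) / (τ - ρ)) := by
  obtain ⟨B, hB, hH₁, hH₂, -, -⟩ := hη.exists_forall_abs_pd_le
  obtain ⟨A, hA⟩ : ∃ A, A = (1 / (1 - (3 / p - 1)) + 1 / (3 / p - 1))
    * (36 * B * volume.real (closedBall (0 : R3) 1) ^ (4 / 3 - 1 / p)) := ⟨_, rfl⟩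
  have hA₀ : 0 ≤ A := by
    have hp : 0 < p := by linarith
    have hε₀ : 0 < 3 / p - 1 := by rwa [sub_pos, one_lt_div hp]
    have hε₁ : 0 < 1 - (3 / p - 1) := by rw [sub_pos, sub_lt_iff_lt_add, div_lt_iff₀ hp]; linarith
    rw [hA]
    positivity
  refine ⟨3 * A, by positivity, ?_⟩
  intro u v pr θ χ c ρ τ h hρτ hχ
  have hdiff := h.abs_integral_fderiv_mul_scaledConv_sub_le hη hp₁ hp₂ hH₁ hH₂ hχ
    measurableSet_middleShell (isBounded_middleShell hρτ) isBounded_shell (δ := (τ - ρ) / 6)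
    (by linarith) fun s hs hsδ x hx z hz => sub_smul_mem_shell hs hsδ hx hz
  have ht : 0 < τ - ρ := sub_pos.2 hρτ
  exact (hA ▸ hdiff).trans_eq (by field_simp)

theorem exists_forall_abs_integral_fderiv_mul_pressure_le {p : ℝ} (hp₁ : 3 / 2 < p) (hp₂ : p < 3) :
    ∃ C : ℝ, 0 ≤ C ∧ ∀ {u v : R3 → R3} {pr θ χ : R3 → ℝ} {c R ρ τ : ℝ}, SmoothTCM u v pr θ →
      0 < R → R ≤ ρ → ρ < τ → τ ≤ 2 * R → IsCutoff χ (middleShell ρ τ) c ((τ - ρ) / 3) → 0 ≤ c →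
      |∫ x, fderiv ℝ χ x (u x) * pr x| ≤ C * c * (R / (τ - ρ)) ^ 4 *
        ((∫ x in shell ρ τ, energyDensity u v θ x) / (τ - ρ) ^ 2
          + transportBound u v θ p (shell ρ τ) / (τ - ρ)) := by
  obtain ⟨η, H, hη⟩ := exists_isMollifier
  obtain ⟨A, hA, hmean⟩ := hη.exists_forall_abs_integral_fderiv_mul_scaledConv_le hp₁ hp₂
  obtain ⟨B, hB, hdiff⟩ := hη.exists_forall_abs_integral_fderiv_mul_scaledConv_sub_le hp₁ hp₂
  refine ⟨A + B, by positivity, ?_⟩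
  intro u v pr θ χ c R ρ τ h hR hRρ hρτ hτ hχ hc
  have hmean := hmean h hR hRρ hρτ hτ hχ hc
  have hdiff := hdiff h hρτ hχ
  have ht : 0 < τ - ρ := sub_pos.2 hρτ
  have hw : 1 ≤ (R / (τ - ρ)) ^ 4 := one_le_pow₀ ((one_le_div ht).2 (by linarith))
  have hE := setIntegral_energyDensity_nonneg u v θ (shell ρ τ)
  have hN := transportBound_nonneg u v θ p (shell ρ τ)
  have hle : B * c * (transportBound u v θ p (shell ρ τ) / (τ - ρ)) ≤ B * c * (R / (τ - ρ)) ^ 4 *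
      ((∫ x in shell ρ τ, energyDensity u v θ x) / (τ - ρ) ^ 2
        + transportBound u v θ p (shell ρ τ) / (τ - ρ)) := by
    refine mul_le_mul (le_mul_of_one_le_right (by positivity) hw)
      (le_add_of_nonneg_left ?_) ?_ ?_ <;> positivity
  have htri := abs_sub_abs_le_abs_sub (∫ x, fderiv ℝ χ x (u x) * pr x)
    (∫ x, fderiv ℝ χ x (u x) * scaledConv η pr ((τ - ρ) / 6) x)
  rw [abs_sub_comm] at htri
  linarith

theorem setIntegral_middleShell_le {g : R3 → ℝ} {ρ τ : ℝ} (hρτ : ρ < τ) (hg : Continuous g)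
    (hg₀ : ∀ x, 0 ≤ g x) : ∫ x in middleShell ρ τ, g x ≤ ∫ x in shell ρ τ, g x :=
  setIntegral_mono_set (integrableOn_of_continuous_of_isBounded hg isBounded_shell)
    (Eventually.of_forall hg₀) (middleShell_subset_shell hρτ).eventuallyLE

theorem SmoothTCM.integral_cutoff_mul_dissipation_le_shell {u v : R3 → R3} {pr θ χ : R3 → ℝ}
    {p c ρ τ : ℝ} (h : SmoothTCM u v pr θ) (hp₁ : 3 / 2 < p) (hp₂ : p < 3) (hρτ : ρ < τ)
    (hχ : IsCutoff χ (middleShell ρ τ) c ((τ - ρ) / 3)) (hc : 0 ≤ c) :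
    ∫ x, χ x * dissipation u v θ x
      ≤ c / ((τ - ρ) / 3) ^ 2 * (∫ x in shell ρ τ, energyDensity u v θ x)
        + 2 * (c / ((τ - ρ) / 3)) * transportBound u v θ p (shell ρ τ)
        + c / ((τ - ρ) / 3) * (∫ x in shell ρ τ, ‖v x‖ * |θ x|)
        + |∫ x, fderiv ℝ χ x (u x) * pr x| := by
  have hu := h.contDiff_u.continuous.norm
  have hv := h.contDiff_v.continuous.norm
  have := sub_pos.2 hρτ
  have he₀ := energyDensity_nonneg u v θ
  refine (h.integral_cutoff_mul_dissipation_le hχ (isBounded_middleShell hρτ)).trans ?_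
  gcongr ?_ * ?_ + ?_ * ?_ + ?_ * ?_ + _
  · exact setIntegral_middleShell_le hρτ h.continuous_energyDensity he₀
  · exact (setIntegral_middleShell_le hρτ (hu.mul h.continuous_energyDensity) fun x =>
      mul_nonneg (norm_nonneg _) (he₀ x)).trans
      (h.setIntegral_norm_mul_energyDensity_le hp₁ hp₂ isBounded_shell)
  · exact setIntegral_middleShell_le hρτ (hv.mul h.contDiff_θ.continuous.abs) fun x =>
      mul_nonneg (norm_nonneg _) (abs_nonneg _)

/-- The right-hand side of the Caccioppoli inequality on the shell `ρ ≤ |x| < τ`, up to a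
dimensionless factor. -/
def caccioppoliBound (u v : R3 → R3) (θ : R3 → ℝ) (p ρ τ : ℝ) : ℝ :=
  (∫ x in shell ρ τ, energyDensity u v θ x) / (τ - ρ) ^ 2
    + (transportBound u v θ p (shell ρ τ) + ∫ x in shell ρ τ, ‖v x‖ * |θ x|) / (τ - ρ)

theorem caccioppoliBound_nonneg (u v : R3 → R3) (θ : R3 → ℝ) (p : ℝ) {ρ τ : ℝ} (hρτ : ρ < τ) :
    0 ≤ caccioppoliBound u v θ p ρ τ := by
  have hE := setIntegral_energyDensity_nonneg u v θ (shell ρ τ)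
  have hN := transportBound_nonneg u v θ p (shell ρ τ)
  unfold caccioppoliBound
  positivity

theorem setIntegral_energyDensity_le_caccioppoliBound (u v : R3 → R3) (θ : R3 → ℝ) (p : ℝ)
    {ρ τ : ℝ} (hρτ : ρ < τ) :
    ∫ x in shell ρ τ, energyDensity u v θ x ≤ (τ - ρ) ^ 2 * caccioppoliBound u v θ p ρ τ := by
  have ht : 0 < τ - ρ := sub_pos.2 hρτ
  rw [← div_le_iff₀' (by positivity)]
  exact le_add_of_nonneg_right (div_nonneg (add_nonneg (transportBound_nonneg ..)
    (integral_nonneg fun x => mul_nonneg (norm_nonneg _) (abs_nonneg _))) ht.le)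

theorem SmoothTCM.integral_cutoff_mul_dissipation_le_caccioppoliBound {u v : R3 → R3}
    {pr θ χ : R3 → ℝ} {p c P w ρ τ : ℝ} (h : SmoothTCM u v pr θ) (hp₁ : 3 / 2 < p) (hp₂ : p < 3)
    (hρτ : ρ < τ) (hχ : IsCutoff χ (middleShell ρ τ) c ((τ - ρ) / 3)) (hc : 0 ≤ c)
    (hP : |∫ x, fderiv ℝ χ x (u x) * pr x| ≤ P * c * w *
      ((∫ x in shell ρ τ, energyDensity u v θ x) / (τ - ρ) ^ 2
        + transportBound u v θ p (shell ρ τ) / (τ - ρ))) (hP₀ : 0 ≤ P) (hw : 1 ≤ w) :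
    ∫ x, χ x * dissipation u v θ x ≤ (9 + P) * c * w * caccioppoliBound u v θ p ρ τ := by
  have ht : 0 < τ - ρ := sub_pos.2 hρτ
  have hV₀ : 0 ≤ ∫ x in shell ρ τ, ‖v x‖ * |θ x| :=
    integral_nonneg fun x => mul_nonneg (norm_nonneg _) (abs_nonneg _)
  have hN₀ := transportBound_nonneg u v θ p (shell ρ τ)
  have hPQ : P * c * w * ((∫ x in shell ρ τ, energyDensity u v θ x) / (τ - ρ) ^ 2
      + transportBound u v θ p (shell ρ τ) / (τ - ρ))
      ≤ P * c * w * caccioppoliBound u v θ p ρ τ := by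
    unfold caccioppoliBound
    gcongr
    exact le_add_of_nonneg_right hV₀
  have hQ := caccioppoliBound_nonneg u v θ p hρτ
  calc _ ≤ c / ((τ - ρ) / 3) ^ 2 * (∫ x in shell ρ τ, energyDensity u v θ x)
        + 2 * (c / ((τ - ρ) / 3)) * transportBound u v θ p (shell ρ τ)
        + c / ((τ - ρ) / 3) * (∫ x in shell ρ τ, ‖v x‖ * |θ x|)
        + P * c * w * caccioppoliBound u v θ p ρ τ :=
        (h.integral_cutoff_mul_dissipation_le_shell hp₁ hp₂ hρτ hχ hc).trans
          (add_le_add_right (hP.trans hPQ) _)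
    _ = 9 * c * caccioppoliBound u v θ p ρ τ - 3 * c / (τ - ρ) *
        (transportBound u v θ p (shell ρ τ) + 2 * ∫ x in shell ρ τ, ‖v x‖ * |θ x|)
        + P * c * w * caccioppoliBound u v θ p ρ τ := by
        unfold caccioppoliBound
        field_simp
        ring
    _ ≤ 9 * c * caccioppoliBound u v θ p ρ τ * w + P * c * w * caccioppoliBound u v θ p ρ τ := by
        gcongr
        exact (sub_le_self _ (by positivity)).trans (le_mul_of_one_le_right (by positivity) hw)
    _ = _ := by ring

theorem SmoothTCM.setIntegral_dissipation_le_integral_cutoff_mul {u v : R3 → R3} {pr θ χ : R3 → ℝ}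
    {S B : Set R3} {c d : ℝ} (h : SmoothTCM u v pr θ) (hχ : IsCutoff χ S c d)
    (hB : MeasurableSet B) (hone : ∀ x ∈ B, χ x = 1) :
    ∫ x in B, dissipation u v θ x ≤ ∫ x, χ x * dissipation u v θ x := by
  have hD := continuous_dissipation h.contDiff_u h.contDiff_v h.contDiff_θ
  rw [setIntegral_congr_fun (g := fun x => χ x * dissipation u v θ x) hB
    fun x hx => by simp only [hone x hx, one_mul]]
  exact setIntegral_le_integral ((hχ.contDiff.continuous.mul hD).integrable_of_hasCompactSupport
    hχ.hasCompactSupport.mul_right)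
    (Eventually.of_forall fun x => mul_nonneg (hχ.nonneg x) (dissipation_nonneg u v θ x))

theorem exists_lpS_three_energyDensity_le : ∃ K : ℝ, 0 ≤ K ∧
    ∀ {u v : R3 → R3} {θ χ : R3 → ℝ} {S B : Set R3} {c d : ℝ},
    ContDiff ℝ ∞ u → ContDiff ℝ ∞ v → ContDiff ℝ ∞ θ → IsCutoff χ S c d →
    Bornology.IsBounded S → MeasurableSet B → (∀ x ∈ B, χ x = 1) →
    lpS (energyDensity u v θ) 3 B ≤ K * ((∫ x, χ x * dissipation u v θ x)
      + (c / d) ^ 2 * ∫ x in S, energyDensity u v θ x) := by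
  obtain ⟨K, hK, hsobolev⟩ := exists_integral_energyDensity_cube_le
  refine ⟨K ^ (1 / 3 : ℝ), by positivity, fun {u v θ χ S B c d} hu hv hθ hχ hS hB hone => ?_⟩
  have hJ : 0 ≤ ∫ x, χ x * dissipation u v θ x :=
    integral_nonneg fun x => mul_nonneg (hχ.nonneg x) (dissipation_nonneg u v θ x)
  have hE := setIntegral_energyDensity_nonneg u v θ S
  rw [lpS_three_energyDensity]
  refine (Real.rpow_le_rpow (integral_nonneg fun x => pow_nonneg (energyDensity_nonneg u v θ x) 3)
    (hsobolev hu hv hθ hχ hS hB hone) (by norm_num)).trans_eq ?_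
  rw [Real.mul_rpow hK (by positivity), ← Real.rpow_natCast, ← Real.rpow_mul (by positivity)]
  norm_num

theorem exists_isCutoff_middleShell : ∃ c : ℝ, 0 < c ∧ ∀ {ρ τ : ℝ}, 0 < ρ → ρ < τ →
    ∃ χ, IsCutoff χ (middleShell ρ τ) c ((τ - ρ) / 3) ∧ ∀ x ∈ ball (0 : R3) ρ, χ x = 1 := by
  obtain ⟨c, hc, hcutoff⟩ := exists_isCutoff_radialCutoff
  refine ⟨c, hc, fun {ρ τ} hρ hρτ => ?_⟩
  have hcut := hcutoff (ρ + (τ - ρ) / 3) (ρ + 2 * (τ - ρ) / 3) (by linarith) (by linarith)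
  rw [show ρ + 2 * (τ - ρ) / 3 - (ρ + (τ - ρ) / 3) = (τ - ρ) / 3 by ring] at hcut
  exact ⟨_, hcut, fun x hx => radialCutoff_eq_one (by linarith) (by linarith)
    (by linarith [mem_ball_zero_iff.1 hx])⟩

theorem SmoothTCM.sq_mul_setIntegral_middleShell_energyDensity_le {u v : R3 → R3} {pr θ : R3 → ℝ}
    {ρ τ : ℝ} (h : SmoothTCM u v pr θ) (p c : ℝ) (hρτ : ρ < τ) :
    (c / ((τ - ρ) / 3)) ^ 2 * (∫ x in middleShell ρ τ, energyDensity u v θ x)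
      ≤ 9 * c ^ 2 * caccioppoliBound u v θ p ρ τ := by
  have ht : 0 < τ - ρ := sub_pos.2 hρτ
  have hE : (∫ x in middleShell ρ τ, energyDensity u v θ x)
      ≤ (τ - ρ) ^ 2 * caccioppoliBound u v θ p ρ τ :=
    (setIntegral_middleShell_le hρτ h.continuous_energyDensity (energyDensity_nonneg u v θ)).trans
      (setIntegral_energyDensity_le_caccioppoliBound u v θ p hρτ)
  calc _ ≤ (c / ((τ - ρ) / 3)) ^ 2 * ((τ - ρ) ^ 2 * caccioppoliBound u v θ p ρ τ) := by gcongr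
    _ = 9 * c ^ 2 * caccioppoliBound u v θ p ρ τ := by
        field_simp
        ring

theorem exists_forall_localEnergy_ball_le {p : ℝ} (hp₁ : 3 / 2 < p) (hp₂ : p < 3) :
    ∃ C : ℝ, 0 ≤ C ∧ ∀ {u v : R3 → R3} {pr θ : R3 → ℝ} {R ρ τ : ℝ}, SmoothTCM u v pr θ →
      0 < R → R ≤ ρ → ρ < τ → τ ≤ 2 * R → localEnergy u v θ (ball 0 ρ)
        ≤ C * (R / (τ - ρ)) ^ 4 * caccioppoliBound u v θ p ρ τ := by
  obtain ⟨c, hc, hcutoff⟩ := exists_isCutoff_middleShell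
  obtain ⟨P, hP, hpressure⟩ := exists_forall_abs_integral_fderiv_mul_pressure_le hp₁ hp₂
  obtain ⟨K, hK, hsobolev⟩ := exists_lpS_three_energyDensity_le
  refine ⟨(9 + P) * c + K * ((9 + P) * c + 9 * c ^ 2), by positivity, ?_⟩
  intro u v pr θ R ρ τ h hR hRρ hρτ hτ
  have ht : 0 < τ - ρ := sub_pos.2 hρτ
  have hw : 1 ≤ (R / (τ - ρ)) ^ 4 := one_le_pow₀ ((one_le_div ht).2 (by linarith))
  have hQ := caccioppoliBound_nonneg u v θ p hρτ
  obtain ⟨χ, hχ, hone⟩ := hcutoff (hR.trans_le hRρ) hρτ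
  obtain ⟨J, hJ⟩ : ∃ J, J = ∫ x, χ x * dissipation u v θ x := ⟨_, rfl⟩
  obtain ⟨Q, hQdef⟩ : ∃ Q, Q = (R / (τ - ρ)) ^ 4 * caccioppoliBound u v θ p ρ τ := ⟨_, rfl⟩
  have hJQ : J ≤ (9 + P) * c * Q := by
    rw [hJ, hQdef, ← mul_assoc]
    exact h.integral_cutoff_mul_dissipation_le_caccioppoliBound hp₁ hp₂ hρτ hχ hc.le
      (hpressure h hR hRρ hρτ hτ hχ hc.le) hP hw
  have hdiss : ∫ x in ball (0 : R3) ρ, dissipation u v θ x ≤ J := by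
    rw [hJ]
    exact h.setIntegral_dissipation_le_integral_cutoff_mul hχ measurableSet_ball hone
  have hEQ : (c / ((τ - ρ) / 3)) ^ 2 * (∫ x in middleShell ρ τ, energyDensity u v θ x)
      ≤ 9 * c ^ 2 * Q := by
    refine (h.sq_mul_setIntegral_middleShell_energyDensity_le p c hρτ).trans ?_
    rw [hQdef]
    gcongr
    exact le_mul_of_one_le_left hQ hw
  have hcube : lpS (energyDensity u v θ) 3 (ball 0 ρ)
      ≤ K * ((9 + P) * c * Q + 9 * c ^ 2 * Q) := by
    refine (hsobolev h.contDiff_u h.contDiff_v h.contDiff_θ hχ (isBounded_middleShell hρτ)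
      measurableSet_ball hone).trans ?_
    gcongr
    exact hJ ▸ hJQ
  calc localEnergy u v θ (ball 0 ρ)
      ≤ (9 + P) * c * Q + K * ((9 + P) * c * Q + 9 * c ^ 2 * Q) :=
        add_le_add (hdiss.trans hJQ) hcube
    _ = _ := by rw [hQdef]; ring

/-- Growth hypothesis at scale `R` on a scalar quantity `f` dominated by the energy density (such as
`|u|`, `|v|` or `θ`): its `L^q` norm on the shell `R ≤ |x| < 2R` is at most `K R^b`. -/
structure HasShellGrowth (u v : R3 → R3) (θ f : R3 → ℝ) (q b K R : ℝ) : Prop where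
  continuous : Continuous f
  sq_le_energyDensity : ∀ x, f x ^ 2 ≤ energyDensity u v θ x
  lpS_le : lpS f q (shell R (2 * R)) ≤ K * R ^ b

section ShellGrowth

variable {u v : R3 → R3} {pr θ f : R3 → ℝ} {q b K R : ℝ} {S : Set R3}

theorem SmoothTCM.lpS_six_le (h : SmoothTCM u v pr θ) (hf : Continuous f)
    (hfe : ∀ x, f x ^ 2 ≤ energyDensity u v θ x) (hS : Bornology.IsBounded S) :
    lpS f 6 S ≤ localEnergy u v θ S ^ (1 / 2 : ℝ) := by
  rw [← Real.sqrt_eq_rpow]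
  apply Real.le_sqrt_of_sq_le
  have hsq := lpS_sq f 3 S
  norm_num at hsq
  rw [← hsq]
  refine (lpS_mono (hf.pow 2) h.continuous_energyDensity hS (by norm_num) fun x => ?_).trans
    (lpS_energyDensity_le_localEnergy u v θ S)
  exact abs_le_abs_of_nonneg (sq_nonneg _) (hfe x)

theorem SmoothTCM.lpS_le_rpow_mul_localEnergy_rpow (h : SmoothTCM u v pr θ)
    (hf : HasShellGrowth u v θ f q b K R) (hS : S ⊆ shell R (2 * R)) (hK : 1 ≤ K) (hR : 0 < R)
    (hq : 0 < q) {s l : ℝ} (hl₀ : 0 < l) (hl₁ : l < 1) (hs : 1 / s = (1 - l) / q + l / 6) :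
    lpS f s S ≤ K * R ^ ((1 - l) * b) * localEnergy u v θ S ^ (l / 2) := by
  have hSb := isBounded_shell.subset hS
  calc lpS f s S ≤ lpS f q S ^ (1 - l) * lpS f 6 S ^ l :=
        lpS_le_rpow_mul_rpow hf.continuous hSb hq (by norm_num) hl₀ hl₁ hs
    _ ≤ (K * R ^ b) ^ (1 - l) * (localEnergy u v θ S ^ (1 / 2 : ℝ)) ^ l := by
        gcongr
        · exact Real.rpow_nonneg (lpS_nonneg ..) _
        · exact lpS_nonneg ..
        · exact (lpS_mono_set hf.continuous isBounded_shell hq.le hS).trans hf.lpS_le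
        · exact lpS_nonneg ..
        · exact h.lpS_six_le hf.continuous hf.sq_le_energyDensity hSb
    _ = K ^ (1 - l) * R ^ ((1 - l) * b) * localEnergy u v θ S ^ (l / 2) := by
        rw [Real.mul_rpow (by positivity) (by positivity), ← Real.rpow_mul hR.le,
          ← Real.rpow_mul (localEnergy_nonneg ..), mul_comm b, one_div_mul_eq_div]
    _ ≤ _ := by
        gcongr
        · exact Real.rpow_nonneg (localEnergy_nonneg ..) _
        · exact Real.rpow_le_self_of_one_le hK (by linarith)

theorem SmoothTCM.lpS_three_le (h : SmoothTCM u v pr θ) (hf : HasShellGrowth u v θ f q b K R)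
    (hS : S ⊆ shell R (2 * R)) (hK : 1 ≤ K) (hR : 0 < R) (hq₀ : 0 < q) (hq₃ : q < 3) :
    lpS f 3 S ≤ K * R ^ (q / (6 - q) * b) * localEnergy u v θ S ^ ((3 - q) / (6 - q)) := by
  have hq₆ : 0 < 6 - q := by linarith
  have hle := h.lpS_le_rpow_mul_localEnergy_rpow hf hS hK hR hq₀ (s := 3)
    (l := 2 * (3 - q) / (6 - q)) (by positivity) (by rw [div_lt_one hq₆]; linarith)
    (by field_simp; ring)
  convert hle using 3
  · congr 1
    field_simp
    ring
  · ring

theorem SmoothTCM.lpS_two_le (h : SmoothTCM u v pr θ) (hf : HasShellGrowth u v θ f q b K R)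
    (hS : S ⊆ shell R (2 * R)) (hK : 1 ≤ K) (hR : 0 < R) (hq₀ : 0 < q) (hq₂ : q < 2) :
    lpS f 2 S ≤ K * R ^ (2 * q / (6 - q) * b)
      * localEnergy u v θ S ^ (3 * (2 - q) / (2 * (6 - q))) := by
  have hq₆ : 0 < 6 - q := by linarith
  have hq₂' : 0 < 2 - q := by linarith
  have hle := h.lpS_le_rpow_mul_localEnergy_rpow hf hS hK hR hq₀ (s := 2)
    (l := 3 * (2 - q) / (6 - q)) (by positivity) (by rw [div_lt_one hq₆]; linarith)
    (by field_simp; ring)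
  convert hle using 3
  · congr 1
    field_simp
    ring
  · field_simp

end ShellGrowth

/-- The majorant `M ^ ε + M ^ (1 - ε)` of all powers `M ^ m` with `ε ≤ m ≤ 1 - ε`: it vanishes as
`M → 0` and grows sublinearly as `M → ∞`. -/
def sublinearPower (ε M : ℝ) : ℝ := M ^ ε + M ^ (1 - ε)

theorem sublinearPower_nonneg (ε : ℝ) {M : ℝ} (hM : 0 ≤ M) : 0 ≤ sublinearPower ε M := by
  unfold sublinearPower
  positivity

theorem eventually_rpow_le_sublinearPower {m : ℝ} (hm₀ : 0 < m) (hm₁ : m < 1) :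
    ∀ᶠ ε in 𝓝[>] (0 : ℝ), ∀ M : ℝ, 0 ≤ M → M ^ m ≤ sublinearPower ε M := by
  filter_upwards [Ioc_mem_nhdsGT (lt_min hm₀ (sub_pos.2 hm₁))] with ε ⟨hε₀, hε⟩ M hM
  have hεm : ε ≤ m := hε.trans (min_le_left ..)
  have hmε : m ≤ 1 - ε := by linarith [min_le_right m (1 - m)]
  rcases le_total M 1 with hM₁ | hM₁
  · exact (Real.rpow_le_rpow_of_exponent_ge' hM hM₁ hε₀.le hεm).trans
      (le_add_of_nonneg_right (by positivity))
  · exact (Real.rpow_le_rpow_of_exponent_le hM₁ hmε).trans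
      (le_add_of_nonneg_left (by positivity))

section Decay

variable {p q r a b b' K : ℝ}

theorem eventually_setIntegral_sq_le (hK : 1 ≤ K) (hq₀ : 0 < q) (hq₂ : q < 2)
    (hb : b ≤ 3 / q - 1 / 2) : ∀ᶠ ε in 𝓝[>] (0 : ℝ),
    ∀ {u v : R3 → R3} {pr θ f : R3 → ℝ} {R : ℝ} {S : Set R3}, SmoothTCM u v pr θ →
      HasShellGrowth u v θ f q b K R → S ⊆ shell R (2 * R) → 1 ≤ R →
      ∫ x in S, f x ^ 2 ≤ K ^ 2 * R ^ 2 * sublinearPower ε (localEnergy u v θ S) := by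
  have hq₆ : 0 < 6 - q := by linarith
  have hb' : 2 * q / (6 - q) * b ≤ 1 := by
    calc 2 * q / (6 - q) * b ≤ 2 * q / (6 - q) * (3 / q - 1 / 2) := by gcongr
      _ = 1 := by field_simp; ring
  filter_upwards [eventually_rpow_le_sublinearPower (m := 3 * (2 - q) / (2 * (6 - q)) * 2)
    (by positivity) (by rw [div_mul_eq_mul_div, div_lt_one (by positivity)]; linarith)]
    with ε hε u v pr θ f R S h hf hS hR
  have hR₀ : 0 < R := one_pos.trans_le hR
  have hM := localEnergy_nonneg u v θ S
  rw [← lpS_two_sq]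
  calc lpS f 2 S ^ 2 ≤ (K * R * localEnergy u v θ S ^ (3 * (2 - q) / (2 * (6 - q)))) ^ 2 := by
        refine pow_le_pow_left₀ (lpS_nonneg ..) ((h.lpS_two_le hf hS hK hR₀ hq₀ hq₂).trans ?_) 2
        gcongr
        exact Real.rpow_le_self_of_one_le hR hb'
    _ = K ^ 2 * R ^ 2 * localEnergy u v θ S ^ (3 * (2 - q) / (2 * (6 - q)) * 2) := by
        rw [mul_pow, mul_pow, Real.rpow_mul hM, Real.rpow_two]
    _ ≤ _ := by
        gcongr
        exact hε _ hM

theorem eventually_setIntegral_mul_le (hK : 1 ≤ K) (hq₀ : 0 < q) (hq₂ : q < 2) (hr₀ : 0 < r)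
    (hr₂ : r < 2) (hb : 2 * q / (6 - q) * b + 2 * r / (6 - r) * b' ≤ 1) : ∀ᶠ ε in 𝓝[>] (0 : ℝ),
    ∀ {u v : R3 → R3} {pr θ f g : R3 → ℝ} {R : ℝ} {S : Set R3}, SmoothTCM u v pr θ →
      HasShellGrowth u v θ f q b K R → HasShellGrowth u v θ g r b' K R →
      S ⊆ shell R (2 * R) → 1 ≤ R →
      ∫ x in S, |f x| * |g x| ≤ K ^ 2 * R * sublinearPower ε (localEnergy u v θ S) := by
  have hhalf : ∀ {s : ℝ}, 0 < s → s < 2 →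
      0 < 3 * (2 - s) / (2 * (6 - s)) ∧ 3 * (2 - s) / (2 * (6 - s)) < 1 / 2 := fun {s} hs₀ hs₂ => by
    have : 0 < 6 - s := by linarith
    exact ⟨by positivity, by rw [div_lt_iff₀ (by positivity)]; linarith⟩
  have hq := hhalf hq₀ hq₂
  have hr := hhalf hr₀ hr₂
  filter_upwards [eventually_rpow_le_sublinearPower
    (m := 3 * (2 - q) / (2 * (6 - q)) + 3 * (2 - r) / (2 * (6 - r)))
    (by linarith) (by linarith)] with ε hε u v pr θ f g R S h hf hg hS hR
  have hR₀ : 0 < R := one_pos.trans_le hR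
  have hM := localEnergy_nonneg u v θ S
  refine (setIntegral_mul_le_lpS_mul_lpS hf.continuous hg.continuous
    (isBounded_shell.subset hS) Real.HolderConjugate.two_two).trans ?_
  refine (mul_le_mul (h.lpS_two_le hf hS hK hR₀ hq₀ hq₂) (h.lpS_two_le hg hS hK hR₀ hr₀ hr₂)
    (lpS_nonneg ..) (by positivity)).trans ?_
  calc _ = K ^ 2 * R ^ (2 * q / (6 - q) * b + 2 * r / (6 - r) * b') * localEnergy u v θ S ^
        (3 * (2 - q) / (2 * (6 - q)) + 3 * (2 - r) / (2 * (6 - r))) := by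
        rw [Real.rpow_add hR₀, Real.rpow_add_of_nonneg hM hq.1.le hr.1.le]
        ring
    _ ≤ _ := by
        gcongr
        · exact Real.rpow_le_self_of_one_le hR hb
        · exact hε _ hM

theorem setIntegral_sq_le_rpow_mul_lpS_three_sq {f : R3 → ℝ} {R : ℝ} {S : Set R3}
    (hf : Continuous f) (hS : S ⊆ shell R (2 * R)) (hR : 0 < R) :
    ∫ x in S, f x ^ 2
      ≤ (8 * volume.real (ball (0 : R3) 1)) ^ (1 / 3 : ℝ) * R * lpS f 3 S ^ 2 := by
  have hhold := setIntegral_mul_le_lpS_mul_lpS (g := fun _ => 1) (hf.pow 2) continuous_const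
    (isBounded_shell.subset hS)
    (Real.holderConjugate_iff.2 ⟨by norm_num, by norm_num⟩ : (3 / 2 : ℝ).HolderConjugate 3)
  have hsq := lpS_sq f (3 / 2) S
  rw [mul_div_cancel₀ _ two_ne_zero] at hsq
  have hone : lpS (fun _ => 1) 3 S = volume.real S ^ (1 / 3 : ℝ) := by simp [lpS]
  change ∫ x in S, |f x ^ 2| * |1| ≤ lpS (fun x => f x ^ 2) _ S * _ at hhold
  simp only [abs_one, mul_one, abs_of_nonneg (sq_nonneg (f _)), hsq, hone] at hhold
  refine hhold.trans ?_
  rw [mul_comm]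
  gcongr
  calc volume.real S ^ (1 / 3 : ℝ)
      ≤ (8 * volume.real (ball (0 : R3) 1) * R ^ 3) ^ (1 / 3 : ℝ) := by
        gcongr
        exact (measureReal_mono hS isBounded_shell.measure_lt_top.ne).trans
          (volume_real_shell_le hR le_rfl)
    _ = _ := by
        rw [Real.mul_rpow (by positivity) (by positivity), ← Real.rpow_natCast,
          ← Real.rpow_mul hR.le]
        norm_num

theorem eventually_setIntegral_sq_le_of_lt_three (hK : 1 ≤ K) (hp₀ : 0 < p) (hp₃ : p < 3)
    (ha : a ≤ 2 / p - 1 / 3) : ∀ᶠ ε in 𝓝[>] (0 : ℝ),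
    ∀ {u v : R3 → R3} {pr θ f : R3 → ℝ} {R : ℝ} {S : Set R3}, SmoothTCM u v pr θ →
      HasShellGrowth u v θ f p a K R → S ⊆ shell R (2 * R) → 1 ≤ R →
      ∫ x in S, f x ^ 2 ≤ (8 * volume.real (ball (0 : R3) 1)) ^ (1 / 3 : ℝ) * K ^ 2 * R ^ 2
        * sublinearPower ε (localEnergy u v θ S) := by
  have hp₆ : 0 < 6 - p := by linarith
  have ha' : p / (6 - p) * a * 2 ≤ 1 := by
    calc p / (6 - p) * a * 2 ≤ p / (6 - p) * (2 / p - 1 / 3) * 2 := by gcongr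
      _ = 2 / 3 := by field_simp; ring
      _ ≤ 1 := by norm_num
  filter_upwards [eventually_rpow_le_sublinearPower (m := (3 - p) / (6 - p) * 2)
    (by positivity) (by rw [div_mul_eq_mul_div, div_lt_one (by positivity)]; linarith)]
    with ε hε u v pr θ f R S h hf hS hR
  have hR₀ : 0 < R := one_pos.trans_le hR
  have hM := localEnergy_nonneg u v θ S
  calc ∫ x in S, f x ^ 2
      ≤ (8 * volume.real (ball (0 : R3) 1)) ^ (1 / 3 : ℝ) * R * (K * R ^ (p / (6 - p) * a)
          * localEnergy u v θ S ^ ((3 - p) / (6 - p))) ^ 2 := by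
        refine (setIntegral_sq_le_rpow_mul_lpS_three_sq hf.continuous hS hR₀).trans ?_
        gcongr
        · exact lpS_nonneg ..
        · exact h.lpS_three_le hf hS hK hR₀ hp₀ hp₃
    _ = (8 * volume.real (ball (0 : R3) 1)) ^ (1 / 3 : ℝ) * K ^ 2
        * (R * R ^ (p / (6 - p) * a * 2)) * localEnergy u v θ S ^ ((3 - p) / (6 - p) * 2) := by
        rw [mul_pow, mul_pow, Real.rpow_mul hM, Real.rpow_mul hR₀.le _ 2, Real.rpow_two,
          Real.rpow_two]
        ring
    _ ≤ _ := by
        rw [sq R]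
        gcongr
        · exact Real.rpow_le_self_of_one_le hR ha'
        · exact hε _ hM

theorem SmoothTCM.lpS_three_sq_rpow_mul_le {u v : R3 → R3} {pr θ f : R3 → ℝ} {R κ : ℝ} {S : Set R3}
    (h : SmoothTCM u v pr θ) (hf : HasShellGrowth u v θ f q b K R) (hS : S ⊆ shell R (2 * R))
    (hK : 1 ≤ K) (hR : 0 < R) (hq₀ : 0 < q) (hq₃ : q < 3) (hκ₀ : 0 < κ) (hκ₁ : κ < 1) :
    (lpS f 3 S ^ 2) ^ κ * localEnergy u v θ S ^ (1 - κ)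
      ≤ K ^ 2 * R ^ (q / (6 - q) * b * (2 * κ))
        * localEnergy u v θ S ^ ((3 - q) / (6 - q) * (2 * κ) + (1 - κ)) := by
  have hq₆ : 0 < 6 - q := by linarith
  have hM := localEnergy_nonneg u v θ S
  have hf₃ := lpS_nonneg f 3 S
  rw [← Real.rpow_two, ← Real.rpow_mul hf₃]
  calc lpS f 3 S ^ (2 * κ) * localEnergy u v θ S ^ (1 - κ)
      ≤ (K * R ^ (q / (6 - q) * b) * localEnergy u v θ S ^ ((3 - q) / (6 - q))) ^ (2 * κ)
        * localEnergy u v θ S ^ (1 - κ) := by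
        gcongr
        exact h.lpS_three_le hf hS hK hR hq₀ hq₃
    _ = K ^ (2 * κ) * R ^ (q / (6 - q) * b * (2 * κ))
        * localEnergy u v θ S ^ ((3 - q) / (6 - q) * (2 * κ) + (1 - κ)) := by
        rw [Real.mul_rpow (by positivity) (by positivity), Real.mul_rpow (by positivity)
          (by positivity), ← Real.rpow_mul hM, ← Real.rpow_mul hR.le,
          Real.rpow_add_of_nonneg hM (by positivity) (by linarith)]
        ring
    _ ≤ _ := by
        gcongr
        rw [← Real.rpow_two]
        exact Real.rpow_le_rpow_of_exponent_le hK (by linarith)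

theorem eventually_rpow_mul_lpS_three_le (hK : 1 ≤ K) (hp₁ : 3 / 2 < p) (hp₂ : p < 3)
    (hq₀ : 0 < q) (hq₃ : q < 3) (hab : a + (4 * p - 6) * q / ((6 - q) * p) * b ≤ 1) :
    ∀ᶠ ε in 𝓝[>] (0 : ℝ),
    ∀ {u v : R3 → R3} {pr θ f : R3 → ℝ} {R : ℝ} {S : Set R3}, SmoothTCM u v pr θ →
      HasShellGrowth u v θ f q b K R → S ⊆ shell R (2 * R) → 1 ≤ R →
      R ^ a * ((lpS f 3 S ^ 2) ^ (2 - 3 / p) * localEnergy u v θ S ^ (3 / p - 1))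
        ≤ K ^ 2 * R * sublinearPower ε (localEnergy u v θ S) := by
  have hp : 0 < p := by linarith
  have hq₆ : 0 < 6 - q := by linarith
  obtain ⟨κ, hκ⟩ : ∃ κ, κ = 2 - 3 / p := ⟨_, rfl⟩
  have hκ₀ : 0 < κ := by rw [hκ, sub_pos, div_lt_iff₀ hp]; linarith
  have hκ₁ : κ < 1 := by rw [hκ]; linarith [(one_lt_div hp).2 hp₂]
  have hm : (3 - q) / (6 - q) * (2 * κ) < κ := by
    rw [div_mul_eq_mul_div, div_lt_iff₀ hq₆]
    nlinarith
  have hab' : a + q / (6 - q) * b * (2 * κ) ≤ 1 := by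
    refine hab.trans_eq' ?_
    rw [hκ]
    field_simp
    ring
  filter_upwards [eventually_rpow_le_sublinearPower (m := (3 - q) / (6 - q) * (2 * κ) + (1 - κ))
    (add_pos (by positivity) (by linarith)) (by linarith)] with ε hε u v pr θ f R S h hf hS hR
  have hR₀ : 0 < R := one_pos.trans_le hR
  have hM := localEnergy_nonneg u v θ S
  rw [← hκ, show 3 / p - 1 = 1 - κ by rw [hκ]; ring]
  calc R ^ a * ((lpS f 3 S ^ 2) ^ κ * localEnergy u v θ S ^ (1 - κ))
      ≤ R ^ a * (K ^ 2 * R ^ (q / (6 - q) * b * (2 * κ))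
        * localEnergy u v θ S ^ ((3 - q) / (6 - q) * (2 * κ) + (1 - κ))) := by
        gcongr ?_ * ?_
        exact h.lpS_three_sq_rpow_mul_le hf hS hK hR₀ hq₀ hq₃ hκ₀ hκ₁
    _ = K ^ 2 * R ^ (a + q / (6 - q) * b * (2 * κ))
        * localEnergy u v θ S ^ ((3 - q) / (6 - q) * (2 * κ) + (1 - κ)) := by
        rw [Real.rpow_add hR₀]
        ring
    _ ≤ _ := by
        gcongr
        · exact Real.rpow_le_self_of_one_le hR hab'
        · exact hε _ hM

end Decay

section CaccioppoliDecay

variable {p q r α β γ K : ℝ}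

theorem SmoothTCM.lpS_energyDensity_three_halves_le {u v : R3 → R3} {pr θ : R3 → ℝ} {S : Set R3}
    (h : SmoothTCM u v pr θ) (hS : Bornology.IsBounded S) : lpS (energyDensity u v θ) (3 / 2) S
      ≤ lpS (fun x => ‖u x‖) 3 S ^ 2 + lpS (fun x => ‖v x‖) 3 S ^ 2 + lpS θ 3 S ^ 2 := by
  have hu := h.contDiff_u.continuous.norm.pow 2
  have hv := h.contDiff_v.continuous.norm.pow 2
  have hsq := fun f : R3 → ℝ => lpS_sq f (3 / 2) S
  simp only [mul_div_cancel₀ (3 : ℝ) two_ne_zero] at hsq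
  rw [← hsq, ← hsq, ← hsq]
  exact (lpS_add_le (hu.add hv) (h.contDiff_θ.continuous.pow 2) hS (by norm_num)).trans
    (add_le_add_left (lpS_add_le hu hv hS (by norm_num)) _)

theorem eventually_transportBound_le (hK : 1 ≤ K) (hp₁ : 3 / 2 < p) (hp₂ : p < 3) (hq₀ : 0 < q)
    (hq₃ : q < 3) (hr₀ : 0 < r) (hr₃ : r < 3) (hα : α ≤ 2 / p - 1 / 3)
    (hαβ : α + (4 * p - 6) * q / ((6 - q) * p) * β ≤ 1)
    (hαγ : α + (4 * p - 6) * r / ((6 - r) * p) * γ ≤ 1) : ∀ᶠ ε in 𝓝[>] (0 : ℝ),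
    ∀ {u v : R3 → R3} {pr θ : R3 → ℝ} {R : ℝ} {S : Set R3}, SmoothTCM u v pr θ →
      HasShellGrowth u v θ (fun x => ‖u x‖) p α K R →
      HasShellGrowth u v θ (fun x => ‖v x‖) q β K R → HasShellGrowth u v θ θ r γ K R →
      S ⊆ shell R (2 * R) → 1 ≤ R →
      transportBound u v θ p S ≤ 3 * K ^ 3 * R * sublinearPower ε (localEnergy u v θ S) := by
  have hp : 0 < p := by linarith
  have hp₆ : 0 < 6 - p := by linarith
  have hκ₀ : 0 < 2 - 3 / p := by rw [sub_pos, div_lt_iff₀ hp]; linarith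
  have hκ₁ : 2 - 3 / p ≤ 1 := by linarith [(one_lt_div hp).2 hp₂]
  have hαα : α + (4 * p - 6) * p / ((6 - p) * p) * α ≤ 1 := by
    calc _ = 3 * p / (6 - p) * α := by field_simp; ring
      _ ≤ 3 * p / (6 - p) * (2 / p - 1 / 3) := by gcongr
      _ = 1 := by field_simp; ring
  filter_upwards [eventually_rpow_mul_lpS_three_le hK hp₁ hp₂ hp hp₂ hαα,
    eventually_rpow_mul_lpS_three_le hK hp₁ hp₂ hq₀ hq₃ hαβ,
    eventually_rpow_mul_lpS_three_le hK hp₁ hp₂ hr₀ hr₃ hαγ]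
    with ε hεu hεv hεθ u v pr θ R S h hu hv hθ hS hR
  have hM := localEnergy_nonneg u v θ S
  have hadd : ∀ {x y : ℝ}, 0 ≤ x → 0 ≤ y →
      (x + y) ^ (2 - 3 / p) ≤ x ^ (2 - 3 / p) + y ^ (2 - 3 / p) := fun hx hy =>
    Real.rpow_add_le_add_rpow hx hy hκ₀.le hκ₁
  have hinterp := (Real.rpow_le_rpow (lpS_nonneg ..)
    (h.lpS_energyDensity_three_halves_le (isBounded_shell.subset hS)) hκ₀.le).trans
    ((hadd (by positivity) (by positivity)).trans
      (add_le_add_left (hadd (by positivity) (by positivity)) _))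
  have hnorm : lpS (fun x => ‖u x‖) p S ≤ K * R ^ α :=
    (lpS_mono_set hu.continuous isBounded_shell hp.le hS).trans hu.lpS_le
  calc transportBound u v θ p S
      ≤ K * R ^ α * (((lpS (fun x => ‖u x‖) 3 S ^ 2) ^ (2 - 3 / p)
        + (lpS (fun x => ‖v x‖) 3 S ^ 2) ^ (2 - 3 / p) + (lpS θ 3 S ^ 2) ^ (2 - 3 / p))
        * localEnergy u v θ S ^ (3 / p - 1)) := by
        unfold transportBound
        gcongr
        exact mul_nonneg (Real.rpow_nonneg (lpS_nonneg ..) _) (Real.rpow_nonneg hM _)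
    _ ≤ K * (3 * (K ^ 2 * R * sublinearPower ε (localEnergy u v θ S))) := by
        rw [mul_assoc]
        refine mul_le_mul_of_nonneg_left ?_ (by positivity)
        linarith [hεu h hu hS hR, hεv h hv hS hR, hεθ h hθ hS hR]
    _ = _ := by ring

theorem eventually_setIntegral_energyDensity_le (hK : 1 ≤ K) (hp₀ : 0 < p) (hp₃ : p < 3)
    (hq₀ : 0 < q) (hq₂ : q < 2) (hr₀ : 0 < r) (hr₂ : r < 2) (hα : α ≤ 2 / p - 1 / 3)
    (hβ : β ≤ 3 / q - 1 / 2) (hγ : γ ≤ 3 / r - 1 / 2) : ∀ᶠ ε in 𝓝[>] (0 : ℝ),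
    ∀ {u v : R3 → R3} {pr θ : R3 → ℝ} {R : ℝ} {S : Set R3}, SmoothTCM u v pr θ →
      HasShellGrowth u v θ (fun x => ‖u x‖) p α K R →
      HasShellGrowth u v θ (fun x => ‖v x‖) q β K R → HasShellGrowth u v θ θ r γ K R →
      S ⊆ shell R (2 * R) → 1 ≤ R →
      ∫ x in S, energyDensity u v θ x ≤ ((8 * volume.real (ball (0 : R3) 1)) ^ (1 / 3 : ℝ) + 2)
        * K ^ 2 * R ^ 2 * sublinearPower ε (localEnergy u v θ S) := by
  filter_upwards [eventually_setIntegral_sq_le_of_lt_three hK hp₀ hp₃ hα,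
    eventually_setIntegral_sq_le hK hq₀ hq₂ hβ, eventually_setIntegral_sq_le hK hr₀ hr₂ hγ]
    with ε hεu hεv hεθ u v pr θ R S h hu hv hθ hS hR
  have h_int : ∀ {f : R3 → ℝ}, Continuous f → IntegrableOn (fun x => f x ^ 2) S := fun hf =>
    integrableOn_of_continuous_of_isBounded (hf.pow 2) (isBounded_shell.subset hS)
  have hsplit : ∫ x in S, energyDensity u v θ x
      = (∫ x in S, ‖u x‖ ^ 2) + (∫ x in S, ‖v x‖ ^ 2) + ∫ x in S, θ x ^ 2 := by
    unfold energyDensity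
    rw [← integral_add (h_int hu.continuous) (h_int hv.continuous)]
    exact integral_add ((h_int hu.continuous).add (h_int hv.continuous)) (h_int hθ.continuous)
  linarith [hεu h hu hS hR, hεv h hv hS hR, hεθ h hθ hS hR]

theorem exists_eventually_caccioppoliBound_le (hK : 1 ≤ K) (hp₁ : 3 / 2 < p) (hp₂ : p < 3)
    (hq₀ : 0 < q) (hq₂ : q < 2) (hr₀ : 0 < r) (hr₂ : r < 2) (hα : α ≤ 2 / p - 1 / 3)
    (hβ : β ≤ 3 / q - 1 / 2) (hγ : γ ≤ 3 / r - 1 / 2)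
    (hαβ : α + (4 * p - 6) * q / ((6 - q) * p) * β ≤ 1)
    (hαγ : α + (4 * p - 6) * r / ((6 - r) * p) * γ ≤ 1)
    (hβγ : 2 * q / (6 - q) * β + 2 * r / (6 - r) * γ ≤ 1) :
    ∃ C : ℝ, 0 ≤ C ∧ ∀ᶠ ε in 𝓝[>] (0 : ℝ),
    ∀ {u v : R3 → R3} {pr θ : R3 → ℝ} {R ρ τ : ℝ}, SmoothTCM u v pr θ →
      HasShellGrowth u v θ (fun x => ‖u x‖) p α K R →
      HasShellGrowth u v θ (fun x => ‖v x‖) q β K R → HasShellGrowth u v θ θ r γ K R →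
      1 ≤ R → R ≤ ρ → ρ < τ → τ ≤ 2 * R → caccioppoliBound u v θ p ρ τ
        ≤ C * (R / (τ - ρ)) ^ 2 * sublinearPower ε (localEnergy u v θ (shell ρ τ)) := by
  obtain ⟨A, hA⟩ : ∃ A, A = ((8 * volume.real (ball (0 : R3) 1)) ^ (1 / 3 : ℝ) + 2) * K ^ 2 :=
    ⟨_, rfl⟩
  refine ⟨A + 3 * K ^ 3 + K ^ 2, by rw [hA]; positivity, ?_⟩
  filter_upwards [
    eventually_transportBound_le hK hp₁ hp₂ hq₀ (by linarith) hr₀ (by linarith) hα hαβ hαγ,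
    eventually_setIntegral_mul_le hK hq₀ hq₂ hr₀ hr₂ hβγ,
    eventually_setIntegral_energyDensity_le hK (by linarith) hp₂ hq₀ hq₂ hr₀ hr₂ hα hβ hγ]
    with ε hεN hεV hεE u v pr θ R ρ τ h hu hv hθ hR hRρ hρτ hτ
  have hS := shell_subset_shell hRρ hτ
  have ht : 0 < τ - ρ := sub_pos.2 hρτ
  have hN := hεN h hu hv hθ hS hR
  have hV := hεV h hv hθ hS hR
  have hE := hεE h hu hv hθ hS hR
  simp only [abs_norm, ← hA] at hV hE
  have hs := sublinearPower_nonneg ε (localEnergy_nonneg u v θ (shell ρ τ))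
  have hw : 1 ≤ R / (τ - ρ) := (one_le_div ht).2 (by linarith)
  unfold caccioppoliBound
  generalize sublinearPower ε (localEnergy u v θ (shell ρ τ)) = s at hN hV hE hs ⊢
  calc _ ≤ A * R ^ 2 * s / (τ - ρ) ^ 2 + (3 * K ^ 3 * R * s + K ^ 2 * R * s) / (τ - ρ) := by
        gcongr
    _ = A * (R / (τ - ρ)) ^ 2 * s + (3 * K ^ 3 + K ^ 2) * (R / (τ - ρ)) * s := by
        field_simp
    _ ≤ A * (R / (τ - ρ)) ^ 2 * s + (3 * K ^ 3 + K ^ 2) * (R / (τ - ρ)) ^ 2 * s := by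
        gcongr
        exact le_self_pow₀ hw two_ne_zero
    _ = _ := by ring

theorem exists_localEnergy_ball_le_sublinearPower (hK : 1 ≤ K) (hp₁ : 3 / 2 < p) (hp₂ : p < 3)
    (hq₀ : 0 < q) (hq₂ : q < 2) (hr₀ : 0 < r) (hr₂ : r < 2) (hα : α ≤ 2 / p - 1 / 3)
    (hβ : β ≤ 3 / q - 1 / 2) (hγ : γ ≤ 3 / r - 1 / 2)
    (hαβ : α + (4 * p - 6) * q / ((6 - q) * p) * β ≤ 1)
    (hαγ : α + (4 * p - 6) * r / ((6 - r) * p) * γ ≤ 1)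
    (hβγ : 2 * q / (6 - q) * β + 2 * r / (6 - r) * γ ≤ 1) :
    ∃ C ε : ℝ, 0 ≤ C ∧ 0 < ε ∧ ε ≤ 1 / 2 ∧
    ∀ {u v : R3 → R3} {pr θ : R3 → ℝ} {R ρ τ : ℝ}, SmoothTCM u v pr θ →
      HasShellGrowth u v θ (fun x => ‖u x‖) p α K R →
      HasShellGrowth u v θ (fun x => ‖v x‖) q β K R → HasShellGrowth u v θ θ r γ K R →
      1 ≤ R → R ≤ ρ → ρ < τ → τ ≤ 2 * R → localEnergy u v θ (ball 0 ρ)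
        ≤ C * (R / (τ - ρ)) ^ 6 * sublinearPower ε (localEnergy u v θ (shell ρ τ)) := by
  obtain ⟨A, hA, hball⟩ := exists_forall_localEnergy_ball_le hp₁ hp₂
  obtain ⟨B, hB, hbound⟩ := exists_eventually_caccioppoliBound_le hK hp₁ hp₂ hq₀ hq₂ hr₀ hr₂
    hα hβ hγ hαβ hαγ hβγ
  obtain ⟨ε, hε, hε₀, hε₁⟩ := (hbound.and (Ioc_mem_nhdsGT (one_half_pos (α := ℝ)))).exists
  refine ⟨A * B, ε, by positivity, hε₀, hε₁, ?_⟩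
  intro u v pr θ R ρ τ h hu hv hθ hR hRρ hρτ hτ
  calc localEnergy u v θ (ball 0 ρ)
      ≤ A * (R / (τ - ρ)) ^ 4 * caccioppoliBound u v θ p ρ τ :=
        hball h (by linarith) hRρ hρτ hτ
    _ ≤ A * (R / (τ - ρ)) ^ 4
        * (B * (R / (τ - ρ)) ^ 2 * sublinearPower ε (localEnergy u v θ (shell ρ τ))) := by
        gcongr
        exact hε h hu hv hθ hR hRρ hρτ hτ
    _ = _ := by ring

end CaccioppoliDecay

section Iteration

theorem apply_zero_le_of_forall_le_add_mul_succ {w : ℕ → ℝ} {c l b B : ℝ} (hl : 0 ≤ l)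
    (hb₀ : 0 ≤ b) (hb₁ : b < 1) (hw : ∀ i, w i ≤ c + i * l + b * w (i + 1)) (hB : ∀ i, w i ≤ B) :
    w 0 ≤ (c + b * (l / (1 - b))) / (1 - b) := by
  have hb : 0 < 1 - b := by linarith
  -- `A + S i` is the affine solution of the recursion with equality.
  obtain ⟨S, hS⟩ : ∃ S, S = l / (1 - b) := ⟨_, rfl⟩
  obtain ⟨A, hA⟩ : ∃ A, A = (c + b * S) / (1 - b) := ⟨_, rfl⟩
  rw [← hS, ← hA]
  have hS₀ : 0 ≤ S := by rw [hS]; positivity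
  have hSl : S * (1 - b) = l := by rw [hS, div_mul_cancel₀ _ hb.ne']
  have hAc : A * (1 - b) = c + b * S := by rw [hA, div_mul_cancel₀ _ hb.ne']
  have hiter : ∀ n : ℕ, w 0 - A ≤ b ^ n * (w n - (A + S * n)) := by
    intro n
    induction n with
    | zero => simp
    | succ n ih =>
      rw [pow_succ, mul_assoc]
      refine ih.trans (mul_le_mul_of_nonneg_left ?_ (by positivity))
      push_cast
      linear_combination hw n - hAc - n * hSl
  have hle : ∀ n : ℕ, w 0 - A ≤ b ^ n * |B - A| := by
    intro n
    refine (hiter n).trans (mul_le_mul_of_nonneg_left (le_trans ?_ (le_abs_self _))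
      (by positivity))
    linarith [hB n, show 0 ≤ S * n by positivity]
  have hlim := (tendsto_pow_atTop_nhds_zero_of_lt_one hb₀ hb₁).mul_const |B - A|
  rw [zero_mul] at hlim
  linarith [ge_of_tendsto' hlim hle]

variable {ε : ℝ}

theorem sublinearPower_le_sublinearPower (hε₀ : 0 ≤ ε) (hε₁ : ε ≤ 1) {M N : ℝ} (hM : 0 ≤ M)
    (hMN : M ≤ N) : sublinearPower ε M ≤ sublinearPower ε N := by
  exact add_le_add (Real.rpow_le_rpow hM hMN hε₀) (Real.rpow_le_rpow hM hMN (sub_nonneg.2 hε₁))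

theorem sublinearPower_le (hε₀ : 0 ≤ ε) (hε : ε ≤ 1 / 2) {M : ℝ} (hM : 0 ≤ M) :
    sublinearPower ε M ≤ 2 * (1 + M) ^ (1 - ε) := by
  have hM₁ : M ≤ 1 + M := by linarith
  have hε' : ε ≤ 1 - ε := by linarith
  calc M ^ ε + M ^ (1 - ε) ≤ (1 + M) ^ ε + (1 + M) ^ (1 - ε) := by
        gcongr
        linarith
    _ ≤ (1 + M) ^ (1 - ε) + (1 + M) ^ (1 - ε) := by
        gcongr
        linarith
    _ = _ := by ring

theorem tendsto_sublinearPower_zero {ι : Type*} {a : Filter ι} {M : ι → ℝ} (hε₀ : 0 < ε)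
    (hε₁ : ε < 1) (hM : Tendsto M a (𝓝 0)) :
    Tendsto (fun i => sublinearPower ε (M i)) a (𝓝 0) := by
  have hε : 0 < 1 - ε := by linarith
  have hlim := (hM.rpow_const (p := ε) (.inr hε₀.le)).add
    (hM.rpow_const (p := 1 - ε) (.inr hε.le))
  rwa [Real.zero_rpow hε₀.ne', Real.zero_rpow hε.ne', add_zero] at hlim

variable {W : ℝ → ℝ} {C R : ℝ}

theorem one_add_le_of_le_mul_sublinearPower (hC : 0 ≤ C) (hε₀ : 0 ≤ ε) (hε : ε ≤ 1 / 2)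
    (hR : 0 < R) (hW₀ : ∀ ρ, 0 ≤ W ρ)
    (hW : ∀ ρ τ, R ≤ ρ → ρ < τ → τ ≤ 2 * R →
      W ρ ≤ C * (R / (τ - ρ)) ^ 6 * sublinearPower ε (W τ)) (i : ℕ) :
    1 + W (R * (2 - (1 / 2) ^ i)) ≤
      (1 + 128 * C) * 64 ^ i * (1 + W (R * (2 - (1 / 2) ^ (i + 1)))) ^ (1 - ε) := by
  obtain ⟨d, hd⟩ : ∃ d : ℝ, d = (1 / 2) ^ i := ⟨_, rfl⟩
  have hd₀ : 0 < d := by rw [hd]; positivity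
  have hd₁ : d ≤ 1 := by rw [hd]; exact pow_le_one₀ (by norm_num) (by norm_num)
  have hdi : d⁻¹ ^ 6 = (64 : ℝ) ^ i := by
    rw [hd, ← inv_pow, ← pow_mul, mul_comm, pow_mul]
    norm_num
  rw [pow_succ, ← hd]
  obtain ⟨N, hN⟩ : ∃ N, N = W (R * (2 - d * (1 / 2))) := ⟨_, rfl⟩
  have hN₀ : 0 ≤ N := by rw [hN]; exact hW₀ _
  have hstep := hW (R * (2 - d)) (R * (2 - d * (1 / 2))) (by nlinarith) (by nlinarith)
    (by nlinarith)
  rw [← hN] at hstep ⊢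
  have hgap : (R / (R * (2 - d * (1 / 2)) - R * (2 - d))) ^ 6 = 64 * 64 ^ i := by
    rw [← hdi, show R * (2 - d * (1 / 2)) - R * (2 - d) = R * (d / 2) by ring]
    field_simp
    norm_num
  have h64 : (1 : ℝ) ≤ 64 ^ i := one_le_pow₀ (by norm_num)
  have hNε : 1 ≤ (1 + N) ^ (1 - ε) := Real.one_le_rpow (by linarith) (by linarith)
  calc 1 + W (R * (2 - d)) ≤ 1 * 1 + C * (64 * 64 ^ i) * (2 * (1 + N) ^ (1 - ε)) := by
        rw [hgap] at hstep
        rw [one_mul]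
        gcongr
        exact hstep.trans (by gcongr; exact sublinearPower_le hε₀ hε hN₀)
    _ ≤ 64 ^ i * (1 + N) ^ (1 - ε) + C * (64 * 64 ^ i) * (2 * (1 + N) ^ (1 - ε)) := by gcongr
    _ = _ := by ring

theorem exists_forall_le_of_le_mul_sublinearPower (hC : 0 ≤ C) (hε₀ : 0 < ε) (hε : ε ≤ 1 / 2) :
    ∃ A : ℝ, ∀ {W : ℝ → ℝ} {R : ℝ}, Monotone W → (∀ ρ, 0 ≤ W ρ) → 0 < R →
      (∀ ρ τ, R ≤ ρ → ρ < τ → τ ≤ 2 * R →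
        W ρ ≤ C * (R / (τ - ρ)) ^ 6 * sublinearPower ε (W τ)) → W R ≤ A := by
  refine ⟨Real.exp ((Real.log (1 + 128 * C) + (1 - ε) * (Real.log 64 / (1 - (1 - ε))))
    / (1 - (1 - ε))), fun {W R} hWm hW₀ hR hW => ?_⟩
  have hpos : ∀ ρ, 0 < 1 + W ρ := fun ρ => by linarith [hW₀ ρ]
  have hlog : ∀ i : ℕ, Real.log (1 + W (R * (2 - (1 / 2) ^ i))) ≤ Real.log (1 + 128 * C)
      + i * Real.log 64 + (1 - ε) * Real.log (1 + W (R * (2 - (1 / 2) ^ (i + 1)))) := by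
    intro i
    have hN := Real.rpow_pos_of_pos (hpos (R * (2 - (1 / 2) ^ (i + 1)))) (1 - ε)
    refine (Real.log_le_log (hpos _)
      (one_add_le_of_le_mul_sublinearPower hC hε₀.le hε hR hW₀ hW i)).trans_eq ?_
    rw [Real.log_mul (by positivity) hN.ne', Real.log_mul (by positivity) (by positivity),
      Real.log_pow, Real.log_rpow (hpos _)]
  have hle := apply_zero_le_of_forall_le_add_mul_succ (B := Real.log (1 + W (2 * R)))
    (w := fun i => Real.log (1 + W (R * (2 - (1 / 2) ^ i)))) (Real.log_nonneg (by norm_num))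
    (by linarith) (by linarith) hlog fun i => Real.log_le_log (hpos _) (by
      gcongr
      refine hWm ?_
      nlinarith [show (0 : ℝ) < (1 / 2) ^ i by positivity])
  rw [pow_zero, Real.log_le_iff_le_exp (hpos _), show R * (2 - 1) = R by ring] at hle
  exact (le_add_of_nonneg_left zero_le_one).trans hle

end Iteration

theorem tendsto_setIntegral_shell_zero {g : R3 → ℝ} {A : ℝ} (hg : Continuous g)
    (hg₀ : ∀ x, 0 ≤ g x) (hA : ∀ ρ, ∫ x in ball (0 : R3) ρ, g x ≤ A) :
    Tendsto (fun R : ℝ => ∫ x in shell R (2 * R), g x) atTop (𝓝 0) := by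
  have h_int : ∀ ρ, IntegrableOn g (ball 0 ρ) := fun ρ =>
    integrableOn_of_continuous_of_isBounded hg isBounded_ball
  have hmono : Monotone fun ρ : ℝ => ∫ x in ball (0 : R3) ρ, g x := fun ρ τ hρ =>
    setIntegral_mono_set (h_int τ) (.of_forall hg₀) (ball_subset_ball hρ).eventuallyLE
  have hlim := tendsto_atTop_ciSup hmono ⟨A, by rintro _ ⟨ρ, rfl⟩; exact hA ρ⟩
  have hdiff := (hlim.comp ((tendsto_const_mul_atTop_of_pos two_pos).2 tendsto_id)).sub hlim
  rw [sub_self] at hdiff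
  refine hdiff.congr' ?_
  filter_upwards [eventually_ge_atTop (0 : ℝ)] with R hR
  exact (setIntegral_sdiff measurableSet_ball (h_int _)
    (ball_subset_ball (le_mul_of_one_le_left hR one_le_two))).symm

theorem eq_zero_of_setIntegral_ball_eq_zero {g : R3 → ℝ} (hg : Continuous g) (hg₀ : ∀ x, 0 ≤ g x)
    (h_int : ∀ ρ, ∫ x in ball (0 : R3) ρ, g x = 0) (x : R3) : g x = 0 := by
  have hae := (setIntegral_eq_zero_iff_of_nonneg_ae (.of_forall hg₀)
    (integrableOn_of_continuous_of_isBounded hg isBounded_ball)).1 (h_int (‖x‖ + 1))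
  exact Measure.eqOn_open_of_ae_eq hae isOpen_ball hg.continuousOn continuousOn_const (by simp)

theorem setIntegral_energyDensity_pow_three_le_localEnergy (u v : R3 → R3) (θ : R3 → ℝ)
    (S : Set R3) : ∫ x in S, energyDensity u v θ x ^ 3 ≤ localEnergy u v θ S ^ 3 := by
  have h_int : 0 ≤ ∫ x in S, energyDensity u v θ x ^ 3 :=
    integral_nonneg fun x => pow_nonneg (energyDensity_nonneg u v θ x) 3
  have hle := pow_le_pow_left₀ (lpS_nonneg ..) (lpS_energyDensity_le_localEnergy u v θ S) 3
  rwa [lpS_three_energyDensity, ← Real.rpow_mul_natCast h_int, Nat.cast_ofNat,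
    one_div_mul_cancel three_ne_zero, Real.rpow_one] at hle

theorem lpS_le_of_rpow_neg_mul_lpS_le {f : R3 → ℝ} {S : Set R3} {b q C R : ℝ} (hR : 0 < R)
    (hf : R ^ (-b) * lpS f q S ≤ C) : lpS f q S ≤ max 1 C * R ^ b := by
  rw [Real.rpow_neg hR.le, inv_mul_le_iff₀ (by positivity), mul_comm] at hf
  exact hf.trans (by gcongr; exact le_max_right ..)

namespace SmoothTCM

variable {u v : R3 → R3} {pr θ : R3 → ℝ}
variable (h : SmoothTCM u v pr θ)
include h

theorem tendsto_localEnergy_shell_zero {A : ℝ} (hA : ∀ ρ, localEnergy u v θ (ball 0 ρ) ≤ A) :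
    Tendsto (fun R : ℝ => localEnergy u v θ (shell R (2 * R))) atTop (𝓝 0) := by
  have hD := tendsto_setIntegral_shell_zero
    (continuous_dissipation h.contDiff_u h.contDiff_v h.contDiff_θ) (dissipation_nonneg u v θ)
    fun ρ => (setIntegral_dissipation_le_localEnergy ..).trans (hA ρ)
  have hE := tendsto_setIntegral_shell_zero (h.continuous_energyDensity.pow 3)
    (fun x => pow_nonneg (energyDensity_nonneg u v θ x) 3) fun ρ =>
    (setIntegral_energyDensity_pow_three_le_localEnergy ..).trans
      (pow_le_pow_left₀ (localEnergy_nonneg ..) (hA ρ) 3)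
  have hsum := hD.add (hE.rpow_const (p := 1 / 3) (.inr (by norm_num)))
  rw [Real.zero_rpow (by norm_num), add_zero] at hsum
  simpa only [localEnergy, lpS_three_energyDensity, Pi.pow_apply] using hsum

theorem energyDensity_eq_zero_of_localEnergy_le_zero
    (hE : ∀ ρ, localEnergy u v θ (ball 0 ρ) ≤ 0) (x : R3) : energyDensity u v θ x = 0 := by
  have he := fun x => pow_nonneg (energyDensity_nonneg u v θ x) 3
  refine eq_zero_of_pow_eq_zero (n := 3) (eq_zero_of_setIntegral_ball_eq_zero
    (h.continuous_energyDensity.pow 3) he (fun ρ => ?_) x)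
  have hle := setIntegral_energyDensity_pow_three_le_localEnergy u v θ (ball 0 ρ)
  rw [le_antisymm (hE ρ) (localEnergy_nonneg ..), zero_pow three_ne_zero] at hle
  exact le_antisymm hle (integral_nonneg he)

theorem energyDensity_eq_zero_of_frequently_le {C ε : ℝ} (hC : 0 ≤ C) (hε₀ : 0 < ε)
    (hε : ε ≤ 1 / 2)
    (hle : ∃ᶠ R in atTop, ∀ ρ τ, R ≤ ρ → ρ < τ → τ ≤ 2 * R → localEnergy u v θ (ball 0 ρ)
      ≤ C * (R / (τ - ρ)) ^ 6 * sublinearPower ε (localEnergy u v θ (shell ρ τ))) (x : R3) :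
    energyDensity u v θ x = 0 := by
  have hmono : Monotone fun ρ => localEnergy u v θ (ball 0 ρ) := fun ρ τ hρ =>
    h.localEnergy_mono isBounded_ball (ball_subset_ball hρ)
  obtain ⟨A, hA⟩ := exists_forall_le_of_le_mul_sublinearPower hC hε₀ hε
  have hbdd : ∀ ρ, localEnergy u v θ (ball 0 ρ) ≤ A := by
    intro ρ
    obtain ⟨R, ⟨hR, hρR⟩, hR₀⟩ :=
      ((hle.and_eventually (eventually_ge_atTop ρ)).and_eventually (eventually_gt_atTop 0)).exists
    refine (hmono hρR).trans (hA (W := fun ρ => localEnergy u v θ (ball 0 ρ)) hmono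
      (fun _ => localEnergy_nonneg ..) hR₀
      fun ρ τ hRρ hρτ hτ => (hR ρ τ hRρ hρτ hτ).trans ?_)
    gcongr
    exact sublinearPower_le_sublinearPower hε₀.le (by linarith) (localEnergy_nonneg ..)
      (h.localEnergy_mono isBounded_ball Set.sdiff_subset)
  have hlim := (tendsto_sublinearPower_zero hε₀ (by linarith)
    (h.tendsto_localEnergy_shell_zero hbdd)).const_mul C
  rw [mul_zero] at hlim
  refine h.energyDensity_eq_zero_of_localEnergy_le_zero (fun ρ => ?_) x
  refine le_of_forall_pos_le_add fun κ hκ => ?_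
  obtain ⟨R, ⟨⟨hR, hρR⟩, hR₀⟩, hRκ⟩ := (((hle.and_eventually (eventually_ge_atTop ρ)).and_eventually
    (eventually_gt_atTop 0)).and_eventually (hlim.eventually_lt_const hκ)).exists
  have hRR := hR R (2 * R) le_rfl (by linarith) le_rfl
  rw [show 2 * R - R = R by ring, div_self hR₀.ne', one_pow, mul_one] at hRR
  linarith [hmono hρR]

theorem hasShellGrowth_of_add_le {p q r α β γ C R : ℝ} (hR : 0 < R)
    (hC : XnV u α p R + XnV v β q R + XnS θ γ r R ≤ C) :
    HasShellGrowth u v θ (fun x => ‖u x‖) p α (max 1 C) R ∧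
    HasShellGrowth u v θ (fun x => ‖v x‖) q β (max 1 C) R ∧
    HasShellGrowth u v θ θ r γ (max 1 C) R := by
  have hu := mul_nonneg (Real.rpow_nonneg hR.le (-α)) (lpS_nonneg (fun x => ‖u x‖) p (annulus R))
  have hv := mul_nonneg (Real.rpow_nonneg hR.le (-β)) (lpS_nonneg (fun x => ‖v x‖) q (annulus R))
  have hθ := mul_nonneg (Real.rpow_nonneg hR.le (-γ)) (lpS_nonneg θ r (annulus R))
  unfold XnV XnS at hC
  exact ⟨⟨h.contDiff_u.continuous.norm, fun x => by unfold energyDensity; nlinarith,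
      lpS_le_of_rpow_neg_mul_lpS_le (S := annulus R) hR (by linarith)⟩,
    ⟨h.contDiff_v.continuous.norm, fun x => by unfold energyDensity; nlinarith,
      lpS_le_of_rpow_neg_mul_lpS_le (S := annulus R) hR (by linarith)⟩,
    ⟨h.contDiff_θ.continuous, fun x => by unfold energyDensity; nlinarith,
      lpS_le_of_rpow_neg_mul_lpS_le (S := annulus R) hR (by linarith)⟩⟩

end SmoothTCM

theorem liouville_tcm_A10_general {u v : R3 → R3} {pr θ : R3 → ℝ} {p q r α β γ C : ℝ}
    (h : SmoothTCM u v pr θ) (hp₁ : 3 / 2 < p) (hp₂ : p < 3) (hq₀ : 0 < q) (hq₂ : q < 2)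
    (hr₀ : 0 < r) (hr₂ : r < 2) (hα : α ≤ 2 / p - 1 / 3) (hβ : β ≤ 3 / q - 1 / 2)
    (hγ : γ ≤ 3 / r - 1 / 2) (hαβ : α + (4 * p - 6) * q / ((6 - q) * p) * β ≤ 1)
    (hαγ : α + (4 * p - 6) * r / ((6 - r) * p) * γ ≤ 1)
    (hβγ : 2 * q / (6 - q) * β + 2 * r / (6 - r) * γ ≤ 1)
    (hC : ∃ᶠ R in atTop, XnV u α p R + XnV v β q R + XnS θ γ r R ≤ C) :
    (∀ x, u x = 0) ∧ (∀ x, v x = 0) ∧ (∀ x, θ x = 0) := by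
  obtain ⟨A, ε, hA, hε₀, hε, hdecay⟩ := exists_localEnergy_ball_le_sublinearPower
    (le_max_left 1 C) hp₁ hp₂ hq₀ hq₂ hr₀ hr₂ hα hβ hγ hαβ hαγ hβγ
  have he := h.energyDensity_eq_zero_of_frequently_le hA hε₀ hε <|
    (hC.and_eventually (eventually_ge_atTop 1)).mono fun R ⟨hR, hR₁⟩ ρ τ hRρ hρτ hτ =>
      have ⟨hu, hv, hθ⟩ := h.hasShellGrowth_of_add_le (zero_lt_one.trans_le hR₁) hR
      hdecay h hu hv hθ hR₁ hRρ hρτ hτ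
  unfold energyDensity at he
  refine ⟨fun x => norm_eq_zero.1 ?_, fun x => norm_eq_zero.1 ?_, fun x => ?_⟩ <;>
    nlinarith [he x, sq_nonneg ‖u x‖, sq_nonneg ‖v x‖, sq_nonneg (θ x)]

theorem liouville_tcm_A10 (u v : R3 → R3) (pr θ : R3 → ℝ)
    (hu : ContDiff ℝ (⊤ : ℕ∞) u) (hv : ContDiff ℝ (⊤ : ℕ∞) v)
    (hpr : ContDiff ℝ (⊤ : ℕ∞) pr) (hθ : ContDiff ℝ (⊤ : ℕ∞) θ)
    (hsol : TCM u v pr θ)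
    (p q r α β γ : ℝ)
    (hp1 : 3 / 2 < p) (hp2 : p < 3)
    (hq1 : 1 ≤ q) (hq2 : q < 2)
    (hr1 : 1 ≤ r) (hr2 : r < 2)
    (hα1 : 0 ≤ α) (hα2 : α ≤ 2 / p - 1 / 3)
    (hβ1 : 0 ≤ β) (hβ2 : β ≤ 3 / q - 1 / 2)
    (hγ1 : 0 ≤ γ) (hγ2 : γ ≤ 3 / r - 1 / 2)
    (hc1 : α + ((4 * p - 6) * q / ((6 - q) * p)) * β ≤ 1)
    (hc2 : α + ((4 * p - 6) * r / ((6 - r) * p)) * γ ≤ 1)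
    (hc3 : (2 * q / (6 - q)) * β + (2 * r / (6 - r)) * γ ≤ 1)
    (hliminf : ∃ C : ℝ, ∃ᶠ R in (atTop : Filter ℝ),
      XnV u α p R + XnV v β q R + XnS θ γ r R ≤ C) :
    (∀ x, u x = 0) ∧ (∀ x, v x = 0) ∧ (∀ x, θ x = 0) := by
  obtain ⟨C, hC⟩ := hliminf
  exact liouville_tcm_A10_general ⟨hu, hv, hpr, hθ, hsol⟩ hp1 hp2 (by linarith) hq2 (by linarith)
    hr2 hα2 hβ2 hγ2 hc1 hc2 hc3 hC
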